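/- arXiv:1506.07741 — 8 statements merged into one kernel-verified Lean document; each statement's English description precedes it below -/
import Mathlib

section
/- Let n and r be positive integers with n ≥ r. The claw K_{1,n} (the star graph with one centre vertex joined to n leaves) is r-EKR if n ≥ 2r, and strictly r-EKR if n > 2r. -/
open Finset SimpleGraph
open scoped Classical

variable {V : Type*}

/-- The finset of independent sets of a finite graph `G`. -/
noncomputable def indepSets [Fintype V] (G : SimpleGraph V) : Finset (Finset V) :=
  univ.filter fun A => ∀ x ∈ A, ∀ y ∈ A, ¬ G.Adj x y

/-- The finset of independent sets of size `r` of `G`, i.e. `I^(r)(G)`. -/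
noncomputable def indepSetsSize [Fintype V] (G : SimpleGraph V) (r : ℕ) : Finset (Finset V) :=
  (indepSets G).filter fun A => A.card = r

/-- The `r`-star centred at `v`: independent sets of size `r` containing `v`. -/
noncomputable def ekrStar [Fintype V] (G : SimpleGraph V) (r : ℕ) (v : V) : Finset (Finset V) :=
  (indepSetsSize G r).filter fun A => v ∈ A

/-- A family of sets is pairwise intersecting. -/
def PairwiseIntersecting (𝒜 : Finset (Finset V)) : Prop :=
  ∀ A ∈ 𝒜, ∀ B ∈ 𝒜, (A ∩ B).Nonempty

/-- `G` is `r`-EKR: no pairwise intersecting subfamily of `I^(r)(G)` is larger than the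
largest `r`-star. -/
def IsEKR [Fintype V] (G : SimpleGraph V) (r : ℕ) : Prop :=
  ∀ 𝒜 ⊆ indepSetsSize G r, PairwiseIntersecting 𝒜 → ∃ v, 𝒜.card ≤ (ekrStar G r v).card

/-- `G` is strictly `r`-EKR: `r`-EKR, and every maximum-size pairwise intersecting
subfamily of `I^(r)(G)` is an `r`-star. -/
def IsStrictEKR [Fintype V] (G : SimpleGraph V) (r : ℕ) : Prop :=
  IsEKR G r ∧ ∀ 𝒜 ⊆ indepSetsSize G r, PairwiseIntersecting 𝒜 →
    (∀ ℬ ⊆ indepSetsSize G r, PairwiseIntersecting ℬ → ℬ.card ≤ 𝒜.card) →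
    ∃ v, 𝒜 = ekrStar G r v

lemma mem_ekr {W : Type*} [Fintype W] (G : SimpleGraph W) (r : ℕ) (v : W) (A : Finset W) :
    A ∈ ekrStar G r v ↔ A ∈ indepSetsSize G r ∧ v ∈ A := by
  rw [ekrStar, mem_filter]

lemma pint_iff {W : Type*} (F : Finset (Finset W)) :
    PairwiseIntersecting F ↔ ∀ A ∈ F, ∀ B ∈ F, ∃ x, x ∈ A ∧ x ∈ B := by
  unfold PairwiseIntersecting
  simp only [Finset.Nonempty, mem_inter]

section ekr
variable {α : Type*} [DecidableEq α]

lemma card_member_eq (H : Finset (Finset α)) (v : α) :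
    #(H.memberSubfamily v) = #(H.filter fun A => v ∈ A) := by
  unfold Finset.memberSubfamily
  refine card_image_of_injOn ?_
  intro A hA B hB h
  simp at hA hB
  simp only at h
  rw [← insert_erase hA.2, ← insert_erase hB.2, h]

lemma sum_member [Fintype α] (H : Finset (Finset α)) (s : ℕ) (hs : ∀ A ∈ H, #A = s) :
    ∑ v : α, #(H.memberSubfamily v) = s * #H := by
  simp_rw [card_member_eq, card_filter]
  rw [sum_comm]
  have : ∀ A ∈ H, (∑ x : α, if x ∈ A then 1 else 0) = s := by
    intro A hA
    rw [← hs A hA]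
    simp
  rw [sum_congr rfl this]
  simp [mul_comm]

def PP (α : Type*) [DecidableEq α] (s : ℕ) : Prop :=
  ∀ k, s ≤ k → ∀ H F : Finset (Finset α), (∀ A ∈ H, #A = s) →
    (∀ T ∈ F, #T = s + 1 ∧ ∀ a ∈ T, T.erase a ∈ H) → #H ≤ k.choose s →
    (s + 1) * #F ≤ #H * (k - s) ∧
      ((s + 1) * #F = #H * (k - s) → #H = 0 ∨ #H = k.choose s)

lemma vertexL {s k : ℕ} (hk : s ≤ k) (ih : PP α s) (H F : Finset (Finset α))
    (hH : ∀ A ∈ H, #A = s + 1)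
    (hF : ∀ T ∈ F, #T = s + 1 + 1 ∧ ∀ a ∈ T, T.erase a ∈ H)
    (hc : #H ≤ (k+1).choose (s+1)) (v : α) :
    (s + 1) * #(F.memberSubfamily v) ≤ #(H.memberSubfamily v) * (k - s) ∧
    ((s + 1) * #(F.memberSubfamily v) = #(H.memberSubfamily v) * (k - s) →
      #(H.memberSubfamily v) = 0 ∨
       (#(H.memberSubfamily v) = k.choose s ∧ #H = (k+1).choose (s+1))) := by
  have h1 : #(F.memberSubfamily v) ≤ #(H.nonMemberSubfamily v) := by
    apply card_le_card
    intro T hT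
    rw [mem_memberSubfamily] at hT
    rw [mem_nonMemberSubfamily]
    have := (hF _ hT.1).2 v (mem_insert_self _ _)
    rw [erase_insert hT.2] at this
    exact ⟨this, hT.2⟩
  have h2 := card_memberSubfamily_add_card_nonMemberSubfamily v H
  have h3 := Nat.add_one_mul_choose_eq k s
  obtain ⟨m, rfl⟩ := Nat.exists_eq_add_of_le hk
  simp only [Nat.add_sub_cancel_left]
  by_cases hd : (s+m).choose s ≤ #(H.memberSubfamily v)
  · generalize #(H.memberSubfamily v) = d at *
    generalize #(F.memberSubfamily v) = f at *
    generalize (s+m).choose s = C at *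
    generalize (s+m+1).choose (s+1) = D at *
    generalize #H = h at *
    constructor
    · nlinarith
    · intro he
      right
      have hC : d = C := by
        by_contra hne
        have : C < d := by omega
        nlinarith
      refine ⟨hC, ?_⟩
      subst hC
      have : D ≤ h := by
        by_contra hne
        have : h < D := by omega
        nlinarith
      omega
  · have := ih (s+m) (by omega) (H.memberSubfamily v) (F.memberSubfamily v) ?_ ?_ (by omega)
    · simp only [Nat.add_sub_cancel_left] at this
      refine ⟨this.1, fun he => ?_⟩
      rcases this.2 he with h | h
      · exact Or.inl h
      · omega
    · intro A hA
      rw [mem_memberSubfamily] at hA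
      have := hH _ hA.1
      rw [card_insert_of_notMem hA.2] at this
      omega
    · intro T hT
      rw [mem_memberSubfamily] at hT
      have := hF _ hT.1
      refine ⟨?_, ?_⟩
      · have := this.1
        rw [card_insert_of_notMem hT.2] at this
        omega
      · intro a ha
        rw [mem_memberSubfamily]
        have h4 := this.2 a (mem_insert_of_mem ha)
        have hne : v ≠ a := by rintro rfl; exact hT.2 ha
        rw [erase_insert_of_ne hne] at h4
        exact ⟨h4, fun h => hT.2 (mem_of_mem_erase h)⟩

lemma pp_one [Fintype α] : PP α 1 := by
  intro k hk H F hH hF hc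
  rw [Nat.choose_one_right] at *
  have key : ∀ v : α, #(F.memberSubfamily v) ≤ #(H.memberSubfamily v) * (#H - 1) := by
    intro v
    have h1 : #(F.memberSubfamily v) ≤ #(H.nonMemberSubfamily v) := by
      apply card_le_card
      intro T hT
      rw [mem_memberSubfamily] at hT
      rw [mem_nonMemberSubfamily]
      have := (hF _ hT.1).2 v (mem_insert_self _ _)
      rw [erase_insert hT.2] at this
      exact ⟨this, hT.2⟩
    have h2 := card_memberSubfamily_add_card_nonMemberSubfamily v H
    have h3 : #(H.memberSubfamily v) ≤ 1 := by
      rw [card_le_one]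
      intro a ha b hb
      rw [mem_memberSubfamily] at ha hb
      have h5 := hH _ ha.1
      have h6 := hH _ hb.1
      rw [card_insert_of_notMem ha.2] at h5
      rw [card_insert_of_notMem hb.2] at h6
      have : a = ∅ := by rw [← card_eq_zero]; omega
      have : b = ∅ := by rw [← card_eq_zero]; omega
      simp_all
    have h4 : #(H.memberSubfamily v) = 0 → #(F.memberSubfamily v) = 0 := by
      intro h0
      rw [card_eq_zero] at h0 ⊢
      rw [eq_empty_iff_forall_notMem] at h0 ⊢
      intro T hT
      rw [mem_memberSubfamily] at hT
      have h5 := hF _ hT.1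
      have h6 := h5.1
      rw [card_insert_of_notMem hT.2] at h6
      have : T.Nonempty := by rw [← card_pos]; omega
      obtain ⟨a, ha⟩ := this
      apply h0 (T.erase a)
      rw [mem_memberSubfamily]
      have h4 := h5.2 a (mem_insert_of_mem ha)
      have hne : v ≠ a := by rintro rfl; exact hT.2 ha
      rw [erase_insert_of_ne hne] at h4
      exact ⟨h4, fun h => hT.2 (mem_of_mem_erase h)⟩
    interval_cases h : #(H.memberSubfamily v)
    · simp [h4]
    · omega
  have hs := sum_le_sum (s := (univ : Finset α)) fun v _ => key v
  rw [← sum_mul, sum_member H 1 hH, sum_member F 2 (fun T hT => (hF T hT).1)] at hs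
  rw [one_mul] at hs
  have h7 : #H * (#H - 1) ≤ #H * (k - 1) := Nat.mul_le_mul_left _ (by omega)
  refine ⟨by omega, fun he => ?_⟩
  have h8 : #H * (#H - 1) = #H * (k - 1) := by omega
  rcases Nat.eq_zero_or_pos #H with h | h
  · exact Or.inl h
  · right
    have := Nat.eq_of_mul_eq_mul_left h h8
    omega

lemma stepL [Fintype α] {s k : ℕ} (hk : s ≤ k) (ih : PP α s) (H F : Finset (Finset α))
    (hH : ∀ A ∈ H, #A = s + 1)
    (hF : ∀ T ∈ F, #T = s + 1 + 1 ∧ ∀ a ∈ T, T.erase a ∈ H)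
    (hc : #H ≤ (k+1).choose (s+1)) :
    (s + 1 + 1) * #F ≤ #H * (k - s) ∧
    ((s + 1 + 1) * #F = #H * (k - s) → ∀ v : α, #(H.memberSubfamily v) = 0 ∨
       (#(H.memberSubfamily v) = k.choose s ∧ #H = (k+1).choose (s+1))) := by
  have key := vertexL hk ih H F hH hF hc
  have hs := sum_le_sum (s := (univ : Finset α)) fun v _ => (key v).1
  have e1 := sum_member H _ hH
  have e2 := sum_member F _ (fun T hT => (hF T hT).1)
  have e3 : ∑ v, (s+1) * #(F.memberSubfamily v) = (s+1) * ((s + 1 + 1) * #F) := by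
    rw [← mul_sum, e2]
  have e4 : ∑ v, #(H.memberSubfamily v) * (k - s) = (s+1) * (#H * (k - s)) := by
    rw [← sum_mul, e1, mul_assoc]
  rw [e3, e4] at hs
  refine ⟨Nat.le_of_mul_le_mul_left hs (by omega), fun he v => ?_⟩
  rw [← he, ← e3] at e4
  exact (key v).2 ((sum_eq_sum_iff_of_le (fun v _ => (key v).1)).1 e4.symm v (mem_univ v))

lemma pp_all [Fintype α] (s : ℕ) : PP α (s + 1) := by
  induction s with
  | zero => exact pp_one
  | succ s ih =>
    intro k hk H F hH hF hc
    obtain ⟨k, rfl⟩ : ∃ j, k = j + 1 := ⟨k - 1, by omega⟩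
    have := stepL (by omega) ih H F hH hF hc
    rw [Nat.add_sub_add_right]
    refine ⟨this.1, fun he => ?_⟩
    by_contra hcon
    push Not at hcon
    have h2 : ∀ v, #(H.memberSubfamily v) = 0 := fun v => by
      rcases this.2 he v with h | h
      · exact h
      · exact absurd h.2 hcon.2
    have e1 := sum_member H _ hH
    simp only [h2, sum_const_zero] at e1
    have : #H = 0 := by
      rcases Nat.mul_eq_zero.1 e1.symm with h | h
      · omega
      · exact h
    exact hcon.1 this

lemma uniq [Fintype α] {s k : ℕ} (hs : 1 ≤ s) (hk : s < k) (H F : Finset (Finset α))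
    (hH : ∀ A ∈ H, #A = s + 1)
    (hF : ∀ T ∈ F, #T = s + 1 + 1 ∧ ∀ a ∈ T, T.erase a ∈ H)
    (hc : #H ≤ (k+1).choose (s+1)) (hFc : (k+1).choose (s+2) ≤ #F) :
    ∃ S : Finset α, #S = k + 1 ∧ H = S.powersetCard (s+1) := by
  obtain ⟨s, rfl⟩ : ∃ j, s = j + 1 := ⟨s - 1, by omega⟩
  have h := stepL hk.le (pp_all s) H F hH hF hc
  have h3 := Nat.add_one_mul_choose_eq k (s + 1)
  have h4 := Nat.choose_succ_right_eq (k+1) (s+1+1)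
  rw [Nat.add_sub_add_right] at h4
  have hp : 0 < k - (s+1) := by omega
  have h5 : #H * (k - (s+1)) ≤ (k+1).choose (s+1+1) * (k - (s+1)) :=
    Nat.mul_le_mul_right _ hc
  have h6 : (s + 1 + 1 + 1) * (k+1).choose (s+1+2) ≤ (s+1+1+1) * #F := Nat.mul_le_mul_left _ hFc
  have h7 : (s + 1 + 1 + 1) * (k+1).choose (s+1+2) = (k+1).choose (s+1+1) * (k - (s+1)) := by
    rw [← h4, mul_comm]
  have he : (s + 1 + 1 + 1) * #F = #H * (k - (s+1)) := by have := h.1; omega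
  have hHc : #H = (k+1).choose (s+1+1) :=
    Nat.eq_of_mul_eq_mul_right hp (by omega)
  have hv := h.2 he
  have hC : 0 < k.choose (s+1) := Nat.choose_pos hk.le
  refine ⟨univ.filter fun v => #(H.memberSubfamily v) ≠ 0, ?_, ?_⟩
  · have e1 := sum_member H _ hH
    have e2 : ∑ v : α, #(H.memberSubfamily v) =
        ∑ v : α, if #(H.memberSubfamily v) ≠ 0 then k.choose (s+1) else 0 := by
      apply sum_congr rfl
      intro v _
      rcases hv v with h | h
      · simp [h]
      · rw [if_pos (by omega)]; exact h.1
    rw [e2, ← sum_filter, sum_const, smul_eq_mul, hHc, mul_comm (s+1+1), ← h3] at e1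
    exact Nat.eq_of_mul_eq_mul_right hC e1
  · set S := univ.filter fun v => #(H.memberSubfamily v) ≠ 0 with hS
    have hcard : #S = k + 1 := by
      have e1 := sum_member H _ hH
      have e2 : ∑ v : α, #(H.memberSubfamily v) =
          ∑ v : α, if #(H.memberSubfamily v) ≠ 0 then k.choose (s+1) else 0 := by
        apply sum_congr rfl
        intro v _
        rcases hv v with h | h
        · simp [h]
        · rw [if_pos (by omega)]; exact h.1
      rw [e2, ← sum_filter, sum_const, smul_eq_mul, hHc, mul_comm (s+1+1), ← h3] at e1
      exact Nat.eq_of_mul_eq_mul_right hC e1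
    apply eq_of_subset_of_card_le
    · intro A hA
      rw [mem_powersetCard]
      refine ⟨fun v hvA => ?_, hH A hA⟩
      rw [hS, mem_filter, card_member_eq]
      refine ⟨mem_univ _, ?_⟩
      rw [← Nat.pos_iff_ne_zero, card_pos]
      exact ⟨A, by simp [hA, hvA]⟩
    · rw [card_powersetCard, hcard, hHc]
end ekr

section final
open scoped FinsetFamily

lemma ekr_uniq {n r : ℕ} (hr : 2 ≤ r) (hn : 2 * r < n) (A : Finset (Finset (Fin n)))
    (hA : (A : Set (Finset (Fin n))).Intersecting) (h₂ : (A : Set (Finset (Fin n))).Sized r)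
    (hc : (n - 1).choose (r - 1) ≤ #A) : ∃ v, ∀ B ∈ A, v ∈ B := by
  obtain ⟨F, hFdef⟩ : ∃ F, F = ∂^[n - 2 * r - 1] Aᶜˢ := ⟨_, rfl⟩
  have hHdef : ∂ F = ∂^[n - 2 * r] Aᶜˢ := by
    rw [hFdef, ← Function.iterate_succ_apply' (f := shadow)]
    congr 2
    omega
  have hdisj : Disjoint A (∂ F) := by
    rw [hHdef]
    refine disjoint_right.2 fun B hAbar hB ↦ ?_
    simp only [mem_shadow_iterate_iff_exists_sdiff, mem_compls] at hAbar
    obtain ⟨C, hC, hAC, _⟩ := hAbar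
    exact hA hB hC (disjoint_of_subset_left hAC disjoint_compl_right)
  have hbar : (Aᶜˢ : Set (Finset (Fin n))).Sized (n - r) := by simpa using h₂.compls
  have z : (n - 1).choose (n - r) ≤ #Aᶜˢ := by
    rwa [card_compls, Nat.choose_symm_of_eq_add
      (tsub_add_tsub_cancel (by omega : r ≤ n) (by omega : 1 ≤ r)).symm]
  have kk := kruskal_katona_lovasz_form (i := n - 2 * r - 1) (by omega)
    (by omega) (by omega : n - 1 ≤ n) hbar z
  rw [← hFdef, show n - r - (n - 2 * r - 1) = r + 1 by omega] at kk
  have hFs : (F : Set (Finset (Fin n))).Sized (r + 1) := by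
    have := hbar.shadow_iterate (k := n - 2 * r - 1)
    rw [← hFdef, show n - r - (n - 2 * r - 1) = r + 1 by omega] at this
    exact this
  have hHs : ((∂ F : Finset (Finset (Fin n))) : Set (Finset (Fin n))).Sized r := by
    simpa using hFs.shadow
  have hle : #(A ∪ ∂ F) ≤ n.choose r := by
    have : ((A ∪ ∂ F : Finset (Finset (Fin n))) : Set (Finset (Fin n))).Sized r := by
      rw [coe_union, Set.sized_union]
      exact ⟨h₂, hHs⟩
    simpa using this.card_le
  rw [card_union_of_disjoint hdisj] at hle
  obtain ⟨s, rfl⟩ : ∃ s, r = s + 1 := ⟨r - 1, by omega⟩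
  obtain ⟨k, rfl⟩ : ∃ k, n = k + 1 + 1 := ⟨n - 2, by omega⟩
  simp only [Nat.add_sub_cancel] at hc kk
  rw [Nat.choose_succ_succ (k+1) s] at hle
  obtain ⟨S, hS, hH⟩ := uniq (s := s) (k := k) (by omega) (by omega) (∂ F) F
    (fun B hB => hHs hB)
    (fun T hT => ⟨hFs hT, fun a ha => erase_mem_shadow hT ha⟩)
    (by simp only [Nat.succ_eq_add_one] at hle; omega) kk
  have hSc : #Sᶜ = 1 := by rw [card_compl, hS, Fintype.card_fin]; omega
  obtain ⟨v, hv⟩ := card_eq_one.1 hSc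
  refine ⟨v, fun B hB => ?_⟩
  by_contra hvB
  refine disjoint_left.1 hdisj hB ?_
  rw [hH, mem_powersetCard]
  refine ⟨fun x hx => ?_, h₂ hB⟩
  by_contra hxS
  have : x ∈ Sᶜ := mem_compl.2 hxS
  rw [hv, mem_singleton] at this
  exact hvB (this ▸ hx)

lemma mem_iss {n r : ℕ} {A : Finset (Fin 1 ⊕ Fin n)} :
    A ∈ indepSetsSize (completeBipartiteGraph (Fin 1) (Fin n)) r ↔
    (∀ x ∈ A, ∀ y ∈ A, ¬ (completeBipartiteGraph (Fin 1) (Fin n)).Adj x y) ∧ #A = r := by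
  simp [indepSetsSize, indepSets]

lemma map_mem {n r : ℕ} {B : Finset (Fin n)} (hB : #B = r) :
    B.map Function.Embedding.inr ∈ indepSetsSize (completeBipartiteGraph (Fin 1) (Fin n)) r := by
  rw [mem_iss]
  refine ⟨?_, by rw [card_map, hB]⟩
  intro x hx y hy
  rw [mem_map] at hx hy
  obtain ⟨a, -, rfl⟩ := hx
  obtain ⟨b, -, rfl⟩ := hy
  simp [completeBipartiteGraph]

lemma exists_map {n r : ℕ} (hr : 2 ≤ r) {A : Finset (Fin 1 ⊕ Fin n)}
    (hA : A ∈ indepSetsSize (completeBipartiteGraph (Fin 1) (Fin n)) r) :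
    ∃ B : Finset (Fin n), B.map Function.Embedding.inr = A := by
  rw [mem_iss] at hA
  obtain ⟨h1, h2⟩ := hA
  have hno : ∀ c, Sum.inl c ∉ A := by
    intro c hc
    obtain ⟨y, hy, hne⟩ := exists_mem_ne (by omega : 1 < #A) (Sum.inl c)
    rcases y with d | d
    · exact hne (by rw [Subsingleton.elim d c])
    · exact h1 _ hc _ hy (by simp [completeBipartiteGraph])
  refine ⟨univ.filter fun b => Sum.inr b ∈ A, ?_⟩
  ext x
  rcases x with d | d
  · simp [hno d]
  · simp

lemma star_card {n r : ℕ} (hr : 0 < r) (v : Fin n) :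
    (n - 1).choose (r - 1) ≤
      #(ekrStar (completeBipartiteGraph (Fin 1) (Fin n)) r (Sum.inr v)) := by
  have : (n - 1).choose (r - 1) = #((univ.erase v).powersetCard (r - 1)) := by
    rw [card_powersetCard, card_erase_of_mem (mem_univ _), card_univ, Fintype.card_fin]
  rw [this]
  apply card_le_card_of_injOn (fun B => (insert v B).map Function.Embedding.inr)
  · intro B hB
    rw [mem_coe, mem_powersetCard] at hB
    have hvB : v ∉ B := fun h => by simpa using hB.1 h
    rw [mem_coe, mem_ekr]
    refine ⟨map_mem ?_, by simp⟩
    rw [card_insert_of_notMem hvB]; omega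
  · intro B hB C hC h
    rw [mem_coe, mem_powersetCard] at hB hC
    have hvB : v ∉ B := fun h => by simpa using hB.1 h
    have hvC : v ∉ C := fun h => by simpa using hC.1 h
    have h' := map_injective _ h
    rw [← erase_insert hvB, h', erase_insert hvC]

lemma star_int {n r : ℕ} (v : Fin 1 ⊕ Fin n) :
    PairwiseIntersecting (ekrStar (completeBipartiteGraph (Fin 1) (Fin n)) r v) := by
  rw [pint_iff]
  intro A hA B hB
  rw [mem_ekr] at hA hB
  exact ⟨v, hA.2, hB.2⟩

lemma r_one {n : ℕ} {A : Finset (Finset (Fin 1 ⊕ Fin n))}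
    (hA : A ⊆ indepSetsSize (completeBipartiteGraph (Fin 1) (Fin n)) 1)
    (hI : PairwiseIntersecting A) :
    ∃ v, A ⊆ ekrStar (completeBipartiteGraph (Fin 1) (Fin n)) 1 v := by
  rcases A.eq_empty_or_nonempty with rfl | ⟨B, hB⟩
  · exact ⟨Sum.inl 0, empty_subset _⟩
  · obtain ⟨v, rfl⟩ := card_eq_one.1 (mem_iss.1 (hA hB)).2
    refine ⟨v, fun C hC => ?_⟩
    rw [mem_ekr]
    refine ⟨hA hC, ?_⟩
    obtain ⟨x, hx⟩ := (pint_iff _).1 hI _ hB _ hC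
    rw [mem_singleton] at hx
    exact hx.1 ▸ hx.2

lemma pullback {n r : ℕ} (hr : 2 ≤ r) {A : Finset (Finset (Fin 1 ⊕ Fin n))}
    (hA : A ⊆ indepSetsSize (completeBipartiteGraph (Fin 1) (Fin n)) r)
    (hI : PairwiseIntersecting A) :
    ∃ A' : Finset (Finset (Fin n)), #A' = #A ∧ (A' : Set (Finset (Fin n))).Intersecting ∧
      (A' : Set (Finset (Fin n))).Sized r ∧
      ∀ B ∈ A, ∃ B' ∈ A', B'.map Function.Embedding.inr = B := by
  refine ⟨univ.filter fun B => B.map Function.Embedding.inr ∈ A, ?_, ?_, ?_, ?_⟩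
  · apply card_bij (fun B _ => B.map Function.Embedding.inr)
    · intro B hB
      exact (mem_filter.1 hB).2
    · intro B _ C _ h
      exact map_injective _ h
    · intro B hB
      obtain ⟨B', h⟩ := exists_map hr (hA hB)
      exact ⟨B', by rw [mem_filter, h]; exact ⟨mem_univ _, hB⟩, h⟩
  · intro B hB C hC hd
    rw [mem_coe, mem_filter] at hB hC
    obtain ⟨x, hx⟩ := (pint_iff _).1 hI _ hB.2 _ hC.2
    rw [mem_map, mem_map] at hx
    obtain ⟨⟨a, ha, rfl⟩, b, hb, hab⟩ := hx
    have : b = a := Function.Embedding.inr.injective hab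
    exact disjoint_left.1 hd ha (this ▸ hb)
  · intro B hB
    rw [mem_coe, mem_filter] at hB
    have := (mem_iss.1 (hA hB.2)).2
    rwa [card_map] at this
  · intro B hB
    obtain ⟨B', h⟩ := exists_map hr (hA hB)
    exact ⟨B', by rw [mem_filter, h]; exact ⟨mem_univ _, hB⟩, h⟩

lemma ekrStar_sub {n r : ℕ} (v : Fin 1 ⊕ Fin n) :
    ekrStar (completeBipartiteGraph (Fin 1) (Fin n)) r v ⊆
      indepSetsSize (completeBipartiteGraph (Fin 1) (Fin n)) r := by
  intro A hA
  rw [mem_ekr] at hA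
  exact hA.1

end final

/-- EKR theorem for claws. For positive integers `n ≥ r`, the claw
`K_{1,n}` is `r`-EKR if `n ≥ 2r` and strictly `r`-EKR if `n > 2r`. -/
theorem claw_EKR (n r : ℕ) (hn : 0 < n) (hr : 0 < r) (hrn : r ≤ n) :
    (2 * r ≤ n → IsEKR (completeBipartiteGraph (Fin 1) (Fin n)) r) ∧
    (2 * r < n → IsStrictEKR (completeBipartiteGraph (Fin 1) (Fin n)) r) := by
  have hE : 2 * r ≤ n → IsEKR (completeBipartiteGraph (Fin 1) (Fin n)) r := by
    intro h A hA hI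
    rcases Nat.lt_or_ge r 2 with h2 | h2
    · obtain rfl : r = 1 := by omega
      obtain ⟨v, hv⟩ := r_one hA hI
      exact ⟨v, card_le_card hv⟩
    · obtain ⟨A', h1, h3, h4, -⟩ := pullback h2 hA hI
      refine ⟨Sum.inr ⟨0, hn⟩, ?_⟩
      rw [← h1]
      exact (erdos_ko_rado h3 h4 (by omega)).trans (star_card hr _)
  refine ⟨hE, fun h => ⟨hE h.le, ?_⟩⟩
  intro A hA hI hmax
  suffices ∃ v, A ⊆ ekrStar (completeBipartiteGraph (Fin 1) (Fin n)) r v by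
    obtain ⟨v, hv⟩ := this
    exact ⟨v, eq_of_subset_of_card_le hv (hmax _ (ekrStar_sub _) (star_int v))⟩
  rcases Nat.lt_or_ge r 2 with h2 | h2
  · obtain rfl : r = 1 := by omega
    exact r_one hA hI
  · obtain ⟨A', h1, h3, h4, h5⟩ := pullback h2 hA hI
    obtain ⟨v, hv⟩ := ekr_uniq h2 h A' h3 h4 (by
      rw [h1]
      exact (star_card hr ⟨0, hn⟩).trans (hmax _ (ekrStar_sub _) (star_int _)))
    refine ⟨Sum.inr v, fun B hB => ?_⟩
    rw [mem_ekr]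
    refine ⟨hA hB, ?_⟩
    obtain ⟨B', hB', rfl⟩ := h5 B hB
    exact mem_map_of_mem _ (hv B' hB')
end

section
/- Let r be a positive integer and let G be a depth-two claw with μ(G) ≥ 2r − 1. Then G is strictly r-EKR. -/
open Finset SimpleGraph
open scoped Classical

variable {V : Type*}

/-- An elongated claw: a tree with a designated root in which every vertex other than
the root has degree at most 2. -/
def IsElongatedClaw [Fintype V] (G : SimpleGraph V) (root : V) : Prop :=
  G.IsTree ∧ ∀ v, v ≠ root → G.degree v ≤ 2

/-- A depth-two claw: an elongated claw in which every leaf is at distance 2 from the root. -/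
def IsDepthTwoClaw [Fintype V] (G : SimpleGraph V) (root : V) : Prop :=
  IsElongatedClaw G root ∧ ∀ v, G.degree v = 1 → G.dist root v = 2

/-- The minimum size of a maximal independent set of `G`, i.e. `μ(G)`. -/
noncomputable def graphMu [Fintype V] (G : SimpleGraph V) : ℕ :=
  sInf {m | ∃ A ∈ indepSets G, (∀ B ∈ indepSets G, A ⊆ B → B = A) ∧ A.card = m}

structure ClawData (G : SimpleGraph V) {I : Type*} (c : V) (x y : I → V) : Prop where
  xinj : Function.Injective x
  yinj : Function.Injective y
  xy : ∀ i j, x i ≠ y j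
  xc : ∀ i, x i ≠ c
  yc : ∀ i, y i ≠ c
  cover : ∀ v, v = c ∨ (∃ i, v = x i) ∨ ∃ i, v = y i
  adjc : ∀ i, G.Adj c (x i)
  adjxy : ∀ i, G.Adj (x i) (y i)
  only : ∀ u v, G.Adj u v → (u = c ∧ ∃ i, v = x i) ∨ (v = c ∧ ∃ i, u = x i) ∨
    (∃ i, u = x i ∧ v = y i) ∨ (∃ i, u = y i ∧ v = x i)

theorem tree_parent_unique {G : SimpleGraph V} (hG : G.IsTree) (c : V) {u u' v : V}
    (h : G.Adj u v) (h' : G.Adj u' v) (hd : G.dist c v = G.dist c u + 1)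
    (hd' : G.dist c v = G.dist c u' + 1) : u = u' := by
  obtain ⟨p, hp⟩ := hG.connected.exists_walk_length_eq_dist c u
  obtain ⟨p', hp'⟩ := hG.connected.exists_walk_length_eq_dist c u'
  have h1 : (p.concat h).IsPath := Walk.isPath_of_length_eq_dist _ (by simp [hp, hd])
  have h2 : (p'.concat h').IsPath := Walk.isPath_of_length_eq_dist _ (by simp [hp', hd'])
  have := (hG.existsUnique_path c v).unique h1 h2
  obtain ⟨e, -⟩ := Walk.concat_inj this
  exact e

theorem claw_struct [Fintype V] (G : SimpleGraph V) (c : V) (hG : IsDepthTwoClaw G c) :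
    ∃ x y : {v // G.Adj c v} → V, ClawData G c x y := by
  obtain ⟨⟨hT, hdeg⟩, hleaf⟩ := hG
  have hconn := hT.connected
  have hstep := fun {v w : V} (h : G.Adj v w) => hT.dist_eq_dist_add_one_of_adj c h
  have hnd : ∀ v, G.degree v = (G.neighborFinset v).card := fun v => rfl
  -- max distance
  have hmax : ∀ v, G.dist c v ≤ 2 := by
    obtain ⟨m, -, hm⟩ := Finset.exists_max_image univ (fun v => G.dist c v) ⟨c, mem_univ c⟩
    by_cases hmc : m = c
    · intro v
      have := hm v (mem_univ v)
      subst hmc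
      rw [SimpleGraph.dist_self] at this
      omega
    · have : G.degree m = 1 := by
        have : Nontrivial V := ⟨m, c, hmc⟩
        have hpos : 0 < G.degree m := hconn.preconnected.degree_pos_of_nontrivial m
        have hle : (G.neighborFinset m).card ≤ 1 := by
          rw [Finset.card_le_one]
          intro a ha b hb
          simp only [mem_neighborFinset] at ha hb
          have ha' := hm a (mem_univ a)
          have hb' := hm b (mem_univ b)
          refine tree_parent_unique hT c ha.symm hb.symm ?_ ?_
          · rcases hstep ha with h | h <;> omega
          · rcases hstep hb with h | h <;> omega
        have := hnd m
        omega
      have h2 := hleaf m this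
      intro v
      have := hm v (mem_univ v)
      omega
  have hex : ∀ i : {v // G.Adj c v}, ∃ w, G.Adj i.1 w ∧ w ≠ c ∧ ∀ z, G.Adj i.1 z → z = c ∨ z = w := by
    rintro ⟨v, hv⟩
    have hd1 : G.dist c v = 1 := dist_eq_one_iff_adj.2 hv
    have h2 := hdeg v hv.ne'
    have h1 : G.degree v ≠ 1 := fun h => by have := hleaf v h; omega
    have h0 : 0 < G.degree v := (G.degree_pos_iff_exists_adj v).2 ⟨c, hv.symm⟩
    have h3 : (G.neighborFinset v).card = 2 := by have := hnd v; omega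
    have hc : c ∈ G.neighborFinset v := by simpa using hv.symm
    have h4 : ((G.neighborFinset v).erase c).card = 1 := by rw [card_erase_of_mem hc, h3]
    obtain ⟨w, hw⟩ := card_eq_one.1 h4
    have hw' : ∀ z, (z ≠ c ∧ G.Adj v z) ↔ z = w := by
      intro z
      have := congrArg (z ∈ ·) hw
      simpa using this
    refine ⟨w, ((hw' w).2 rfl).2, ((hw' w).2 rfl).1, fun z hz => ?_⟩
    by_cases hzc : z = c
    · exact Or.inl hzc
    · exact Or.inr ((hw' z).1 ⟨hzc, hz⟩)
  choose y hy1 hy2 hy3 using hex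
  have hdx : ∀ i : {v // G.Adj c v}, G.dist c i.1 = 1 := fun i => dist_eq_one_iff_adj.2 i.2
  have hdy : ∀ i, G.dist c (y i) = 2 := by
    intro i
    have h1 := hdx i
    have h2 : G.dist c (y i) ≠ 0 := by
      rw [Ne, hconn.dist_eq_zero_iff]; exact (hy2 i).symm
    rcases hstep (hy1 i) with h | h <;> omega
  have hpar : ∀ v, v ≠ c → ∃ u, G.Adj u v ∧ G.dist c v = G.dist c u + 1 := by
    intro v hv
    obtain ⟨p, hp⟩ := hconn.exists_walk_length_eq_dist v c
    cases p with
    | nil => exact absurd rfl hv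
    | @cons _ u _ h q =>
      refine ⟨u, h.symm, ?_⟩
      have h1 := dist_le q
      rw [SimpleGraph.dist_comm] at hp h1
      simp at hp
      rcases hstep h with h | h <;> omega
  have hcov : ∀ v, G.dist c v = 2 → ∃ i, v = y i := by
    intro v hv
    have hvc : v ≠ c := by rintro rfl; simp at hv
    obtain ⟨u, hu, hd⟩ := hpar v hvc
    have hu1 : G.Adj c u := dist_eq_one_iff_adj.1 (by omega)
    refine ⟨⟨u, hu1⟩, ?_⟩
    exact (hy3 ⟨u, hu1⟩ v hu).resolve_left hvc
  have hcov' : ∀ v, v = c ∨ (∃ i : {v // G.Adj c v}, v = i.1) ∨ ∃ i, v = y i := by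
    intro v
    have := hmax v
    have h3 : G.dist c v = 0 ∨ G.dist c v = 1 ∨ G.dist c v = 2 := by omega
    rcases h3 with h | h | h
    · exact Or.inl ((hconn.dist_eq_zero_iff.1 h).symm)
    · exact Or.inr (Or.inl ⟨⟨v, dist_eq_one_iff_adj.1 h⟩, rfl⟩)
    · exact Or.inr (Or.inr (hcov v h))
  refine ⟨fun i => i.1, y, Subtype.val_injective, ?_, ?_, ?_, hy2, hcov', fun i => i.2, hy1, ?_⟩
  · intro i j hij
    apply Subtype.ext
    have h1 := hdx i
    have h2 := hdx j
    have h3 := hdy i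
    refine tree_parent_unique hT c (hy1 i) (hij ▸ hy1 j) ?_ ?_ <;> omega
  · intro i j h
    have h1 := hdx i
    have h2 := hdy j
    change i.1 = y j at h
    rw [h] at h1; omega
  · intro i
    exact i.2.ne'
  · intro u v huv
    have key : ∀ i w, G.Adj i.1 w → w = c ∨ w = y i := fun i w h => hy3 i w h
    rcases hcov' u with rfl | ⟨i, rfl⟩ | ⟨i, rfl⟩
    · exact Or.inl ⟨rfl, ⟨v, huv⟩, rfl⟩
    · rcases hy3 i v huv with h | h
      · exact Or.inr (Or.inl ⟨h, i, rfl⟩)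
      · exact Or.inr (Or.inr (Or.inl ⟨i, rfl, h⟩))
    · have h1 := hdy i
      have h2 := hmax v
      have h3 : G.dist c v = 1 := by rcases hstep huv with h | h <;> omega
      have h4 : G.Adj c v := dist_eq_one_iff_adj.1 h3
      rcases hy3 ⟨v, h4⟩ _ huv.symm with h | h
      · exact absurd h (hy2 i)
      · exact Or.inr (Or.inr (Or.inr ⟨⟨v, h4⟩, h, rfl⟩))

theorem ekr_on (S : Finset V) (k : ℕ) (𝒜 : Finset (Finset V))
    (hS : 𝒜 ⊆ powersetCard k S) (hint : ∀ A ∈ 𝒜, ∀ B ∈ 𝒜, (A ∩ B).Nonempty)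
    (hk : 2 * k ≤ S.card) : 𝒜.card ≤ (S.card - 1).choose (k - 1) := by
  let e : Fin S.card ≃ S := S.equivFin.symm
  let f : Fin S.card → V := fun i => (e i).1
  have hf : Function.Injective f := Subtype.val_injective.comp e.injective
  have hfS : ∀ v ∈ S, ∃ i, f i = v := fun v hv => ⟨e.symm ⟨v, hv⟩, by simp [f]⟩
  let g : Finset V → Finset (Fin S.card) := fun A => univ.filter fun i => f i ∈ A
  have hmap : ∀ A ∈ 𝒜, (g A).map ⟨f, hf⟩ = A := by
    intro A hA
    have hAS := (mem_powersetCard.1 (hS hA)).1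
    ext v
    simp only [g, mem_map, mem_filter, mem_univ, true_and, Function.Embedding.coeFn_mk]
    constructor
    · rintro ⟨i, hi, rfl⟩; exact hi
    · intro hv
      obtain ⟨i, rfl⟩ := hfS v (hAS hv)
      exact ⟨i, hv, rfl⟩
  have hinj : Set.InjOn g 𝒜 := by
    intro A hA B hB h
    rw [← hmap A hA, ← hmap B hB, h]
  rw [← card_image_of_injOn hinj]
  refine erdos_ko_rado ?_ ?_ (by omega)
  · intro A hA B hB hd
    simp only [coe_image, Set.mem_image, mem_coe] at hA hB
    obtain ⟨A, hA, rfl⟩ := hA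
    obtain ⟨B, hB, rfl⟩ := hB
    obtain ⟨v, hv⟩ := hint A hA B hB
    rw [mem_inter] at hv
    obtain ⟨i, rfl⟩ := hfS v ((mem_powersetCard.1 (hS hA)).1 hv.1)
    rw [Finset.disjoint_left] at hd
    exact hd (a := i) (by simp [g, hv.1]) (by simp [g, hv.2])
  · intro A hA
    simp only [coe_image, Set.mem_image, mem_coe] at hA
    obtain ⟨A, hA, rfl⟩ := hA
    rw [← card_map ⟨f, hf⟩, hmap A hA]
    exact (mem_powersetCard.1 (hS hA)).2

theorem card_star_on (S : Finset V) (a : V) (ha : a ∈ S) (k : ℕ) (hk : 1 ≤ k) :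
    ((powersetCard k S).filter fun K => a ∈ K).card = (S.card - 1).choose (k - 1) := by
  rw [← card_erase_of_mem ha, ← card_powersetCard]
  refine (card_bij (fun K _ => insert a K) ?_ ?_ ?_).symm
  · intro K hK
    rw [mem_powersetCard] at hK
    have : a ∉ K := fun h => by simpa using hK.1 h
    simp only [mem_filter, mem_powersetCard, card_insert_of_notMem this, mem_insert_self, and_true]
    refine ⟨insert_subset ha (hK.1.trans (erase_subset _ _)), by omega⟩
  · intro K hK L hL h
    rw [mem_powersetCard] at hK hL
    have h1 : a ∉ K := fun h => by simpa using hK.1 h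
    have h2 : a ∉ L := fun h => by simpa using hL.1 h
    rw [← erase_insert h1, h, erase_insert h2]
  · intro K hK
    simp only [mem_filter, mem_powersetCard] at hK
    refine ⟨K.erase a, ?_, insert_erase hK.2⟩
    rw [mem_powersetCard, card_erase_of_mem hK.2]
    exact ⟨erase_subset_erase _ hK.1.1, by omega⟩

section claw
variable [Fintype V] {I : Type*} [Fintype I] {G : SimpleGraph V} {c : V} {x y : I → V}

theorem mem_ind (h : ClawData G c x y) (r : ℕ) (A : Finset V) :
    A ∈ indepSetsSize G r ↔ (∀ i, x i ∈ A → y i ∉ A) ∧ (c ∈ A → ∀ i, x i ∉ A) ∧ A.card = r := by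
  simp only [indepSetsSize, indepSets, mem_filter, mem_univ, true_and, ← and_assoc]
  refine and_congr_left fun _ => ?_
  constructor
  · intro H
    exact ⟨fun i h1 h2 => H _ h1 _ h2 (h.adjxy i), fun h1 i h2 => H _ h1 _ h2 (h.adjc i)⟩
  · rintro ⟨H1, H2⟩ u hu v hv huv
    rcases h.only u v huv with ⟨rfl, i, rfl⟩ | ⟨rfl, i, rfl⟩ | ⟨i, rfl, rfl⟩ | ⟨i, rfl, rfl⟩
    · exact H2 hu i hv
    · exact H2 hv i hu
    · exact H1 i hu hv
    · exact H1 i hv hu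

theorem swap_mem (h : ClawData G c x y) (r : ℕ) (A : Finset V) (hA : A ∈ indepSetsSize G r)
    (i : I) (hi : x i ∈ A) : insert (y i) (A.erase (x i)) ∈ indepSetsSize G r := by
  rw [mem_ind h] at hA ⊢
  obtain ⟨h1, h2, h3⟩ := hA
  have hy := h1 i hi
  have hc : c ∉ A := fun hc => h2 hc i hi
  refine ⟨?_, ?_, ?_⟩
  · intro j hj hj'
    simp only [mem_insert, mem_erase] at hj hj'
    rcases hj with hj | ⟨hj, hj2⟩
    · exact h.xy _ _ hj
    · rcases hj' with hj' | ⟨_, hj'⟩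
      · exact hj (by rw [h.yinj hj'])
      · exact h1 j hj2 hj'
  · intro hc'
    simp only [mem_insert, mem_erase] at hc'
    rcases hc' with hc' | ⟨_, hc'⟩
    · exact absurd hc'.symm (h.yc i)
    · exact absurd hc' hc
  · rw [card_insert_of_notMem (by simp [hy]), card_erase_of_mem hi, h3]
    have : 0 < A.card := card_pos.2 ⟨_, hi⟩
    omega

theorem compress (h : ClawData G c x y) (r : ℕ) : ∀ (m : ℕ) (ℱ : Finset (Finset V)),
    ∑ A ∈ ℱ, (A ∩ univ.image x).card = m →
    ℱ ⊆ indepSetsSize G r → PairwiseIntersecting ℱ →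
    ∃ ℱ' ⊆ indepSetsSize G r, PairwiseIntersecting ℱ' ∧ ℱ'.card = ℱ.card ∧
      (∀ A, c ∈ A → (A ∈ ℱ' ↔ A ∈ ℱ)) ∧
      ∀ A ∈ ℱ', ∀ i, x i ∈ A → insert (y i) (A.erase (x i)) ∈ ℱ' := by
  intro m
  induction m using Nat.strong_induction_on with
  | _ m ih =>
  intro ℱ hm hℱ hint
  by_cases hst : ∀ A ∈ ℱ, ∀ i, x i ∈ A → insert (y i) (A.erase (x i)) ∈ ℱ
  · exact ⟨ℱ, hℱ, hint, rfl, fun _ _ => Iff.rfl, hst⟩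
  push Not at hst
  obtain ⟨A₀, hA₀, i, hi₀, hA₀'⟩ := hst
  let s : Finset V → Finset V := fun A => insert (y i) (A.erase (x i))
  let f : Finset V → Finset V := fun A => if x i ∈ A ∧ s A ∉ ℱ then s A else A
  have hxy := h.xy i i
  have hy : ∀ A ∈ ℱ, x i ∈ A → y i ∉ A := fun A hA => ((mem_ind h r A).1 (hℱ hA)).1 i
  have hc : ∀ A ∈ ℱ, x i ∈ A → c ∉ A := fun A hA h1 h2 => ((mem_ind h r A).1 (hℱ hA)).2.1 h2 i h1
  have hsinv : ∀ A ∈ ℱ, x i ∈ A → insert (x i) ((s A).erase (y i)) = A := by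
    intro A hA hx
    have := hy A hA hx
    simp only [s]
    rw [erase_insert (by simp [this]), insert_erase hx]
  have hf1 : ∀ A, x i ∈ A → s A ∉ ℱ → f A = s A := fun A h1 h2 => if_pos ⟨h1, h2⟩
  have hf2 : ∀ A, ¬ (x i ∈ A ∧ s A ∉ ℱ) → f A = A := fun A h1 => if_neg h1
  have hinj : Set.InjOn f ℱ := by
    intro A hA B hB hAB
    rw [mem_coe] at hA hB
    by_cases h1 : x i ∈ A ∧ s A ∉ ℱ <;> by_cases h2 : x i ∈ B ∧ s B ∉ ℱ
    · rw [hf1 A h1.1 h1.2, hf1 B h2.1 h2.2] at hAB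
      rw [← hsinv A hA h1.1, hAB, hsinv B hB h2.1]
    · rw [hf1 A h1.1 h1.2, hf2 B h2] at hAB
      exact absurd (hAB ▸ hB) h1.2
    · rw [hf2 A h1, hf1 B h2.1 h2.2] at hAB
      exact absurd (hAB ▸ hA) h2.2
    · rwa [hf2 A h1, hf2 B h2] at hAB
  have hscard : ∀ A, x i ∈ A → (s A ∩ univ.image x).card < (A ∩ univ.image x).card := by
    intro A hA
    apply card_lt_card
    rw [Finset.ssubset_iff_of_subset]
    · exact ⟨x i, by simp [hA], by simp [s, hxy]⟩
    · intro v hv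
      simp only [s, mem_inter, mem_insert, mem_erase, mem_image, mem_univ, true_and] at hv ⊢
      obtain ⟨hv1, j, rfl⟩ := hv
      rcases hv1 with hv1 | hv1
      · exact absurd hv1 (h.xy j i)
      · exact ⟨hv1.2, j, rfl⟩
  have hfsum : ∑ A ∈ ℱ.image f, (A ∩ univ.image x).card < m := by
    rw [sum_image hinj, ← hm]
    apply sum_lt_sum
    · intro A hA
      by_cases h1 : x i ∈ A ∧ s A ∉ ℱ
      · rw [hf1 A h1.1 h1.2]; exact (hscard A h1.1).le
      · rw [hf2 A h1]
    · exact ⟨A₀, hA₀, by rw [hf1 A₀ hi₀ hA₀']; exact hscard A₀ hi₀⟩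
  have hfsub : ℱ.image f ⊆ indepSetsSize G r := by
    intro B hB
    obtain ⟨A, hA, rfl⟩ := mem_image.1 hB
    by_cases h1 : x i ∈ A ∧ s A ∉ ℱ
    · rw [hf1 A h1.1 h1.2]; exact swap_mem h r A (hℱ hA) i h1.1
    · rw [hf2 A h1]; exact hℱ hA
  have hmix : ∀ A ∈ ℱ, ∀ B ∈ ℱ, (x i ∈ A ∧ s A ∉ ℱ) → ¬ (x i ∈ B ∧ s B ∉ ℱ) →
      (s A ∩ B).Nonempty := by
    intro A hA B hB h1 h2
    by_cases hxB : x i ∈ B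
    · have hsB : s B ∈ ℱ := by by_contra hh; exact h2 ⟨hxB, hh⟩
      obtain ⟨z, hz⟩ := hint A hA _ hsB
      have hyA := hy A hA h1.1
      refine ⟨z, ?_⟩
      simp only [s, mem_inter, mem_insert, mem_erase] at hz ⊢
      obtain ⟨hz1, hz2⟩ := hz
      rcases hz2 with rfl | hz2
      · exact absurd hz1 hyA
      · exact ⟨Or.inr ⟨hz2.1, hz1⟩, hz2.2⟩
    · obtain ⟨z, hz⟩ := hint A hA B hB
      refine ⟨z, ?_⟩
      simp only [s, mem_inter, mem_insert, mem_erase] at hz ⊢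
      exact ⟨Or.inr ⟨fun hh => hxB (hh ▸ hz.2), hz.1⟩, hz.2⟩
  have hfint : PairwiseIntersecting (ℱ.image f) := by
    intro A' hA' B' hB'
    obtain ⟨A, hA, rfl⟩ := mem_image.1 hA'
    obtain ⟨B, hB, rfl⟩ := mem_image.1 hB'
    by_cases h1 : x i ∈ A ∧ s A ∉ ℱ <;> by_cases h2 : x i ∈ B ∧ s B ∉ ℱ
    · rw [hf1 A h1.1 h1.2, hf1 B h2.1 h2.2]
      exact ⟨y i, by simp [s]⟩
    · rw [hf1 A h1.1 h1.2, hf2 B h2]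
      exact hmix A hA B hB h1 h2
    · rw [hf2 A h1, hf1 B h2.1 h2.2, inter_comm]
      exact hmix B hB A hA h2 h1
    · rw [hf2 A h1, hf2 B h2]; exact hint A hA B hB
  obtain ⟨ℱ', h1, h2, h3, h4, h5⟩ := ih _ hfsum (ℱ.image f) rfl hfsub hfint
  refine ⟨ℱ', h1, h2, by rw [h3, card_image_of_injOn hinj], ?_, h5⟩
  intro A hcA
  rw [h4 A hcA, mem_image]
  constructor
  · rintro ⟨B, hB, rfl⟩
    by_cases h1 : x i ∈ B ∧ s B ∉ ℱ
    · rw [hf1 B h1.1 h1.2] at hcA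
      simp only [s, mem_insert, mem_erase] at hcA
      rcases hcA with hcA | hcA
      · exact absurd hcA.symm (h.yc i)
      · exact absurd hcA.2 (hc B hB h1.1)
    · rw [hf2 B h1]; exact hB
  · intro hA
    exact ⟨A, hA, hf2 A fun hh => hc A hA hh.1 hcA⟩

theorem stable_inter (h : ClawData G c x y) (r : ℕ) (ℱ : Finset (Finset V))
    (hℱ : ℱ ⊆ indepSetsSize G r) (hint : PairwiseIntersecting ℱ)
    (hst : ∀ A ∈ ℱ, ∀ i, x i ∈ A → insert (y i) (A.erase (x i)) ∈ ℱ) (B : Finset V) (hB : B ∈ ℱ) :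
    ∀ (m : ℕ) (A : Finset V), (A ∩ univ.image x).card = m → A ∈ ℱ →
      ∃ v, v ∈ A ∧ v ∈ B ∧ ∀ i, v ≠ x i := by
  intro m
  induction m using Nat.strong_induction_on with
  | _ m ih =>
  intro A hm hA
  obtain ⟨z, hz⟩ := hint A hA B hB
  rw [mem_inter] at hz
  by_cases hzx : ∀ i, z ≠ x i
  · exact ⟨z, hz.1, hz.2, hzx⟩
  push Not at hzx
  obtain ⟨i, rfl⟩ := hzx
  have hlt : ((insert (y i) (A.erase (x i))) ∩ univ.image x).card < m := by
    rw [← hm]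
    apply card_lt_card
    rw [Finset.ssubset_iff_of_subset]
    · exact ⟨x i, by simp [hz.1], by simp [h.xy i i]⟩
    · intro v hv
      simp only [mem_inter, mem_insert, mem_erase, mem_image, mem_univ, true_and] at hv ⊢
      obtain ⟨hv1, j, rfl⟩ := hv
      rcases hv1 with hv1 | hv1
      · exact absurd hv1 (h.xy j i)
      · exact ⟨hv1.2, j, rfl⟩
  obtain ⟨v, hv1, hv2, hv3⟩ := ih _ hlt _ rfl (hst A hA i hz.1)
  refine ⟨v, ?_, hv2, hv3⟩
  simp only [mem_insert, mem_erase] at hv1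
  rcases hv1 with rfl | hv1
  · exact absurd hv2 (((mem_ind h r B).1 (hℱ hB)).1 i hz.2)
  · exact hv1.2

/-- The part of `A` outside the range of `x`. -/
noncomputable def trc (x : I → V) (A : Finset V) : Finset V := A.filter fun v => ∀ i, v ≠ x i

theorem mem_trc {A : Finset V} {v : V} : v ∈ trc x A ↔ v ∈ A ∧ ∀ i, v ≠ x i := by
  simp [trc]

theorem fiber_card (h : ClawData G c x y) (r : ℕ) (K : Finset V) (hK : K ⊆ univ.image y)
    (hr : K.card ≤ r) :
    ((indepSetsSize G r).filter fun A => trc x A = K).card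
      = (Fintype.card I - K.card).choose (r - K.card) := by
  let J : Finset I := univ.filter fun i => y i ∉ K
  have hJ : J.card = Fintype.card I - K.card := by
    have h1 : (univ.filter fun i => y i ∈ K).card = K.card := by
      rw [← card_image_of_injective _ h.yinj]
      congr 1
      ext v
      simp only [mem_image, mem_filter, mem_univ, true_and]
      constructor
      · rintro ⟨i, hi, rfl⟩; exact hi
      · intro hv
        obtain ⟨i, -, rfl⟩ := mem_image.1 (hK hv)
        exact ⟨i, hv, rfl⟩
    have h2 := card_filter_add_card_filter_not (s := (univ : Finset I)) (fun i => y i ∈ K)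
    rw [card_univ] at h2
    simp only [J]
    omega
  rw [← hJ, ← card_image_of_injective J h.xinj, ← card_powersetCard]
  have hKx : ∀ v ∈ K, ∀ i, v ≠ x i := by
    intro v hv i
    obtain ⟨j, -, rfl⟩ := mem_image.1 (hK hv)
    exact (h.xy i j).symm
  have hKc : c ∉ K := by
    intro hv
    obtain ⟨j, -, hj⟩ := mem_image.1 (hK hv)
    exact h.yc j hj
  symm
  have hdis : ∀ R ∈ powersetCard (r - K.card) (J.image x), ∀ v ∈ R, ∃ i, v = x i ∧ y i ∉ K := by
    intro R hR v hv
    obtain ⟨i, hi, rfl⟩ := mem_image.1 ((mem_powersetCard.1 hR).1 hv)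
    exact ⟨i, rfl, (mem_filter.1 hi).2⟩
  refine card_bij (fun R _ => K ∪ R) ?_ ?_ ?_
  · intro R hR
    have hR' := hdis R hR
    have hd : Disjoint K R := by
      rw [Finset.disjoint_left]
      intro v hv hv'
      obtain ⟨i, rfl, -⟩ := hR' v hv'
      exact hKx _ hv i rfl
    rw [mem_filter, mem_ind h]
    refine ⟨⟨?_, ?_, ?_⟩, ?_⟩
    · intro i hi hi'
      rw [mem_union] at hi hi'
      rcases hi with hi | hi
      · exact hKx _ hi i rfl
      · obtain ⟨j, hj, hj'⟩ := hR' _ hi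
        have := h.xinj hj
        subst this
        rcases hi' with hi' | hi'
        · exact hj' hi'
        · obtain ⟨k, hk, -⟩ := hR' _ hi'
          exact h.xy _ _ hk.symm
    · intro hc
      rw [mem_union] at hc
      rcases hc with hc | hc
      · exact absurd hc hKc
      · obtain ⟨k, hk, -⟩ := hR' _ hc
        exact absurd hk.symm (h.xc k)
    · rw [card_union_of_disjoint hd, (mem_powersetCard.1 hR).2]
      omega
    · ext v
      rw [mem_trc, mem_union]
      constructor
      · rintro ⟨hv | hv, hv'⟩
        · exact hv
        · obtain ⟨k, hk, -⟩ := hR' _ hv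
          exact absurd hk (hv' k)
      · intro hv
        exact ⟨Or.inl hv, hKx v hv⟩
  · intro R hR S hS hRS
    have key : ∀ R ∈ powersetCard (r - K.card) (J.image x), (K ∪ R) \ K = R := by
      intro R hR
      rw [union_sdiff_left, Finset.sdiff_eq_self_iff_disjoint, Finset.disjoint_left]
      intro v hv' hv
      obtain ⟨i, rfl, -⟩ := hdis R hR v hv'
      exact hKx _ hv i rfl
    have : (K ∪ R) \ K = (K ∪ S) \ K := congrArg (· \ K) hRS
    rwa [key R hR, key S hS] at this
  · intro A hA
    rw [mem_filter, mem_ind h] at hA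
    obtain ⟨⟨h1, h2, h3⟩, h4⟩ := hA
    have hKA : K ⊆ A := by rw [← h4]; exact filter_subset _ _
    refine ⟨A \ K, ?_, union_sdiff_of_subset hKA⟩
    rw [mem_powersetCard, card_sdiff_of_subset hKA, h3]
    refine ⟨?_, rfl⟩
    intro v hv
    rw [mem_sdiff] at hv
    by_contra hvx
    apply hv.2
    rw [← h4, mem_trc]
    refine ⟨hv.1, ?_⟩
    rintro i rfl
    apply hvx
    refine mem_image_of_mem _ (mem_filter.2 ⟨mem_univ _, fun hy => ?_⟩)
    exact h1 i hv.1 (hKA hy)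

/-- The bound on level `k`. -/
def lvl (n r k : ℕ) : ℕ :=
  if k = r then n.choose (r - 1) else (n - 1).choose (k - 1) * (n - k).choose (r - k)

theorem trc_top (h : ClawData G c x y) (r : ℕ) (A : Finset V) (hA : A ∈ indepSetsSize G r)
    (hk : (trc x A).card = r) : trc x A = A := by
  have hs : trc x A ⊆ A := filter_subset _ _
  apply eq_of_subset_of_card_le hs
  rw [((mem_ind h r A).1 hA).2.2, hk]

theorem trc_low (h : ClawData G c x y) (r : ℕ) (A : Finset V) (hA : A ∈ indepSetsSize G r)
    (hk : (trc x A).card < r) : trc x A ⊆ univ.image y := by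
  obtain ⟨h1, h2, h3⟩ := (mem_ind h r A).1 hA
  have hc : c ∉ A := by
    intro hc
    have : trc x A = A := filter_true_of_mem fun v hv i hi => h2 hc i (hi ▸ hv)
    rw [this] at hk
    omega
  intro v hv
  rw [mem_trc] at hv
  rcases h.cover v with rfl | ⟨i, rfl⟩ | ⟨i, rfl⟩
  · exact absurd hv.1 hc
  · exact absurd rfl (hv.2 i)
  · simp

theorem trc_sub (h : ClawData G c x y) (A : Finset V) :
    trc x A ⊆ insert c (univ.image y) := by
  intro v hv
  rw [mem_trc] at hv
  rcases h.cover v with rfl | ⟨i, rfl⟩ | ⟨i, rfl⟩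
  · simp
  · exact absurd rfl (hv.2 i)
  · simp

theorem card_Y (h : ClawData G c x y) : (univ.image y).card = Fintype.card I := by
  rw [card_image_of_injective _ h.yinj, card_univ]

theorem card_W (h : ClawData G c x y) : (insert c (univ.image y)).card = Fintype.card I + 1 := by
  rw [card_insert_of_notMem, card_Y h]
  intro hc
  obtain ⟨j, -, hj⟩ := mem_image.1 hc
  exact h.yc j hj

theorem level_le (h : ClawData G c x y) (r k : ℕ) (hk1 : 1 ≤ k) (hkr : k ≤ r)
    (hn : 2 * r ≤ Fintype.card I + 1) (ℱ : Finset (Finset V)) (hℱ : ℱ ⊆ indepSetsSize G r)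
    (hint : ∀ A ∈ ℱ, ∀ B ∈ ℱ, (trc x A ∩ trc x B).Nonempty) :
    (ℱ.filter fun A => (trc x A).card = k).card ≤ lvl (Fintype.card I) r k := by
  unfold lvl
  split_ifs with hk
  · subst hk
    have := ekr_on (insert c (univ.image y)) k (ℱ.filter fun A => (trc x A).card = k) ?_ ?_ ?_
    · rw [card_W h] at this
      exact this
    · intro A hA
      rw [mem_filter] at hA
      rw [mem_powersetCard]
      have e := trc_top h k A (hℱ hA.1) hA.2
      refine ⟨?_, ?_⟩
      · rw [← e]; exact trc_sub h A
      · rw [← e]; exact hA.2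
    · intro A hA B hB
      rw [mem_filter] at hA hB
      rw [← trc_top h k A (hℱ hA.1) hA.2, ← trc_top h k B (hℱ hB.1) hB.2]
      exact hint A hA.1 B hB.1
    · rw [card_W h]; exact hn
  · set 𝒢 := ℱ.filter fun A => (trc x A).card = k with h𝒢
    have hlow : ∀ A ∈ 𝒢, trc x A ⊆ univ.image y := by
      intro A hA
      rw [h𝒢, mem_filter] at hA
      exact trc_low h r A (hℱ hA.1) (by omega)
    have h1 : (𝒢.image (trc x)).card ≤ (Fintype.card I - 1).choose (k - 1) := by
      rw [← card_Y h]
      apply ekr_on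
      · intro K hK
        obtain ⟨A, hA, rfl⟩ := mem_image.1 hK
        rw [mem_powersetCard]
        exact ⟨hlow A hA, (mem_filter.1 hA).2⟩
      · intro K hK L hL
        obtain ⟨A, hA, rfl⟩ := mem_image.1 hK
        obtain ⟨B, hB, rfl⟩ := mem_image.1 hL
        exact hint A (mem_filter.1 hA).1 B (mem_filter.1 hB).1
      · rw [card_Y h]; omega
    have h2 := card_le_mul_card_image (f := trc x) 𝒢 ((Fintype.card I - k).choose (r - k)) ?_
    · rw [mul_comm]
      exact h2.trans (Nat.mul_le_mul_left _ h1)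
    · intro K hK
      obtain ⟨A, hA, rfl⟩ := mem_image.1 hK
      have hAk := (mem_filter.1 hA).2
      have := fiber_card h r (trc x A) (hlow A hA) (by omega)
      rw [hAk] at this
      rw [← this]
      apply card_le_card
      intro B hB
      rw [mem_filter] at hB ⊢
      exact ⟨hℱ (mem_filter.1 hB.1).1, hB.2⟩

theorem level_star (h : ClawData G c x y) (r k : ℕ) (hk1 : 1 ≤ k) (hkr : k ≤ r) (j : I) :
    lvl (Fintype.card I) r k ≤
      ((ekrStar G r (y j)).filter fun A => (trc x A).card = k).card := by
  unfold lvl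
  split_ifs with hk
  · subst hk
    have := card_star_on (insert c (univ.image y)) (y j) (by simp) k hk1
    rw [card_W h, Nat.add_sub_cancel] at this
    rw [← this]
    apply card_le_card
    intro K hK
    rw [mem_filter, mem_powersetCard] at hK
    obtain ⟨⟨h1, h2⟩, h3⟩ := hK
    have hKx : ∀ v ∈ K, ∀ i, v ≠ x i := by
      intro v hv i
      rcases mem_insert.1 (h1 hv) with rfl | hv'
      · exact (h.xc i).symm
      · obtain ⟨l, -, rfl⟩ := mem_image.1 hv'
        exact (h.xy i l).symm
    rw [mem_filter, ekrStar, mem_filter, mem_ind h]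
    refine ⟨⟨⟨fun i hi => absurd rfl (hKx _ hi i), fun _ i hi => hKx _ hi i rfl, h2⟩, h3⟩, ?_⟩
    have : trc x K = K := filter_true_of_mem hKx
    rw [this, h2]
  · have h0 := card_star_on (univ.image y) (y j) (by simp) k hk1
    rw [card_Y h] at h0
    rw [← h0]
    set 𝒦 := (powersetCard k (univ.image y)).filter fun K => y j ∈ K
    have hsub : 𝒦.biUnion (fun K => (indepSetsSize G r).filter fun A => trc x A = K) ⊆
        (ekrStar G r (y j)).filter fun A => (trc x A).card = k := by
      intro A hA
      obtain ⟨K, hK, hA⟩ := mem_biUnion.1 hA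
      rw [mem_filter] at hA
      obtain ⟨hA, rfl⟩ := hA
      rw [mem_filter, mem_powersetCard] at hK
      rw [mem_filter, ekrStar, mem_filter]
      exact ⟨⟨hA, (mem_trc.1 hK.2).1⟩, hK.1.2⟩
    refine le_trans (le_of_eq ?_) (card_le_card hsub)
    rw [card_biUnion]
    · rw [sum_congr rfl (g := fun _ => (Fintype.card I - k).choose (r - k)), sum_const, smul_eq_mul]
      intro K hK
      rw [mem_filter, mem_powersetCard] at hK
      rw [fiber_card h r K hK.1.1 (by omega), hK.1.2]
    · intro K _ L _ hKL
      change Disjoint (filter _ _) (filter _ _)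
      rw [Finset.disjoint_left]
      intro A hA hA'
      rw [mem_filter] at hA hA'
      exact hKL (hA.2.symm.trans hA'.2)

theorem claw_core (h : ClawData G c x y) (r : ℕ) (hr : 2 ≤ r)
    (hn : 2 * r ≤ Fintype.card I + 1) : IsStrictEKR G r := by
  have hsplit : ∀ ℱ ⊆ indepSetsSize G r, (∀ A ∈ ℱ, (trc x A).Nonempty) →
      ℱ.card = ∑ k ∈ Icc 1 r, (ℱ.filter fun A => (trc x A).card = k).card := by
    intro ℱ hℱ hne
    apply card_eq_sum_card_fiberwise
    intro A hA
    have h1 := card_pos.2 (hne A hA)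
    have h2 : (trc x A).card ≤ A.card := card_le_card (filter_subset _ _)
    rw [((mem_ind h r A).1 (hℱ hA)).2.2] at h2
    simp only [coe_Icc, Set.mem_Icc]
    exact ⟨h1, h2⟩
  have hstarsub : ∀ v, ekrStar G r v ⊆ indepSetsSize G r := fun v => filter_subset _ _
  have hstarint : ∀ v, PairwiseIntersecting (ekrStar G r v) := by
    intro v A hA B hB
    exact ⟨v, mem_inter.2 ⟨(mem_filter.1 hA).2, (mem_filter.1 hB).2⟩⟩
  have hstar : ∀ j, ∑ k ∈ Icc 1 r, lvl (Fintype.card I) r k ≤ (ekrStar G r (y j)).card := by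
    intro j
    rw [hsplit _ (hstarsub (y j))]
    · apply sum_le_sum
      intro k hk
      rw [mem_Icc] at hk
      exact level_star h r k hk.1 hk.2 j
    · intro A hA
      exact ⟨y j, mem_trc.2 ⟨(mem_filter.1 hA).2, fun i => (h.xy i j).symm⟩⟩
  -- compressed family
  have hcomp : ∀ 𝒜 ⊆ indepSetsSize G r, PairwiseIntersecting 𝒜 →
      ∃ ℱ ⊆ indepSetsSize G r, ℱ.card = 𝒜.card ∧ (∀ A, c ∈ A → (A ∈ ℱ ↔ A ∈ 𝒜)) ∧
      ∀ A ∈ ℱ, ∀ B ∈ ℱ, (trc x A ∩ trc x B).Nonempty := by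
    intro 𝒜 h1 h2
    obtain ⟨ℱ, g1, g2, g3, g4, g5⟩ := compress h r _ 𝒜 rfl h1 h2
    refine ⟨ℱ, g1, g3, g4, fun A hA B hB => ?_⟩
    obtain ⟨v, hv1, hv2, hv3⟩ := stable_inter h r ℱ g1 g2 g5 B hB _ A rfl hA
    exact ⟨v, mem_inter.2 ⟨mem_trc.2 ⟨hv1, hv3⟩, mem_trc.2 ⟨hv2, hv3⟩⟩⟩
  have hne : ∀ ℱ : Finset (Finset V), (∀ A ∈ ℱ, ∀ B ∈ ℱ, (trc x A ∩ trc x B).Nonempty) →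
      ∀ A ∈ ℱ, (trc x A).Nonempty := by
    intro ℱ hℱ A hA
    have := hℱ A hA A hA
    rwa [inter_self] at this
  have hI : Nonempty I := by
    rw [← Fintype.card_pos_iff]; omega
  obtain ⟨j₀⟩ := hI
  refine ⟨?_, ?_⟩
  · intro 𝒜 h1 h2
    refine ⟨y j₀, ?_⟩
    obtain ⟨ℱ, g1, g2, g3, g4⟩ := hcomp 𝒜 h1 h2
    refine le_trans ?_ (hstar j₀)
    rw [← g2, hsplit ℱ g1 (hne ℱ g4)]
    apply sum_le_sum
    intro k hk
    rw [mem_Icc] at hk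
    exact level_le h r k hk.1 hk.2 hn ℱ g1 g4
  · intro 𝒜 h1 h2 hmax
    obtain ⟨ℱ, g1, g2, g3, g4⟩ := hcomp 𝒜 h1 h2
    have hge : ∀ v, (ekrStar G r v).card ≤ 𝒜.card := fun v => hmax _ (hstarsub v) (hstarint v)
    have hex : (ℱ.filter fun A => (trc x A).card = 1).Nonempty := by
      by_contra hemp
      rw [not_nonempty_iff_eq_empty] at hemp
      have hlt : ℱ.card < ∑ k ∈ Icc 1 r, lvl (Fintype.card I) r k := by
        rw [hsplit ℱ g1 (hne ℱ g4)]
        apply sum_lt_sum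
        · intro k hk
          rw [mem_Icc] at hk
          exact level_le h r k hk.1 hk.2 hn ℱ g1 g4
        · refine ⟨1, by rw [mem_Icc]; omega, ?_⟩
          rw [hemp, card_empty, lvl, if_neg (by omega)]
          apply Nat.mul_pos <;> apply Nat.choose_pos <;> omega
      have a1 := hstar j₀
      have a2 := hge (y j₀)
      omega
    obtain ⟨A, hA⟩ := hex
    rw [mem_filter] at hA
    obtain ⟨v, hv⟩ := card_eq_one.1 hA.2
    have hvY := trc_low h r A (g1 hA.1) (by omega)
    rw [hv, singleton_subset_iff] at hvY
    obtain ⟨j, -, rfl⟩ := mem_image.1 hvY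
    have hFsub : ℱ ⊆ ekrStar G r (y j) := by
      intro B hB
      rw [ekrStar, mem_filter]
      refine ⟨g1 hB, ?_⟩
      obtain ⟨w, hw⟩ := g4 A hA.1 B hB
      rw [hv, mem_inter, mem_singleton] at hw
      obtain ⟨rfl, hw⟩ := hw
      exact (mem_trc.1 hw).1
    have hFeq : ℱ = ekrStar G r (y j) :=
      eq_of_subset_of_card_le hFsub (by rw [g2]; exact hge _)
    refine ⟨y j, ?_⟩
    apply eq_of_subset_of_card_le _ (hge _)
    intro B hB
    rw [ekrStar, mem_filter]
    refine ⟨h1 hB, ?_⟩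
    by_contra hyB
    obtain ⟨b1, b2, b3⟩ := (mem_ind h r B).1 (h1 hB)
    by_cases hcB : c ∈ B
    · have := (g3 B hcB).2 hB
      rw [hFeq, ekrStar, mem_filter] at this
      exact hyB this.2
    -- choose a set avoiding `B`
    have hcard : r - 2 ≤ ((univ.image y).erase (y j) \ B).card := by
      have e1 := le_card_sdiff B ((univ.image y).erase (y j))
      rw [card_erase_of_mem (by simp), card_Y h, b3] at e1
      omega
    obtain ⟨S, hS1, hS2⟩ := exists_subset_card_eq hcard
    have hSy : ∀ v ∈ S, v ≠ y j ∧ (∃ i, y i = v) ∧ v ∉ B := by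
      intro v hv
      have := hS1 hv
      simpa [and_assoc] using this
    have hyS : y j ∉ S := fun hh => (hSy _ hh).1 rfl
    have hcS : c ∉ insert (y j) S := by
      intro hh
      rcases mem_insert.1 hh with hh | hh
      · exact h.yc j hh.symm
      · obtain ⟨-, ⟨i, hi⟩, -⟩ := hSy _ hh
        exact h.yc i hi
    have hD : insert c (insert (y j) S) ∈ ekrStar G r (y j) := by
      rw [ekrStar, mem_filter, mem_ind h]
      have hnx : ∀ i, x i ∉ insert c (insert (y j) S) := by
        intro i hi
        rw [mem_insert, mem_insert] at hi
        rcases hi with hi | hi | hi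
        · exact h.xc i hi
        · exact h.xy i j hi
        · obtain ⟨-, ⟨l, hl⟩, -⟩ := hSy _ hi
          exact h.xy i l hl.symm
      refine ⟨⟨fun i hi => absurd hi (hnx i), fun _ => hnx, ?_⟩, by simp⟩
      rw [card_insert_of_notMem hcS, card_insert_of_notMem hyS, hS2]
      omega
    rw [← hFeq, g3 _ (mem_insert_self _ _)] at hD
    obtain ⟨w, hw⟩ := h2 _ hD B hB
    rw [mem_inter, mem_insert, mem_insert] at hw
    obtain ⟨rfl | rfl | hw1, hw2⟩ := hw
    · exact hcB hw2
    · exact hyB hw2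
    · exact (hSy _ hw1).2.2 hw2

theorem claw_mu (h : ClawData G c x y) : graphMu G ≤ max 1 (Fintype.card I) := by
  rcases isEmpty_or_nonempty I with hI | ⟨⟨i₀⟩⟩
  · have huniv : ∀ v, v = c := by
      intro v
      rcases h.cover v with h | ⟨i, -⟩ | ⟨i, -⟩
      · exact h
      · exact isEmptyElim i
      · exact isEmptyElim i
    refine le_trans (Nat.sInf_le ⟨{c}, ?_, ?_, rfl⟩) (by simp)
    · simp [indepSets]
    · intro B _ hB
      refine Subset.antisymm ?_ hB
      intro v _
      simp [huniv v]
  · refine le_trans (Nat.sInf_le ⟨univ.image x, ?_, ?_, rfl⟩) ?_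
    · have := (mem_ind h (univ.image x).card (univ.image x)).2 ⟨?_, ?_, rfl⟩
      · exact (mem_filter.1 this).1
      · intro i _ hi
        obtain ⟨j, -, hj⟩ := mem_image.1 hi
        exact h.xy _ _ hj
      · intro hc
        obtain ⟨j, -, hj⟩ := mem_image.1 hc
        exact absurd hj (h.xc j)
    · intro B hB hsub
      refine Subset.antisymm ?_ hsub
      have hB' : ∀ u ∈ B, ∀ v ∈ B, ¬ G.Adj u v := (mem_filter.1 hB).2
      intro v hv
      rcases h.cover v with rfl | ⟨i, rfl⟩ | ⟨i, rfl⟩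
      · exact absurd (h.adjc i₀) (hB' _ hv _ (hsub (by simp)))
      · simp
      · exact absurd (h.adjxy i) (hB' _ (hsub (by simp)) _ hv)
    · rw [card_image_of_injective _ h.xinj, card_univ]
      exact le_max_right _ _

end claw

theorem strict_one [Fintype V] (G : SimpleGraph V) (c : V) : IsStrictEKR G 1 := by
  have hs : ∀ v, ekrStar G 1 v = {{v}} := by
    intro v
    ext A
    simp only [ekrStar, indepSetsSize, indepSets, mem_filter, mem_univ, true_and, mem_singleton]
    constructor
    · rintro ⟨⟨_, h⟩, hv⟩
      obtain ⟨w, rfl⟩ := card_eq_one.1 h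
      rw [mem_singleton.1 hv]
    · rintro rfl
      simp
  have hle : ∀ 𝒜 ⊆ indepSetsSize G 1, PairwiseIntersecting 𝒜 → ∀ v, {v} ∈ 𝒜 → 𝒜 = {{v}} := by
    intro 𝒜 h1 h2 v hv
    ext A
    rw [mem_singleton]
    constructor
    · intro hA
      obtain ⟨w, rfl⟩ := card_eq_one.1 (mem_filter.1 (h1 hA)).2
      obtain ⟨z, hz⟩ := h2 _ hA _ hv
      rw [mem_inter, mem_singleton, mem_singleton] at hz
      rw [← hz.1, hz.2]
    · rintro rfl; exact hv
  have hsing : ∀ 𝒜 ⊆ indepSetsSize G 1, 𝒜.Nonempty → ∃ v, {v} ∈ 𝒜 := by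
    rintro 𝒜 h1 ⟨A, hA⟩
    obtain ⟨w, rfl⟩ := card_eq_one.1 (mem_filter.1 (h1 hA)).2
    exact ⟨w, hA⟩
  refine ⟨?_, ?_⟩
  · intro 𝒜 h1 h2
    rcases 𝒜.eq_empty_or_nonempty with rfl | hne
    · exact ⟨c, by simp⟩
    · obtain ⟨v, hv⟩ := hsing 𝒜 h1 hne
      exact ⟨v, by rw [hs, hle 𝒜 h1 h2 v hv]⟩
  · intro 𝒜 h1 h2 hmax
    have hne : 𝒜.Nonempty := by
      have := hmax (ekrStar G 1 c) (filter_subset _ _) (by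
        rw [hs]; intro A hA B hB
        rw [mem_singleton] at hA hB
        subst hA; subst hB; simp)
      rw [hs, card_singleton] at this
      exact card_pos.1 this
    obtain ⟨v, hv⟩ := hsing 𝒜 h1 hne
    exact ⟨v, by rw [hs, hle 𝒜 h1 h2 v hv]⟩

/-- If `G` is a depth-two claw with `μ(G) ≥ 2r − 1`, then `G` is
strictly `r`-EKR. -/
theorem depthTwoClaw_strictEKR {V : Type*} [Fintype V] (r : ℕ) (hr : 0 < r)
    (G : SimpleGraph V) (root : V) (hG : IsDepthTwoClaw G root)
    (hmu : 2 * r - 1 ≤ graphMu G) :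
    IsStrictEKR G r := by
  rcases Nat.lt_or_ge r 2 with h1 | h2
  · obtain rfl : r = 1 := by omega
    exact strict_one G root
  · obtain ⟨x, y, h⟩ := claw_struct G root hG
    have hm := claw_mu h
    exact claw_core h r h2 (by omega)
end

section
/- Let n and r be positive integers with n ≥ 2r, and let G be an elongated claw with n leaves that has at least one short limb. Then G is r-EKR. -/
open Finset SimpleGraph
open scoped Classical

variable {V : Type*}

/-- independence -/
def Ind {V : Type*} (G : SimpleGraph V) (A : Finset V) : Prop := ∀ x ∈ A, ∀ y ∈ A, ¬ G.Adj x y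

/-- the star inside `S` -/
noncomputable def starIn {V : Type*} (G : SimpleGraph V) (x : V) (S : Finset V) (r : ℕ) :
    Finset (Finset V) :=
  S.powerset.filter fun A => Ind G A ∧ A.card = r ∧ x ∈ A

lemma ekr_on_s2 {V : Type*} (T : Finset V) (r : ℕ) (h : 2 * r ≤ T.card) (𝒜 : Finset (Finset V))
    (h1 : ∀ A ∈ 𝒜, A ⊆ T ∧ A.card = r) (h2 : PairwiseIntersecting 𝒜) :
    𝒜.card ≤ (T.card - 1).choose (r - 1) := by
  let e := T.equivFin
  let g : Finset V → Finset (Fin T.card) := fun A => univ.filter fun i => ((e.symm i : T) : V) ∈ A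
  have hg : ∀ A ⊆ T, (g A).map ((e.symm.toEmbedding).trans (Function.Embedding.subtype _)) = A := by
    intro A hA
    ext a
    simp only [g, Finset.mem_map, mem_filter, mem_univ, true_and]
    constructor
    · rintro ⟨i, hi, rfl⟩
      exact hi
    · intro ha
      exact ⟨e ⟨a, hA ha⟩, by simpa using ha, by simp⟩
  have hcard : (𝒜.image g).card = 𝒜.card := by
    apply card_image_of_injOn
    intro A hA B hB hAB
    rw [← hg A (h1 A hA).1, ← hg B (h1 B hB).1]
    rw [hAB]
  rw [← hcard]
  apply Finset.erdos_ko_rado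
  · intro A hA B hB hd
    simp only [coe_image, Set.mem_image, mem_coe] at hA hB
    obtain ⟨A, hA, rfl⟩ := hA
    obtain ⟨B, hB, rfl⟩ := hB
    obtain ⟨a, ha⟩ := h2 A hA B hB
    rw [Finset.mem_inter] at ha
    have haT := (h1 A hA).1 ha.1
    refine (Finset.disjoint_left.mp hd) (a := e ⟨a, haT⟩) ?_ ?_
    · simpa [g] using ha.1
    · simpa [g] using ha.2
  · intro A hA
    simp only [coe_image, Set.mem_image, mem_coe] at hA
    obtain ⟨A, hA, rfl⟩ := hA
    have := congrArg card (hg A (h1 A hA).1)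
    rw [card_map] at this
    rw [this, (h1 A hA).2]
  · omega

lemma key_step {V : Type*} (G : SimpleGraph V) (x u v w : V) (S : Finset V) (r : ℕ)
    (hvS : v ∈ S) (hwS : w ∈ S) (hvw : G.Adj v w) (huw : G.Adj u w)
    (huv : u ≠ v)
    (hv : ∀ y ∈ S, G.Adj v y → y = w) (hw : ∀ y ∈ S, G.Adj w y → y = v ∨ y = u)
    (hxv : x ≠ v) (hxw : x ≠ w) 
    (𝒜 : Finset (Finset V)) (h1 : ∀ A ∈ 𝒜, A ⊆ S ∧ Ind G A ∧ A.card = r + 1)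
    (h2 : PairwiseIntersecting 𝒜)
    (ih1 : ∀ 𝒜 : Finset (Finset V), (∀ A ∈ 𝒜, A ⊆ S.erase v ∧ Ind G A ∧ A.card = r + 1) →
      PairwiseIntersecting 𝒜 → 𝒜.card ≤ (starIn G x (S.erase v) (r + 1)).card)
    (ih2 : ∀ 𝒜 : Finset (Finset V), (∀ A ∈ 𝒜, A ⊆ (S.erase v).erase w ∧ Ind G A ∧ A.card = r) →
      PairwiseIntersecting 𝒜 → 𝒜.card ≤ (starIn G x ((S.erase v).erase w) r).card) :
    𝒜.card ≤ (starIn G x S (r + 1)).card := by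
  have hvw' : v ≠ w := hvw.ne
  have huw' : u ≠ w := huw.ne
  -- no member contains both `v` and `w`
  have hno : ∀ A ∈ 𝒜, v ∈ A → w ∉ A := fun A hA hvA hwA => (h1 A hA).2.1 v hvA w hwA hvw
  let E := 𝒜.filter fun A => v ∈ A ∧ (u ∈ A ∨ insert w (A.erase v) ∈ 𝒜)
  let N := 𝒜.filter fun A => ¬ (v ∈ A ∧ (u ∈ A ∨ insert w (A.erase v) ∈ 𝒜))
  let f : Finset V → Finset V := fun A => if v ∈ A then insert w (A.erase v) else A
  have hsplit : E.card + N.card = 𝒜.card := card_filter_add_card_filter_not _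
  have hE : (E.image fun A => A.erase v).card = E.card := by
    apply card_image_of_injOn
    intro A hA B hB hAB
    simp only [E, coe_filter, Set.mem_ofPred_eq] at hA hB
    simp only at hAB
    rw [← insert_erase hA.2.1, hAB, insert_erase hB.2.1]
  have hN : (N.image f).card = N.card := by
    apply card_image_of_injOn
    intro A hA B hB hAB
    simp only [N, coe_filter, Set.mem_ofPred_eq] at hA hB
    simp only [f] at hAB
    by_cases hvA : v ∈ A <;> by_cases hvB : v ∈ B
    · simp only [hvA, hvB, if_true] at hAB
      have hAB' : A.erase v = B.erase v := by
        have e1 : w ∉ A.erase v := fun h => hno A hA.1 hvA (mem_of_mem_erase h)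
        have e2 : w ∉ B.erase v := fun h => hno B hB.1 hvB (mem_of_mem_erase h)
        rw [← erase_insert e1, hAB, erase_insert e2]
      rw [← insert_erase hvA, hAB', insert_erase hvB]
    · simp only [hvA, hvB, if_true, if_false] at hAB
      exact absurd ⟨hvA, Or.inr (hAB ▸ hB.1)⟩ hA.2
    · simp only [hvA, hvB, if_true, if_false] at hAB
      exact absurd ⟨hvB, Or.inr (hAB ▸ hA.1)⟩ hB.2
    · simpa only [hvA, hvB, if_false] using hAB
  have b1 : (N.image f).card ≤ (starIn G x (S.erase v) (r + 1)).card := by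
    apply ih1
    · intro A' hA'
      obtain ⟨A, hA, rfl⟩ := Finset.mem_image.mp hA'
      simp only [N, mem_filter] at hA
      obtain ⟨hAS, hAi, hAc⟩ := h1 A hA.1
      by_cases hvA : v ∈ A
      · have huA : u ∉ A := fun h => hA.2 ⟨hvA, Or.inl h⟩
        have hwA := hno A hA.1 hvA
        simp only [f, hvA, if_true]
        refine ⟨?_, ?_, ?_⟩
        · intro a ha
          grind
        · have hk : ∀ a ∈ A, a ≠ v → ¬ G.Adj w a := by
            intro a ha hav hadj
            rcases hw a (hAS ha) hadj with h | h
            · exact hav h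
            · exact huA (h ▸ ha)
          intro a ha b hb hab
          rw [mem_insert, mem_erase] at ha hb
          rcases ha with rfl | ha <;> rcases hb with rfl | hb
          · exact hab.ne rfl
          · exact hk b hb.2 hb.1 hab
          · exact hk a ha.2 ha.1 hab.symm
          · exact hAi a ha.2 b hb.2 hab
        · rw [card_insert_of_notMem (fun h => hwA (mem_of_mem_erase h)),
            card_erase_of_mem hvA, hAc]
          rfl
      · simp only [f, hvA, if_false]
        exact ⟨fun a ha => mem_erase.mpr ⟨fun h => hvA (h ▸ ha), hAS ha⟩, hAi, hAc⟩
    · intro A' hA' B' hB'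
      obtain ⟨A, hA, rfl⟩ := Finset.mem_image.mp hA'
      obtain ⟨B, hB, rfl⟩ := Finset.mem_image.mp hB'
      simp only [N, mem_filter] at hA hB
      obtain ⟨a, ha⟩ := h2 A hA.1 B hB.1
      rw [Finset.mem_inter] at ha
      by_cases hav : a = v
      · subst hav
        refine ⟨w, ?_⟩
        simp [f, ha.1, ha.2]
      · refine ⟨a, ?_⟩
        simp only [f]
        grind
  have b2 : (E.image fun A => A.erase v).card ≤ (starIn G x ((S.erase v).erase w) r).card := by
    apply ih2
    · intro A' hA'
      obtain ⟨A, hA, rfl⟩ := Finset.mem_image.mp hA'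
      simp only [E, mem_filter] at hA
      obtain ⟨hAS, hAi, hAc⟩ := h1 A hA.1
      have hwA := hno A hA.1 hA.2.1
      refine ⟨?_, ?_, ?_⟩
      · intro a ha
        grind
      · intro a ha b hb
        exact hAi a (mem_of_mem_erase ha) b (mem_of_mem_erase hb)
      · rw [card_erase_of_mem hA.2.1, hAc]
        rfl
    · intro A' hA' B' hB'
      obtain ⟨A, hA, rfl⟩ := Finset.mem_image.mp hA'
      obtain ⟨B, hB, rfl⟩ := Finset.mem_image.mp hB'
      simp only [E, mem_filter] at hA hB
      have hwA := hno A hA.1 hA.2.1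
      have hwB := hno B hB.1 hB.2.1
      have hvA := hA.2.1
      have hvB := hB.2.1
      rcases hA.2.2 with huA | hA3
      · rcases hB.2.2 with huB | hB3
        · exact ⟨u, by simp [huA, huB, huv]⟩
        · obtain ⟨a, ha⟩ := h2 A hA.1 _ hB3
          exact ⟨a, by grind⟩
      · obtain ⟨a, ha⟩ := h2 _ hA3 B hB.1
        exact ⟨a, by grind⟩
  have hstar : (starIn G x (S.erase v) (r + 1)).card + (starIn G x ((S.erase v).erase w) r).card
      ≤ (starIn G x S (r + 1)).card := by
    have hi : ((starIn G x ((S.erase v).erase w) r).image fun A => insert v A).card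
        = (starIn G x ((S.erase v).erase w) r).card := by
      apply card_image_of_injOn
      intro A hA B hB hAB
      simp only [starIn, coe_filter, Set.mem_ofPred_eq, mem_powerset] at hA hB
      have e1 : v ∉ A := fun h => by have := hA.1 h; simp at this
      have e2 : v ∉ B := fun h => by have := hB.1 h; simp at this
      simp only at hAB
      rw [← erase_insert e1, hAB, erase_insert e2]
    rw [← hi, ← card_union_of_disjoint]
    · apply card_le_card
      intro A hA
      rw [mem_union] at hA
      rcases hA with hA | hA
      · simp only [starIn, mem_filter, mem_powerset] at hA ⊢
        exact ⟨hA.1.trans (erase_subset _ _), hA.2⟩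
      · obtain ⟨B, hB, rfl⟩ := Finset.mem_image.mp hA
        simp only [starIn, mem_filter, mem_powerset] at hB ⊢
        obtain ⟨hBS, hBi, hBc, hxB⟩ := hB
        have e1 : v ∉ B := fun h => by have := hBS h; simp at this
        have e2 : w ∉ B := fun h => by have := hBS h; simp at this
        have hBS' : B ⊆ S := fun a ha => by have := hBS ha; simp at this; exact this.2.2
        refine ⟨?_, ?_, ?_, ?_⟩
        · exact insert_subset hvS hBS'
        · have hk : ∀ a ∈ B, ¬ G.Adj v a := by
            intro a ha hadj
            exact e2 (hv a (hBS' ha) hadj ▸ ha)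
          intro a ha b hb hab
          rw [mem_insert] at ha hb
          rcases ha with rfl | ha <;> rcases hb with rfl | hb
          · exact hab.ne rfl
          · exact hk b hb hab
          · exact hk a ha hab.symm
          · exact hBi a ha b hb hab
        · rw [card_insert_of_notMem e1, hBc]
        · exact mem_insert_of_mem hxB
    · rw [Finset.disjoint_left]
      intro A hA hA'
      obtain ⟨B, hB, rfl⟩ := Finset.mem_image.mp hA'
      simp only [starIn, mem_filter, mem_powerset] at hA
      have := hA.1 (mem_insert_self v B)
      simp at this
  omega

lemma main_ind {V : Type*} (G : SimpleGraph V) (c x : V) (p : V → V) (h : V → ℕ)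
    (hadj : ∀ u v, G.Adj u v ↔ (u ≠ c ∧ p u = v) ∨ (v ≠ c ∧ p v = u))
    (hh : ∀ v, v ≠ c → h (p v) < h v)
    (hinj : ∀ u v, u ≠ c → v ≠ c → p u ≠ c → p u = p v → u = v)
    (hxc : x ≠ c) (hpx : p x = c) (hx : ∀ v, v ≠ c → p v ≠ x) :
    ∀ k, ∀ S : Finset V, S.card ≤ k → c ∈ S → x ∈ S → (∀ v ∈ S, v ≠ c → p v ∈ S) →
    ∀ r, 1 ≤ r → (r = 1 ∨ 2 * r ≤ (S.filter fun y => y ≠ c ∧ p y = c).card) →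
    ∀ 𝒜 : Finset (Finset V), (∀ A ∈ 𝒜, A ⊆ S ∧ Ind G A ∧ A.card = r) →
      PairwiseIntersecting 𝒜 → 𝒜.card ≤ (starIn G x S r).card := by
  intro k
  induction k with
  | zero =>
    intro S hS hc
    rw [Nat.le_zero, card_eq_zero] at hS
    simp [hS] at hc
  | succ k ih =>
    intro S hS hcS hxS hcl r hr hcnt 𝒜 h1 h2
    by_cases hr1 : r = 1
    · subst hr1
      have hle : 𝒜.card ≤ 1 := by
        rw [card_le_one]
        intro A hA B hB
        obtain ⟨a, ha⟩ := card_eq_one.mp (h1 A hA).2.2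
        obtain ⟨b, hb⟩ := card_eq_one.mp (h1 B hB).2.2
        obtain ⟨z, hz⟩ := h2 A hA B hB
        subst ha hb
        simp at hz
        rw [← hz.1, ← hz.2]
      refine hle.trans (card_pos.mpr ⟨{x}, ?_⟩)
      rw [starIn, mem_filter]
      refine ⟨by simpa using hxS, ?_, by simp, by simp⟩
      intro a ha b hb hab
      rw [mem_singleton] at ha hb
      exact hab.ne (ha.trans hb.symm)
    have hcnt' := hcnt.resolve_left hr1
    by_cases hdeep : ∃ v ∈ S, v ≠ c ∧ p v ≠ c
    · have hne : (S.filter fun v => v ≠ c ∧ p v ≠ c).Nonempty := by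
        obtain ⟨v, h3, h4⟩ := hdeep
        exact ⟨v, by simp [h3, h4]⟩
      obtain ⟨v, hvm, hmax⟩ := exists_max_image _ h hne
      simp only [mem_filter] at hvm hmax
      obtain ⟨hvS, hvc, hpvc⟩ := hvm
      have hwS := hcl v hvS hvc
      have huS := hcl _ hwS hpvc
      have hhv := hh v hvc
      have hhw := hh _ hpvc
      have hnochild : ∀ y ∈ S, y ≠ c → p y ≠ v := by
        intro y hy hyc hpy
        have := hmax y ⟨hy, hyc, by rw [hpy]; exact hvc⟩
        have := hh y hyc
        rw [hpy] at this
        omega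
      have hwchild : ∀ y, y ≠ c → p y = p v → y = v := by
        intro y hyc hpy
        exact (hinj v y hvc hyc hpvc hpy.symm).symm
      have hxv : x ≠ v := by
        rintro rfl
        exact hpvc hpx
      have hxw : x ≠ p v := fun e => hx v hvc e.symm
      obtain ⟨s, rfl⟩ : ∃ s, r = s + 1 := ⟨r - 1, by omega⟩
      have hcardv : (S.erase v).card ≤ k := by
        rw [card_erase_of_mem hvS]; omega
      apply key_step G x (p (p v)) v (p v) S s hvS hwS
      · rw [hadj]; exact Or.inl ⟨hvc, rfl⟩
      · rw [hadj]; exact Or.inr ⟨hpvc, rfl⟩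
      · intro e
        rw [e] at hhw
        omega
      · intro y hy hya
        rw [hadj] at hya
        rcases hya with hya | hya
        · exact hya.2.symm
        · exact absurd hya.2 (hnochild y hy hya.1)
      · intro y hy hya
        rw [hadj] at hya
        rcases hya with hya | hya
        · exact Or.inr hya.2.symm
        · exact Or.inl (hwchild y hya.1 hya.2)
      · exact hxv
      · exact hxw
      · exact h1
      · exact h2
      · apply ih _ hcardv
        · exact mem_erase.mpr ⟨hvc.symm, hcS⟩
        · exact mem_erase.mpr ⟨hxv, hxS⟩
        · intro y hy hyc
          rw [mem_erase] at hy ⊢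
          exact ⟨hnochild y hy.2 hyc, hcl y hy.2 hyc⟩
        · exact hr
        · right
          refine hcnt'.trans (card_le_card ?_)
          intro y hy
          simp only [mem_filter, mem_erase] at hy ⊢
          exact ⟨⟨fun e => hpvc (e ▸ hy.2.2), hy.1⟩, hy.2⟩
      · apply ih _ ((card_le_card (erase_subset _ _)).trans hcardv)
        · exact mem_erase.mpr ⟨hpvc.symm, mem_erase.mpr ⟨hvc.symm, hcS⟩⟩
        · exact mem_erase.mpr ⟨hxw, mem_erase.mpr ⟨hxv, hxS⟩⟩
        · intro y hy hyc
          rw [mem_erase, mem_erase] at hy ⊢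
          refine ⟨fun e => hy.2.1 (hwchild y hyc e), hnochild y hy.2.2 hyc, hcl y hy.2.2 hyc⟩
        · omega
        · right
          have : (S.filter fun y => y ≠ c ∧ p y = c).erase (p v) ⊆
              ((S.erase v).erase (p v)).filter fun y => y ≠ c ∧ p y = c := by
            intro y hy
            simp only [mem_filter, mem_erase] at hy ⊢
            exact ⟨⟨hy.1, fun e => hpvc (e ▸ hy.2.2.2), hy.2.1⟩, hy.2.2⟩
          have h5 := card_le_card this
          have h6 := pred_card_le_card_erase (s := S.filter fun y => y ≠ c ∧ p y = c) (a := p v)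
          omega
    · push Not at hdeep
      have hT : (S.filter fun y => y ≠ c ∧ p y = c) = S.erase c := by
        ext y
        simp only [mem_filter, mem_erase]
        constructor
        · rintro ⟨a, b, -⟩; exact ⟨b, a⟩
        · rintro ⟨a, b⟩; exact ⟨b, a, hdeep y b a⟩
      rw [hT] at hcnt'
      have hA : ∀ A ∈ 𝒜, A ⊆ S.erase c ∧ A.card = r := by
        intro A hA
        obtain ⟨h3, h4, h5⟩ := h1 A hA
        refine ⟨fun a ha => mem_erase.mpr ⟨?_, h3 ha⟩, h5⟩
        rintro rfl
        obtain ⟨b, hb, hba⟩ := exists_mem_ne (s := A) (by omega) a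
        exact h4 a ha b hb ((hadj _ _).mpr (Or.inr ⟨hba, hdeep b (h3 hb) hba⟩))
      refine (ekr_on_s2 _ r hcnt' 𝒜 hA h2).trans ?_
      have hxT : x ∈ S.erase c := mem_erase.mpr ⟨hxc, hxS⟩
      rw [← card_erase_of_mem hxT, ← card_powersetCard]
      apply card_le_card_of_injOn (fun A => insert x A)
      · intro A hA
        simp only [mem_coe, mem_powersetCard] at hA
        simp only [starIn, coe_filter, Set.mem_ofPred_eq, mem_powerset]
        have hxA : x ∉ A := fun e => by have := hA.1 e; simp at this
        have hAT : insert x A ⊆ S.erase c :=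
          insert_subset hxT (hA.1.trans (erase_subset _ _))
        refine ⟨hAT.trans (erase_subset _ _), ?_, ?_, mem_insert_self _ _⟩
        · intro a ha b hb hab
          have ha' := mem_erase.mp (hAT ha)
          have hb' := mem_erase.mp (hAT hb)
          rw [hadj] at hab
          rcases hab with hab | hab
          · exact hb'.1 (hab.2.symm.trans (hdeep a ha'.2 ha'.1))
          · exact ha'.1 (hab.2.symm.trans (hdeep b hb'.2 hb'.1))
        · rw [card_insert_of_notMem hxA, hA.2]; omega
      · intro A hA B hB hAB
        simp only [mem_coe, mem_powersetCard] at hA hB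
        have e1 : x ∉ A := fun e => by have := hA.1 e; simp at this
        have e2 : x ∉ B := fun e => by have := hB.1 e; simp at this
        simp only at hAB
        rw [← erase_insert e1, hAB, erase_insert e2]

lemma exists_parent {V : Type*} (G : SimpleGraph V) (c : V) (hG : G.IsTree) :
    ∃ p : V → V, (∀ v, v ≠ c → G.Adj v (p v) ∧ G.dist c (p v) < G.dist c v) ∧
      ∀ v y, G.Adj y v → G.dist c y < G.dist c v → y = p v := by
  choose f hf using fun v => (hG.connected c v).exists_walk_length_eq_dist
  have hfp : ∀ v, (f v).IsPath := fun v => (f v).isPath_of_length_eq_dist (hf v)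
  have huniq : ∀ v y, G.Adj y v → G.dist c y < G.dist c v → y = (f v).penultimate := by
    intro v y hyv hlt
    have hd := hG.dist_eq_dist_add_one_of_adj c hyv
    have hlen : ((f y).concat hyv).length = G.dist c v := by
      rw [Walk.length_concat, hf]; omega
    have hp := Walk.isPath_of_length_eq_dist _ hlen
    have := (hG.existsUnique_path c v).unique hp (hfp v)
    rw [← this, Walk.penultimate_concat]
  refine ⟨fun v => (f v).penultimate, ?_, huniq⟩
  intro v hv
  have hnil : ¬ (f v).Nil := Walk.not_nil_of_ne hv.symm
  refine ⟨(Walk.adj_penultimate hnil).symm, ?_⟩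
  have h1 := SimpleGraph.dist_le (f v).dropLast
  have h2 : (f v).dropLast.length + 1 = (f v).length := Walk.length_dropLast_add_one hnil
  rw [hf] at h2
  show G.dist c (f v).penultimate < _
  omega

lemma root_degree {V : Type*} [Fintype V] (G : SimpleGraph V) (c x : V) (hG : IsElongatedClaw G c)
    (hx : G.Adj c x) :
    ((univ.erase c).filter fun v => G.degree v = 1).card = G.degree c := by
  have : Nontrivial V := ⟨c, x, hx.ne⟩
  have h1 := hG.1.card_edgeFinset
  have h2 := G.sum_degrees_eq_twice_card_edges
  rw [← add_sum_erase univ _ (mem_univ c)] at h2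
  have h3 : ∑ v ∈ univ.erase c, (G.degree v + if G.degree v = 1 then 1 else 0)
      = ∑ v ∈ univ.erase c, 2 := by
    apply sum_congr rfl
    intro v hv
    have h4 := hG.2 v (ne_of_mem_erase hv)
    have h5 := hG.1.connected.preconnected.degree_pos_of_nontrivial v
    split_ifs <;> omega
  rw [sum_add_distrib, ← card_filter, sum_const, card_erase_of_mem (mem_univ c), card_univ] at h3
  simp only [smul_eq_mul] at h3
  have : 0 < Fintype.card V := Fintype.card_pos
  omega

/-- If `G` is an elongated claw with `n` leaves and at least one short
limb (a leaf adjacent to the root), and `n ≥ 2r`, then `G` is `r`-EKR. -/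
theorem elongatedClaw_shortLimb_EKR {V : Type*} [Fintype V] (n r : ℕ)
    (hn : 0 < n) (hr : 0 < r) (hnr : 2 * r ≤ n)
    (G : SimpleGraph V) (root : V) (hG : IsElongatedClaw G root)
    (hleaves : (univ.filter fun v => G.degree v = 1).card = n)
    (hshort : ∃ x, G.Adj root x ∧ G.degree x = 1) :
    IsEKR G r := by
  obtain ⟨x, hcx, hdx⟩ := hshort
  obtain ⟨p, hp1, hp2⟩ := exists_parent G root hG.1
  intro 𝒜 h𝒜 hint
  have hadj : ∀ u v, G.Adj u v ↔ (u ≠ root ∧ p u = v) ∨ (v ≠ root ∧ p v = u) := by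
    intro u v
    constructor
    · intro huv
      have h0 : G.dist root root = 0 := SimpleGraph.dist_self
      rcases hG.1.dist_eq_dist_add_one_of_adj root huv with h | h
      · exact Or.inl ⟨by rintro rfl; omega, (hp2 u v huv.symm (by omega)).symm⟩
      · exact Or.inr ⟨by rintro rfl; omega, (hp2 v u huv (by omega)).symm⟩
    · rintro (⟨h, rfl⟩ | ⟨h, rfl⟩)
      · exact (hp1 u h).1
      · exact (hp1 v h).1.symm
  have hpx : p x = root := by
    refine (hp2 x root hcx ?_).symm
    rw [SimpleGraph.dist_self, SimpleGraph.dist_eq_one_iff_adj.mpr hcx]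
    omega
  have hcount : r = 1 ∨ 2 * r ≤ (univ.filter fun y => y ≠ root ∧ p y = root).card := by
    by_cases hr1 : r = 1
    · exact Or.inl hr1
    right
    have hd := root_degree G root x hG hcx
    have hN : (univ.filter fun y => y ≠ root ∧ p y = root) = G.neighborFinset root := by
      ext y
      simp only [mem_filter, mem_univ, true_and, mem_neighborFinset]
      constructor
      · rintro ⟨h, h'⟩
        exact (hadj _ _).mpr (Or.inr ⟨h, h'⟩)
      · intro h
        refine ⟨h.ne', (hp2 y root h ?_).symm⟩
        rw [SimpleGraph.dist_self, SimpleGraph.dist_eq_one_iff_adj.mpr h]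
        omega
    rw [hN, card_neighborFinset_eq_degree]
    have hE : ((univ.erase root).filter fun v => G.degree v = 1)
        = (univ.filter fun v => G.degree v = 1).erase root := by
      ext y
      simp [and_comm]
    rw [hE] at hd
    by_cases hroot : G.degree root = 1
    · have := pred_card_le_card_erase (s := univ.filter fun v => G.degree v = 1) (a := root)
      omega
    · rw [erase_eq_of_notMem (by simpa using hroot)] at hd
      omega
  have hmain := main_ind G root x p (G.dist root) hadj (fun v hv => (hp1 v hv).2) ?_ hcx.ne' hpx ?_
    _ univ le_rfl (mem_univ _) (mem_univ _) (fun _ _ _ => mem_univ _) r hr hcount 𝒜 ?_ hint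
  · refine ⟨x, hmain.trans (card_le_card ?_)⟩
    intro A hA
    simp only [starIn, mem_filter] at hA
    simp only [ekrStar, indepSetsSize, indepSets, mem_filter, mem_univ, true_and]
    exact ⟨⟨hA.2.1, hA.2.2.1⟩, hA.2.2.2⟩
  · intro u v hu hv hpu huv
    by_contra hne
    have h3 := hG.2 (p u) hpu
    have hsub : ({u, v, p (p u)} : Finset V) ⊆ G.neighborFinset (p u) := by
      intro y hy
      simp only [mem_insert, mem_singleton] at hy
      rw [mem_neighborFinset]
      rcases hy with rfl | rfl | rfl
      · exact (hp1 _ hu).1.symm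
      · rw [huv]; exact (hp1 _ hv).1.symm
      · exact (hp1 _ hpu).1
    have h4 := card_le_card hsub
    have h5 := (hp1 u hu).2
    have h6 := (hp1 v hv).2
    have h7 := (hp1 _ hpu).2
    rw [card_neighborFinset_eq_degree, card_eq_three.mpr
      ⟨u, v, p (p u), hne, (by intro e; rw [← e] at h7; omega),
        (by intro e; rw [← e] at h7; rw [huv] at h7; omega), rfl⟩] at h4
    omega
  · intro v hv hpv
    have hsub : ({root, v} : Finset V) ⊆ G.neighborFinset x := by
      intro y hy
      simp only [mem_insert, mem_singleton] at hy
      rw [mem_neighborFinset]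
      rcases hy with rfl | rfl
      · exact hcx.symm
      · rw [← hpv]; exact (hp1 _ hv).1.symm
    have h4 := card_le_card hsub
    rw [card_neighborFinset_eq_degree, card_pair hv.symm] at h4
    omega
  · intro A hA
    have := h𝒜 hA
    simp only [indepSetsSize, indepSets, mem_filter, mem_univ, true_and] at this
    exact ⟨subset_univ _, this.1, this.2⟩
end

section
/- Let n and d be positive integers with n ≥ 2 and d ≥ 3. Then there exists a positive integer r and a finite tree T containing a vertex v of degree n, at distance at least d from every leaf of T, such that |I^(r)_v(T)| ≥ |I^(r)_u(T)| for every vertex u of T, and |I^(r)_v(T)| > |I^(r)_u(T)| for every leaf u of T. -/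
open Finset SimpleGraph
open scoped Classical

variable {V : Type*}

namespace DeepStar

/-- Vertices: a root, `n` hubs, and `n * K` paths on `m` vertices. -/
abbrev VV (n K m : ℕ) := (Unit ⊕ Fin n) ⊕ ((Fin n × Fin K) × Fin m)

/-- parent -/
def par {n K m : ℕ} : VV n K m → VV n K m
  | .inl (.inl _) => .inl (.inl ())
  | .inl (.inr _) => .inl (.inl ())
  | .inr (q, b) => if b.val = 0 then .inl (.inr q.1) else .inr (q, ⟨b.val - 1, by omega⟩)

/-- depth -/
def dep {n K m : ℕ} : VV n K m → ℕ
  | .inl (.inl _) => 0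
  | .inl (.inr _) => 1
  | .inr (_, b) => b.val + 2

/-- the root -/
abbrev rt {n K m : ℕ} : VV n K m := .inl (.inl ())

/-- the tree -/
def TT (n K m : ℕ) : SimpleGraph (VV n K m) where
  Adj x y := x ≠ y ∧ (par x = y ∨ par y = x)
  symm := ⟨fun _ _ h => ⟨h.1.symm, h.2.symm⟩⟩
  loopless := ⟨fun _ h => h.1 rfl⟩

lemma dep_par {n K m : ℕ} (x : VV n K m) (hx : x ≠ rt) : dep (par x) + 1 = dep x := by
  rcases x with (x | x) | ⟨q, b⟩
  · exact absurd rfl hx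
  · rfl
  · simp only [par]
    split_ifs with h
    · simp [dep, h]
    · simp [dep]; omega

lemma par_ne {n K m : ℕ} (x : VV n K m) (hx : x ≠ rt) : par x ≠ x := by
  intro h
  have := dep_par x hx
  rw [h] at this
  omega

lemma adj_par {n K m : ℕ} (x : VV n K m) (hx : x ≠ rt) : (TT n K m).Adj x (par x) :=
  ⟨(par_ne x hx).symm, Or.inl rfl⟩

lemma dep_adj {n K m : ℕ} {x y : VV n K m} (h : (TT n K m).Adj x y) : dep y ≤ dep x + 1 := by
  obtain ⟨hne, h | h⟩ := h
  · by_cases hx : x = rt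
    · subst hx; exact absurd h hne
    · have := dep_par x hx
      rw [h] at this; omega
  · by_cases hx : y = rt
    · subst hx; simp [dep]
    · have := dep_par y hx
      rw [h] at this; omega

lemma reach_rt {n K m : ℕ} : ∀ (k : ℕ) (x : VV n K m), dep x = k → (TT n K m).Reachable x rt := by
  intro k
  induction k with
  | zero =>
    intro x hx
    rcases x with (x | x) | ⟨q, b⟩
    · exact Reachable.refl _
    · simp [dep] at hx
    · simp [dep] at hx
  | succ k ih =>
    intro x hx
    have hne : x ≠ rt := by rintro rfl; simp [dep] at hx
    have := dep_par x hne
    exact (adj_par x hne).reachable.trans (ih _ (by omega))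

lemma TT_tree (n K m : ℕ) : (TT n K m).IsTree := by
  have hc : (TT n K m).Connected := by
    have : Nonempty (VV n K m) := ⟨rt⟩
    refine ⟨fun x y => (reach_rt _ x rfl).trans (reach_rt _ y rfl).symm⟩
  rw [SimpleGraph.isTree_iff_connected_and_card]
  refine ⟨hc, le_antisymm ?_ hc.card_vert_le_card_edgeSet_add_one⟩
  let f : {x : VV n K m // x ≠ rt} → (TT n K m).edgeSet := fun x => ⟨s(x.1, par x.1), adj_par x.1 x.2⟩
  have hf : Function.Surjective f := by
    rintro ⟨e, he⟩
    induction e with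
    | _ x y =>
      have he' : (TT n K m).Adj x y := he
      obtain ⟨hne, h | h⟩ := he'
      · have hx : x ≠ rt := by rintro rfl; exact hne h
        refine ⟨⟨x, hx⟩, ?_⟩
        simp [f, h]
      · have hx : y ≠ rt := by rintro rfl; exact hne h.symm
        refine ⟨⟨y, hx⟩, ?_⟩
        simp [f, h, Sym2.eq_swap]
  have h1 := Nat.card_le_card_of_surjective f hf
  have h2 : Nat.card {x : VV n K m // x ≠ rt} = Nat.card (VV n K m) - 1 := by
    simp only [Nat.card_eq_fintype_card]
    rw [Fintype.card_subtype_compl, Fintype.card_subtype_eq]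
  have h3 : 0 < Nat.card (VV n K m) := by
    have : Nonempty (VV n K m) := ⟨rt⟩
    exact Nat.card_pos
  omega

lemma degree_rt (n K m : ℕ) : (TT n K m).degree rt = n := by
  have : (TT n K m).neighborFinset rt = univ.image (fun i : Fin n => (.inl (.inr i) : VV n K m)) := by
    ext x
    simp only [mem_neighborFinset, mem_image, mem_univ, true_and]
    constructor
    · rintro ⟨hne, h | h⟩
      · exact absurd h hne
      · rcases x with (x | x) | ⟨q, b⟩
        · exact absurd rfl hne
        · exact ⟨x, rfl⟩
        · simp only [par] at h
          split_ifs at h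
          simp at h
    · rintro ⟨i, rfl⟩
      exact ⟨by simp, Or.inr rfl⟩
  rw [← card_neighborFinset_eq_degree, this, card_image_of_injective]
  · simp
  · intro a b h; simpa using h

lemma deg_two {V : Type*} [Fintype V] (G : SimpleGraph V) (x y z : V) (h1 : G.Adj x y) (h2 : G.Adj x z)
    (h : y ≠ z) : G.degree x ≠ 1 := by
  have : ({y, z} : Finset V) ⊆ G.neighborFinset x := by
    intro w; simp; rintro (rfl | rfl) <;> assumption
  have := card_le_card this
  rw [card_pair h, card_neighborFinset_eq_degree] at this
  omega

lemma leaf_dep (n K m : ℕ) (hn : 2 ≤ n) (hK : 0 < K) (hm : 0 < m) (x : VV n K m)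
    (hx : (TT n K m).degree x = 1) : m ≤ dep x := by
  by_contra hlt
  rcases x with (x | i) | ⟨q, b⟩
  · have := degree_rt n K m
    have h2 : (TT n K m).degree (.inl (.inl x)) = n := this
    omega
  · refine deg_two _ _ rt (.inr ((i, ⟨0, hK⟩), ⟨0, hm⟩)) ?_ ?_ (by simp) hx
    · exact ⟨by simp, Or.inl rfl⟩
    · exact ⟨by simp, Or.inr (by simp [par])⟩
  · simp [dep] at hlt
    refine deg_two _ _ (par (.inr (q, b))) (.inr (q, ⟨b.val + 1, by omega⟩)) (adj_par _ (by simp)) ?_ ?_ hx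
    · refine ⟨by simp [Fin.ext_iff], Or.inr (by simp [par])⟩
    · intro h
      have h1 := dep_par (Sum.inr (q, b) : VV n K m) (by simp)
      rw [h] at h1
      simp [dep] at h1

lemma walk_dep {V : Type*} (G : SimpleGraph V) (f : V → ℕ) (hf : ∀ x y, G.Adj x y → f y ≤ f x + 1)
    {x y : V} (p : G.Walk x y) : f y ≤ f x + p.length := by
  induction p with
  | nil => simp
  | cons h p ih =>
    have := hf _ _ h
    simp only [Walk.length_cons]
    omega

lemma star_card_iso {V W : Type*} [Fintype V] [Fintype W] (e : V ≃ W) (G : SimpleGraph W) (r : ℕ) (v : V) :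
    (ekrStar (G.comap e) r v).card = (ekrStar G r (e v)).card := by
  refine card_bij (fun A _ => A.map e.toEmbedding) ?_ ?_ ?_
  · intro A hA
    simp [ekrStar, indepSetsSize, indepSets] at hA ⊢
    refine ⟨⟨fun x hx y hy => ?_, hA.1.2⟩, hA.2⟩
    have := hA.1.1 _ hx _ hy
    simpa using this
  · intro A _ B _ h
    exact map_injective _ h
  · intro B hB
    refine ⟨B.map e.symm.toEmbedding, ?_, ?_⟩
    · simp [ekrStar, indepSetsSize, indepSets] at hB ⊢
      exact ⟨⟨fun x hx y hy => hB.1.1 _ hx _ hy, hB.1.2⟩, hB.2⟩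
    · ext x; simp

lemma transfer (n K m d r : ℕ) (hn : 2 ≤ n) (hK : 0 < K) (hm : 0 < m) (hd : d ≤ m) (hr : 0 < r)
    (H : ∀ u : VV n K m, u ≠ rt → (ekrStar (TT n K m) r u).card < (ekrStar (TT n K m) r rt).card) :
    ∃ r : ℕ, 0 < r ∧ ∃ (N : ℕ) (T : SimpleGraph (Fin N)) (v : Fin N),
      T.IsTree ∧ T.degree v = n ∧
      (∀ u, T.degree u = 1 → d ≤ T.dist v u) ∧
      (∀ u, (ekrStar T r u).card ≤ (ekrStar T r v).card) ∧
      (∀ u, T.degree u = 1 → (ekrStar T r u).card < (ekrStar T r v).card) := by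
  let e : Fin (Fintype.card (VV n K m)) ≃ VV n K m := (Fintype.equivFin _).symm
  let T := (TT n K m).comap e
  have iso : T ≃g TT n K m := SimpleGraph.Iso.comap e _
  have hdeg : ∀ (u) (_ : Fintype (T.neighborSet u)), T.degree u = (TT n K m).degree (e u) := by
    intro u _
    exact ((SimpleGraph.Iso.comap e (TT n K m)).degree_eq u).symm
  have htree : T.IsTree := (SimpleGraph.Iso.isTree_iff iso).2 (TT_tree n K m)
  have hev : e (e.symm rt) = rt := e.apply_symm_apply _
  have hrt : ∀ _ : Fintype (T.neighborSet (e.symm rt)), T.degree (e.symm rt) = n := by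
    intro _; rw [hdeg, hev, degree_rt]
  have key : ∀ u, u ≠ e.symm rt → (ekrStar T r u).card < (ekrStar T r (e.symm rt)).card := by
    intro u hu
    rw [star_card_iso, star_card_iso, hev]
    apply H
    rintro h
    exact hu (by rw [← h]; simp)
  refine ⟨r, hr, _, T, e.symm rt, htree, hrt _, ?_, ?_, ?_⟩
  · intro u hu
    rw [hdeg] at hu
    have h1 := leaf_dep n K m hn hK hm _ hu
    obtain ⟨p, hp⟩ := htree.connected.exists_walk_length_eq_dist (e.symm rt) u
    have h2 := walk_dep T (fun x => dep (e x)) (fun x y h => dep_adj h) p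
    simp only [hev] at h2
    have h3 : dep (rt : VV n K m) = 0 := rfl
    rw [h3] at h2
    omega
  · intro u
    by_cases hu : u = e.symm rt
    · rw [hu]
    · exact (key u hu).le
  · intro u hu
    apply key
    rintro rfl
    have := (hrt _).symm.trans hu
    omega


end DeepStar

namespace DeepStar

/-- independent subsets of a path -/
noncomputable def PI (m : ℕ) : Finset (Finset (Fin m)) :=
  univ.filter fun B => ∀ x ∈ B, ∀ y ∈ B, x.val + 1 ≠ y.val

lemma PI_card (j : ℕ) (B : Finset (Fin (2 * j))) (hB : B ∈ PI (2 * j)) : B.card ≤ j := by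
  simp only [PI, mem_filter, mem_univ, true_and] at hB
  have := card_le_card_of_injOn (s := B) (t := range j) (fun b => b.val / 2)
    (by intro b _; simp; omega)
    (by
      intro a ha b hb h
      have h1 := hB a ha b hb
      have h2 := hB b hb a ha
      simp only at h
      apply Fin.ext
      omega)
  simpa using this

/-- maximum independent subsets -/
noncomputable def PM (j : ℕ) : Finset (Finset (Fin (2 * j))) := (PI (2 * j)).filter fun B => B.card = j

lemma exists_par (j s : ℕ) (hs : s < 2) :
    ∃ B ∈ PM j, ∀ b ∈ B, b.val % 2 = s := by
  refine ⟨univ.image (fun i : Fin j => (⟨2 * i.val + s, by omega⟩ : Fin (2 * j))), ?_, ?_⟩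
  · simp only [PM, PI, mem_filter, mem_univ, true_and]
    constructor
    · intro x hx y hy
      simp only [mem_image, mem_univ, true_and] at hx hy
      obtain ⟨a, rfl⟩ := hx
      obtain ⟨b, rfl⟩ := hy
      simp only
      omega
    · rw [card_image_of_injective]
      · simp
      · intro a b h
        simp only [Fin.mk.injEq] at h
        apply Fin.ext
        omega
  · intro b hb
    simp only [mem_image, mem_univ, true_and] at hb
    obtain ⟨a, rfl⟩ := hb
    simp only
    omega

lemma exists_avoid (j : ℕ) (u : Fin (2 * j)) : ∃ B ∈ PM j, u ∉ B := by
  obtain ⟨B, hB, h⟩ := exists_par j ((u.val + 1) % 2) (Nat.mod_lt _ (by norm_num))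
  refine ⟨B, hB, fun hu => ?_⟩
  have := h u hu
  omega

lemma exists_zero (j : ℕ) (hj : 0 < j) : ∃ B ∈ PM j, (⟨0, by omega⟩ : Fin (2 * j)) ∈ B := by
  obtain ⟨B, hB, h⟩ := exists_par j 0 (by norm_num)
  refine ⟨B, hB, ?_⟩
  by_contra h0
  -- `B` injects into the pairs except the first one
  have := card_le_card_of_injOn (s := B) (t := (range j).erase 0) (fun b => b.val / 2)
    (by
      intro b hb
      have h1 := h b hb
      have : b.val ≠ 0 := fun h2 => h0 (by
        have h3 : (⟨0, by omega⟩ : Fin (2 * j)) = b := Fin.ext h2.symm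
        rw [h3]; exact hb)
      simp; omega)
    (by
      intro a ha b hb h'
      have h1 := h a ha
      have h2 := h b hb
      simp only at h'
      apply Fin.ext
      omega)
  rw [card_erase_of_mem (by simpa using hj)] at this
  simp [PM] at hB this
  omega

/-- weighted count -/
noncomputable def FF (j : ℕ) (S : Finset (Finset (Fin (2 * j)))) (t : ℝ) : ℝ := ∑ B ∈ S, t ^ (j - B.card)

lemma FF_zero (j : ℕ) (S : Finset (Finset (Fin (2 * j)))) (hS : S ⊆ PI (2 * j)) :
    FF j S 0 = ((S.filter fun B => B.card = j).card : ℝ) := by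
  unfold FF
  rw [card_filter, Nat.cast_sum]
  apply sum_congr rfl
  intro B hB
  have := PI_card j B (hS hB)
  split_ifs with h
  · simp [h]
  · rw [zero_pow (by omega)]; simp

lemma FF_cont (j : ℕ) (S : Finset (Finset (Fin (2 * j)))) : Continuous (FF j S) := by
  unfold FF
  fun_prop

lemma FF_nonneg (j : ℕ) (S : Finset (Finset (Fin (2 * j)))) {t : ℝ} (ht : 0 ≤ t) : 0 ≤ FF j S t := by
  unfold FF; positivity

/-- independent sets avoiding the first vertex -/
noncomputable def PZ (m : ℕ) : Finset (Finset (Fin m)) := (PI m).filter fun B => ∀ b ∈ B, b.val ≠ 0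

lemma PM_pos (j : ℕ) : 0 < (PM j).card := by
  obtain ⟨B, hB, -⟩ := exists_par j 0 (by norm_num)
  exact card_pos.2 ⟨B, hB⟩

lemma exists_t (n j : ℕ) (hn : 2 ≤ n) (hj : 0 < j) : ∃ t : ℝ, 0 < t ∧ t ≤ 1 ∧
    FF j (PZ (2 * j)) t * FF j (PI (2 * j)) t ^ (n - 1) < ((PM j).card : ℝ) ^ n := by
  have hc : Continuous fun t => FF j (PZ (2 * j)) t * FF j (PI (2 * j)) t ^ (n - 1) :=
    (FF_cont _ _).mul ((FF_cont _ _).pow _)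
  have h0 : FF j (PZ (2 * j)) 0 * FF j (PI (2 * j)) 0 ^ (n - 1) < ((PM j).card : ℝ) ^ n := by
    rw [FF_zero _ (PZ (2 * j)) (filter_subset _ _), FF_zero _ _ (Subset.refl _)]
    have hM := PM_pos j
    have hlt : ((PZ (2 * j)).filter fun B => B.card = j).card < (PM j).card := by
      apply card_lt_card
      have hss : (PZ (2 * j)).filter (fun B => B.card = j) ⊆ PM j :=
        filter_subset_filter _ (filter_subset _ _)
      rw [ssubset_iff_of_subset hss]
      obtain ⟨B, hB, h⟩ := exists_zero j hj
      refine ⟨B, hB, ?_⟩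
      simp only [PZ, mem_filter, not_and]
      intro h1
      exact absurd rfl (h1.2 _ h)
    change _ * ((PM j).card : ℝ) ^ (n - 1) < _
    obtain ⟨k, rfl⟩ : ∃ k, n = k + 1 := ⟨n - 1, by omega⟩
    rw [pow_succ', Nat.add_sub_cancel]
    have : (0 : ℝ) < ((PM j).card : ℝ) ^ k := by positivity
    gcongr
  have h1 := (hc.tendsto 0).eventually (gt_mem_nhds h0)
  have h2 : ∀ᶠ t in nhdsWithin (0 : ℝ) (Set.Ioi 0), FF j (PZ (2 * j)) t * FF j (PI (2 * j)) t ^ (n - 1) < ((PM j).card : ℝ) ^ n := h1.filter_mono nhdsWithin_le_nhds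
  have h3 : ∀ᶠ t in nhdsWithin (0 : ℝ) (Set.Ioi 0), t ∈ Set.Ioc (0:ℝ) 1 := Ioc_mem_nhdsGT one_pos
  obtain ⟨t, ha, hb⟩ := (h2.and h3).exists
  exact ⟨t, hb.1, hb.2, ha⟩

end DeepStar

namespace DeepStar

/-- core part -/
noncomputable def core {n K m : ℕ} (A : Finset (VV n K m)) : Finset (Unit ⊕ Fin n) :=
  univ.filter fun c => Sum.inl c ∈ A

/-- branch part -/
noncomputable def br {n K m : ℕ} (A : Finset (VV n K m)) (q : Fin n × Fin K) : Finset (Fin m) :=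
  univ.filter fun b => Sum.inr (q, b) ∈ A

lemma card_dec {n K m : ℕ} (A : Finset (VV n K m)) :
    A.card = (core A).card + ∑ q, (br A q).card := by
  have h : A.card = ∑ x : VV n K m, if x ∈ A then 1 else 0 := by simp
  rw [h, Fintype.sum_sum_type, Fintype.sum_prod_type (f := fun x => if Sum.inr x ∈ A then 1 else 0)]
  simp only [core, br, card_filter]

lemma dec_inj {n K m : ℕ} (A B : Finset (VV n K m)) (h1 : core A = core B) (h2 : br A = br B) : A = B := by
  ext x
  rcases x with c | ⟨q, b⟩
  · have := Finset.ext_iff.1 h1 c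
    simpa [core] using this
  · have := Finset.ext_iff.1 (congrFun h2 q) b
    simpa [br] using this

lemma br_PI {n K m : ℕ} (A : Finset (VV n K m)) (hA : A ∈ indepSets (TT n K m)) (q : Fin n × Fin K) :
    br A q ∈ PI m := by
  simp only [indepSets, PI, br, mem_filter, mem_univ, true_and] at hA ⊢
  intro x hx y hy hxy
  refine hA _ hx _ hy ⟨?_, Or.inr ?_⟩
  · simp only [ne_eq, Sum.inr.injEq, Prod.mk.injEq, true_and]
    rintro rfl; omega
  · simp only [par]
    rw [if_neg (by omega)]
    simp only [Sum.inr.injEq, Prod.mk.injEq, true_and, Fin.ext_iff]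
    omega

lemma br_PZ {n K m : ℕ} (A : Finset (VV n K m)) (hA : A ∈ indepSets (TT n K m)) (q : Fin n × Fin K)
    (h : Sum.inl (Sum.inr q.1) ∈ A) : br A q ∈ PZ m := by
  unfold PZ
  rw [mem_filter]
  refine ⟨br_PI A hA q, ?_⟩
  intro b hb h0
  simp only [indepSets, br, mem_filter, mem_univ, true_and] at hA hb
  exact hA _ h _ hb ⟨by simp, Or.inr (by simp [par, h0])⟩

lemma mem_star {n K m r : ℕ} {u : VV n K m} {A : Finset (VV n K m)} :
    A ∈ ekrStar (TT n K m) r u ↔ A ∈ indepSets (TT n K m) ∧ A.card = r ∧ u ∈ A := by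
  simp [ekrStar, indepSetsSize, and_assoc]

lemma prod_two {n K : ℕ} (i : Fin n) (a b : ℝ) :
    ∏ q : Fin n × Fin K, (if q.1 = i then a else b) = (a * b ^ (n - 1)) ^ K := by
  rw [Fintype.prod_prod_type]
  have h : ∀ x : Fin n, ∏ y : Fin K, (if (x, y).1 = i then a else b) = (if x = i then a else b) ^ K := by
    intro x
    by_cases hx : x = i <;> simp [hx]
  rw [prod_congr rfl (fun x _ => h x), prod_pow, ← mul_prod_erase univ _ (mem_univ i)]
  congr 2
  · simp
  · rw [prod_congr rfl (g := fun _ => b)]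
    · simp [card_erase_of_mem]
    · intro x hx
      rw [if_neg (ne_of_mem_erase hx)]

lemma hub_bound (n K j : ℕ) (i : Fin n) (t : ℝ) (ht : 0 < t) (ht1 : t ≤ 1) :
    ((ekrStar (TT n K (2 * j)) (1 + n * K * j) (.inl (.inr i))).card : ℝ) * t ^ n ≤
      2 ^ (n + 1) * (FF j (PZ (2 * j)) t * FF j (PI (2 * j)) t ^ (n - 1)) ^ K := by
  set S := ekrStar (TT n K (2 * j)) (1 + n * K * j) (.inl (.inr i)) with hS
  let tg : Fin n × Fin K → Finset (Finset (Fin (2 * j))) :=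
    fun q => if q.1 = i then PZ (2 * j) else PI (2 * j)
  let w : Finset (Unit ⊕ Fin n) × (Fin n × Fin K → Finset (Fin (2 * j))) → ℝ :=
    fun x => ∏ q, t ^ (j - (x.2 q).card)
  let φ : Finset (VV n K (2 * j)) → Finset (Unit ⊕ Fin n) × (Fin n × Fin K → Finset (Fin (2 * j))) :=
    fun A => (core A, br A)
  have hφ : ∀ A ∈ S, φ A ∈ (univ : Finset (Finset (Unit ⊕ Fin n))) ×ˢ Fintype.piFinset tg := by
    intro A hA
    rw [hS, mem_star] at hA
    simp only [φ, mem_product, mem_univ, true_and, Fintype.mem_piFinset, tg]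
    intro q
    split_ifs with h
    · subst h; exact br_PZ A hA.1 q hA.2.2
    · exact br_PI A hA.1 q
  have hinj : Set.InjOn φ S := by
    intro A _ B _ h
    simp only [φ, Prod.mk.injEq] at h
    exact dec_inj A B h.1 h.2
  have hw : ∀ A ∈ S, t ^ n ≤ w (φ A) := by
    intro A hA
    rw [hS, mem_star] at hA
    simp only [w, φ]
    rw [prod_pow_eq_pow_sum]
    apply pow_le_pow_of_le_one ht.le ht1
    have h1 := card_dec A
    rw [hA.2.1] at h1
    have h2 : ∑ q, (j - (br A q).card) + ∑ q, (br A q).card = n * K * j := by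
      rw [← sum_add_distrib, sum_congr rfl (g := fun _ => j)]
      · simp
      · intro q _
        have := PI_card j _ (br_PI A hA.1 q)
        omega
    have h3 : (core A).card ≤ n + 1 := by
      refine (card_le_univ _).trans ?_
      simp [add_comm]
    omega
  calc (S.card : ℝ) * t ^ n = ∑ A ∈ S, t ^ n := by simp
    _ ≤ ∑ A ∈ S, w (φ A) := sum_le_sum hw
    _ = ∑ x ∈ S.image φ, w x := (sum_image hinj).symm
    _ ≤ ∑ x ∈ (univ : Finset (Finset (Unit ⊕ Fin n))) ×ˢ Fintype.piFinset tg, w x := by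
      apply sum_le_sum_of_subset_of_nonneg
      · intro x hx
        obtain ⟨A, hA, rfl⟩ := mem_image.1 hx
        exact hφ A hA
      · intro x _ _
        simp only [w]
        positivity
    _ = 2 ^ (n + 1) * ∏ q, ∑ B ∈ tg q, t ^ (j - B.card) := by
      rw [sum_product, prod_univ_sum]
      simp only [w, sum_const]
      simp [add_comm]
    _ = _ := by
      rw [← prod_two i]
      congr 1
      apply prod_congr rfl
      intro q _
      simp only [tg, FF]
      split_ifs <;> rfl

lemma base_struct {n K j : ℕ} (A : Finset (VV n K (2 * j))) (hA : A ∈ indepSets (TT n K (2 * j)))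
    (hr : A.card = 1 + n * K * j) (hh : ∀ i, (Sum.inl (Sum.inr i)) ∉ A) :
    core A = {Sum.inl ()} ∧ ∀ q, br A q ∈ PM j := by
  have h1 := card_dec A
  have hsub : core A ⊆ {Sum.inl ()} := by
    intro c hc
    simp only [core, mem_filter, mem_univ, true_and] at hc
    rcases c with c | i
    · simp
    · exact absurd hc (hh i)
  have h2 := card_le_card hsub
  rw [card_singleton] at h2
  have hle : ∀ q ∈ univ, (br A q).card ≤ j := fun q _ => PI_card j _ (br_PI A hA q)
  have hsum : ∑ q : Fin n × Fin K, j = n * K * j := by simp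
  have h3 := sum_le_sum hle
  have h4 : ∑ q, (br A q).card = ∑ q : Fin n × Fin K, j := by omega
  refine ⟨eq_of_subset_of_card_le hsub (by rw [card_singleton]; omega), fun q => ?_⟩
  unfold PM
  rw [mem_filter]
  exact ⟨br_PI A hA q, (sum_eq_sum_iff_of_le hle).1 h4 q (mem_univ _)⟩

lemma base_bound (n K j : ℕ) (q₀ : Fin n × Fin K) (b : Fin (2 * j)) :
    ((ekrStar (TT n K (2 * j)) (1 + n * K * j) (.inr (q₀, b))).filter
      fun A => ∀ i, (Sum.inl (Sum.inr i)) ∉ A).card ≤ ((PM j).card - 1) * (PM j).card ^ (n * K - 1) := by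
  let tg : Fin n × Fin K → Finset (Finset (Fin (2 * j))) :=
    fun q => if q = q₀ then (PM j).filter fun B => b ∈ B else PM j
  have h1 : (Fintype.piFinset tg).card ≤ ((PM j).card - 1) * (PM j).card ^ (n * K - 1) := by
    rw [Fintype.card_piFinset, ← mul_prod_erase univ _ (mem_univ q₀)]
    apply Nat.mul_le_mul
    · simp only [tg, if_true]
      apply Nat.le_sub_one_of_lt
      apply card_lt_card
      rw [ssubset_iff_of_subset (filter_subset _ _)]
      obtain ⟨B, hB, h⟩ := exists_avoid j b
      exact ⟨B, hB, by simp [h]⟩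
    · rw [prod_congr rfl (g := fun _ => (PM j).card)]
      · simp [card_erase_of_mem]
      · intro x hx
        simp only [tg]
        rw [if_neg (ne_of_mem_erase hx)]
  refine le_trans (card_le_card_of_injOn br ?_ ?_) h1
  · intro A hA
    simp only [coe_filter, Set.mem_ofPred_eq, mem_star] at hA
    have := base_struct A hA.1.1 hA.1.2.1 hA.2
    simp only [mem_coe, Fintype.mem_piFinset, tg]
    intro q
    split_ifs with h
    · subst h
      rw [mem_filter]
      refine ⟨this.2 q, ?_⟩
      simp only [br, mem_filter, mem_univ, true_and]
      exact hA.1.2.2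
    · exact this.2 q
  · intro A hA B hB h
    simp only [coe_filter, Set.mem_ofPred_eq, mem_star] at hA hB
    apply dec_inj A B _ h
    rw [(base_struct A hA.1.1 hA.1.2.1 hA.2).1, (base_struct B hB.1.1 hB.1.2.1 hB.2).1]

/-- assemble -/
noncomputable def asm {n K m : ℕ} (f : Fin n × Fin K → Finset (Fin m)) : Finset (VV n K m) :=
  univ.filter fun x => match x with
    | .inl (.inl _) => True
    | .inl (.inr _) => False
    | .inr (q, b) => b ∈ f q

lemma br_asm {n K m : ℕ} (f : Fin n × Fin K → Finset (Fin m)) : br (asm f) = f := by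
  funext q
  ext b
  simp [br, asm]

lemma core_asm {n K m : ℕ} (f : Fin n × Fin K → Finset (Fin m)) : core (asm f) = {Sum.inl ()} := by
  ext c
  rcases c with c | c <;> simp [core, asm]

lemma root_bound (n K j : ℕ) :
    (PM j).card ^ (n * K) ≤ (ekrStar (TT n K (2 * j)) (1 + n * K * j) rt).card := by
  have h1 : (Fintype.piFinset fun _ : Fin n × Fin K => PM j).card = (PM j).card ^ (n * K) := by
    rw [Fintype.card_piFinset]; simp
  rw [← h1]
  apply card_le_card_of_injOn asm
  · intro f hf
    simp only [mem_coe, Fintype.mem_piFinset, PM, mem_filter] at hf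
    rw [mem_coe, mem_star]
    refine ⟨?_, ?_, by simp [asm]⟩
    · have key : ∀ x ∈ asm f, par x ∈ asm f → par x = x := by
        intro x hx hp
        rcases x with (x | x) | ⟨q, b⟩
        · rfl
        · simp [asm] at hx
        · exfalso
          simp only [par] at hp
          split_ifs at hp with h
          · simp [asm] at hp
          · simp only [asm, mem_filter, mem_univ, true_and] at hp hx
            have := (hf q).1
            simp only [PI, mem_filter, mem_univ, true_and] at this
            refine this _ hp _ hx ?_
            simp only
            omega
      simp only [indepSets, mem_filter, mem_univ, true_and]
      rintro x hx y hy ⟨hne, h | h⟩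
      · subst h; exact hne (key x hx hy).symm
      · subst h; exact hne (key y hy hx)
    · rw [card_dec, core_asm, br_asm, sum_congr rfl (g := fun _ => j)]
      · simp
      · intro q _; exact (hf q).2
  · intro f _ g _ h
    rw [← br_asm f, ← br_asm g, h]

lemma main (n j : ℕ) (hn : 2 ≤ n) (hj : 0 < j) : ∃ K, 0 < K ∧ ∀ u : VV n K (2 * j), u ≠ rt →
    (ekrStar (TT n K (2 * j)) (1 + n * K * j) u).card <
      (ekrStar (TT n K (2 * j)) (1 + n * K * j) rt).card := by
  obtain ⟨t, ht, ht1, hlt⟩ := exists_t n j hn hj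
  set P := FF j (PZ (2 * j)) t * FF j (PI (2 * j)) t ^ (n - 1) with hP
  have hP0 : 0 ≤ P := mul_nonneg (FF_nonneg _ _ ht.le) (pow_nonneg (FF_nonneg _ _ ht.le) _)
  set M := (PM j).card with hM
  have hMpos : 0 < M := PM_pos j
  have hMR : (0 : ℝ) < M := by exact_mod_cast hMpos
  have hMn : (0 : ℝ) < (M : ℝ) ^ n := by positivity
  have hn0 : (0 : ℝ) < n := by exact_mod_cast (by omega : 0 < n)
  have hρ : P / (M : ℝ) ^ n < 1 := (div_lt_one hMn).2 hlt
  have hρ0 : 0 ≤ P / (M : ℝ) ^ n := by positivity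
  obtain ⟨K₀, hK₀⟩ := exists_pow_lt_of_lt_one
    (show (0 : ℝ) < t ^ n / (2 ^ (n + 1) * n * M) by positivity) hρ
  refine ⟨K₀ + 1, by omega, ?_⟩
  generalize hKK : K₀ + 1 = K
  have hK : (P / (M : ℝ) ^ n) ^ K < t ^ n / (2 ^ (n + 1) * n * M) := by
    refine lt_of_le_of_lt ?_ hK₀
    exact pow_le_pow_of_le_one hρ0 hρ.le (by omega)
  have hnK : 0 < n * K := Nat.mul_pos (by omega) (by omega)
  have hub : ∀ i : Fin n, ((ekrStar (TT n K (2 * j)) (1 + n * K * j) (.inl (.inr i))).card : ℝ) * n <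
      (M : ℝ) ^ (n * K - 1) := by
    intro i
    have h := hub_bound n K j i t ht ht1
    rw [← hP] at h
    rw [div_pow, ← pow_mul, div_lt_div_iff₀ (by positivity) (by positivity)] at hK
    have e : (M : ℝ) ^ (n * K) = M ^ (n * K - 1) * M := by
      rw [← pow_succ]; congr 1; omega
    rw [e] at hK
    have htn : 0 < t ^ n := by positivity
    have : ((ekrStar (TT n K (2 * j)) (1 + n * K * j) (.inl (.inr i))).card : ℝ) * n * (t ^ n * M) <
      (M : ℝ) ^ (n * K - 1) * (t ^ n * M) := by
      calc _ = (((ekrStar (TT n K (2 * j)) (1 + n * K * j) (.inl (.inr i))).card : ℝ) * t ^ n) * (n * M) := by ring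
        _ ≤ (2 ^ (n + 1) * P ^ K) * (n * M) := by gcongr
        _ = P ^ K * (2 ^ (n + 1) * n * M) := by ring
        _ < _ := hK
        _ = _ := by ring
    exact lt_of_mul_lt_mul_right this (by positivity)
  have hub' : ∀ i : Fin n, (ekrStar (TT n K (2 * j)) (1 + n * K * j) (.inl (.inr i))).card * n <
      M ^ (n * K - 1) := fun i => by exact_mod_cast hub i
  have hroot := root_bound n K j
  rw [← hM] at hroot
  have e : M ^ (n * K) = (M - 1) * M ^ (n * K - 1) + M ^ (n * K - 1) := by
    rw [← Nat.succ_mul, Nat.succ_eq_add_one, Nat.sub_add_cancel hMpos, ← pow_succ']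
    congr 1
    omega
  intro u hu
  refine lt_of_lt_of_le ?_ hroot
  rw [e]
  rcases u with (u | i) | ⟨q, b⟩
  · exact absurd rfl hu
  · have := hub' i
    nlinarith [Nat.zero_le ((M - 1) * M ^ (n * K - 1))]
  · have hb := base_bound n K j q b
    rw [← hM] at hb
    set S := ekrStar (TT n K (2 * j)) (1 + n * K * j) (.inr (q, b)) with hS
    have hsub : S ⊆ (S.filter fun A => ∀ i, (Sum.inl (Sum.inr i)) ∉ A) ∪
        univ.biUnion fun i : Fin n => ekrStar (TT n K (2 * j)) (1 + n * K * j) (.inl (.inr i)) := by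
      intro A hA
      by_cases h : ∀ i, (Sum.inl (Sum.inr i)) ∉ A
      · exact mem_union_left _ (mem_filter.2 ⟨hA, h⟩)
      · push Not at h
        obtain ⟨i, hi⟩ := h
        apply mem_union_right
        rw [mem_biUnion]
        refine ⟨i, mem_univ _, ?_⟩
        rw [hS, mem_star] at hA
        rw [mem_star]
        exact ⟨hA.1, hA.2.1, hi⟩
    have h1 := (card_le_card hsub).trans (card_union_le _ _)
    have h2 := card_biUnion_le (s := (univ : Finset (Fin n)))
      (t := fun i : Fin n => ekrStar (TT n K (2 * j)) (1 + n * K * j) (.inl (.inr i)))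
    have h3 : (∑ i : Fin n, (ekrStar (TT n K (2 * j)) (1 + n * K * j) (.inl (.inr i))).card) * n
        < M ^ (n * K - 1) * n := by
      rw [sum_mul]
      calc _ < ∑ i : Fin n, M ^ (n * K - 1) := by
            apply sum_lt_sum_of_nonempty
            · exact ⟨⟨0, by omega⟩, mem_univ _⟩
            · intro i _; exact hub' i
        _ = _ := by simp [mul_comm]
    have h4 := lt_of_mul_lt_mul_right h3 (Nat.zero_le n)
    omega

end DeepStar

/-- For all `n ≥ 2` and `d ≥ 3` there is a positive integer `r` and a
finite tree `T` with a vertex `v` of degree `n`, at distance at least `d` from every leaf,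
such that the `r`-star centred at `v` is at least as large as every `r`-star of `T` and
strictly larger than every `r`-star centred at a leaf. -/
theorem exists_tree_star_centre_deep (n d : ℕ) (hn : 2 ≤ n) (hd : 3 ≤ d) :
    ∃ r : ℕ, 0 < r ∧ ∃ (N : ℕ) (T : SimpleGraph (Fin N)) (v : Fin N),
      T.IsTree ∧ T.degree v = n ∧
      (∀ u, T.degree u = 1 → d ≤ T.dist v u) ∧
      (∀ u, (ekrStar T r u).card ≤ (ekrStar T r v).card) ∧
      (∀ u, T.degree u = 1 → (ekrStar T r u).card < (ekrStar T r v).card) := by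
  obtain ⟨K, hK, H⟩ := DeepStar.main n d hn (by omega)
  exact DeepStar.transfer n K (2 * d) d (1 + n * K * d) hn hK (by omega) (by omega) (by omega) H
end

section
/- Let n and r be positive integers with n ≥ r, and let G be a depth-two claw with n leaves. Then for every leaf x of G, |I^(r)_x(G)| = C(n−1, r−1)·2^(r−1) + C(n−1, r−2), and this quantity is at least |I^(r)_v(G)| for every vertex v of G; that is, the largest r-star of G is centred at a leaf and has this size. -/
open Finset SimpleGraph
open scoped Classical

variable {V : Type*}

lemma closer_unique {V : Type*} {G : SimpleGraph V} (hG : G.IsTree) (root v a b : V)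
    (ha : G.Adj a v) (hb : G.Adj b v) (hda : G.dist root v = G.dist root a + 1)
    (hdb : G.dist root v = G.dist root b + 1) : a = b := by
  obtain ⟨p, hp⟩ := hG.connected.exists_walk_length_eq_dist root a
  obtain ⟨q, hq⟩ := hG.connected.exists_walk_length_eq_dist root b
  have h1 : (p.concat ha).IsPath :=
    (p.concat ha).isPath_of_length_eq_dist (by rw [Walk.length_concat]; omega)
  have h2 : (q.concat hb).IsPath :=
    (q.concat hb).isPath_of_length_eq_dist (by rw [Walk.length_concat]; omega)
  have h3 := (hG.existsUnique_path root v).unique h1 h2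
  exact (Walk.concat_inj h3).1

lemma closer_exists {V : Type*} {G : SimpleGraph V} (hG : G.IsTree) (root v : V)
    (h : v ≠ root) : ∃ a, G.Adj v a ∧ G.dist root v = G.dist root a + 1 := by
  obtain ⟨p, hp⟩ := hG.connected.exists_walk_length_eq_dist v root
  cases p with
  | nil => exact absurd rfl h
  | @cons _ a _ hadj p =>
    refine ⟨a, hadj, ?_⟩
    have h1 := dist_le p
    rw [Walk.length_cons] at hp
    have h2 := hG.dist_eq_dist_add_one_of_adj root hadj
    rw [G.dist_comm (u := a)] at h1
    rw [G.dist_comm (u := v)] at hp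
    omega

lemma claw_structure {V : Type*} [Fintype V] (G : SimpleGraph V) (root : V)
    (hG : IsDepthTwoClaw G root) :
    ∃ m : {v // G.degree v = 1} → V, Function.Injective m ∧
      (∀ (i : {v // G.degree v = 1}) j, i.1 ≠ m j) ∧ (∀ i : {v // G.degree v = 1}, i.1 ≠ root) ∧ (∀ i, m i ≠ root) ∧
      (∀ v, v = root ∨ (∃ i : {v // G.degree v = 1}, v = i.1) ∨ ∃ i, v = m i) ∧
      (∀ i : {v // G.degree v = 1}, G.Adj i.1 (m i)) ∧ (∀ i, G.Adj root (m i)) ∧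
      (∀ (i : {v // G.degree v = 1}) v, G.Adj i.1 v → v = m i) ∧ (∀ v, G.Adj root v → ∃ i, v = m i) ∧
      (∀ i j, ¬ G.Adj (m i) (m j)) := by
  obtain ⟨⟨hT, hdeg⟩, hleaf⟩ := hG
  have hle2 : ∀ v, G.dist root v ≤ 2 := by
    obtain ⟨w, -, hw⟩ := Finset.exists_max_image univ (fun v => G.dist root v) ⟨root, mem_univ _⟩
    intro v
    by_contra hv
    have hw3 : 3 ≤ G.dist root w := by have := hw v (mem_univ _); omega
    have hwr : w ≠ root := by rintro rfl; simp at hw3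
    obtain ⟨a, ha, hda⟩ := closer_exists hT root w hwr
    have : G.degree w = 1 := by
      rw [degree_eq_one_iff_existsUnique_adj]
      refine ⟨a, ha, fun b hb => ?_⟩
      have h1 := hT.dist_eq_dist_add_one_of_adj root hb
      have h2 := hw b (mem_univ _)
      exact closer_unique hT root w b a hb.symm ha.symm (by omega) hda
    have := hleaf w this
    omega
  have hd2 : ∀ w, G.dist root w = 2 → G.degree w = 1 := by
    intro w hw
    have hwr : w ≠ root := by rintro rfl; simp at hw
    obtain ⟨a, ha, hda⟩ := closer_exists hT root w hwr
    rw [degree_eq_one_iff_existsUnique_adj]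
    refine ⟨a, ha, fun b hb => ?_⟩
    have h1 := hT.dist_eq_dist_add_one_of_adj root hb
    have h2 := hle2 b
    exact closer_unique hT root w b a hb.symm ha.symm (by omega) hda
  have hd1 : ∀ w, G.Adj root w → ∃ l, l ≠ root ∧ G.neighborFinset w = {root, l} := by
    intro w hw
    have h1 : G.dist root w = 1 := dist_eq_one_iff_adj.2 hw
    have h2 : G.degree w ≤ 2 := hdeg w hw.ne'
    have h3 : 0 < G.degree w := (G.degree_pos_iff_exists_adj w).2 ⟨root, hw.symm⟩
    have h4 : G.degree w ≠ 1 := fun h => by have := hleaf w h; omega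
    have h5 : (G.neighborFinset w).card = 2 := by rw [card_neighborFinset_eq_degree]; omega
    have h6 : root ∈ G.neighborFinset w := by simpa using hw.symm
    obtain ⟨x, y, hxy, he⟩ := Finset.card_eq_two.1 h5
    rw [he] at h6 ⊢
    simp only [Finset.mem_insert, Finset.mem_singleton] at h6
    rcases h6 with rfl | rfl
    · exact ⟨y, hxy.symm, rfl⟩
    · exact ⟨x, hxy, Finset.pair_comm _ _⟩
  have hm : ∀ i : {v // G.degree v = 1}, ∃ a, G.Adj i.1 a ∧ G.Adj root a := by
    rintro ⟨v, hv⟩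
    have h2 := hleaf v hv
    obtain ⟨a, ha, hda⟩ := closer_exists hT root v (by rintro rfl; simp at h2)
    exact ⟨a, ha, dist_eq_one_iff_adj.1 (by omega)⟩
  choose m hm1 hm2 using hm
  have hir : ∀ i : {v // G.degree v = 1}, i.1 ≠ root := by
    rintro ⟨v, hv⟩ rfl
    have := hleaf _ hv
    simp at this
  have hrm : ∀ v, G.Adj root v → ∃ i, v = m i := by
    intro v hv
    obtain ⟨l, hl, hN⟩ := hd1 v hv
    have hvl : G.Adj v l := by
      have : l ∈ G.neighborFinset v := by rw [hN]; simp
      simpa using this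
    have h1 := hT.dist_eq_dist_add_one_of_adj root hvl
    have h2 := hle2 l
    have h3 := dist_eq_one_iff_adj.2 hv
    have h4 : G.dist root l ≠ 0 := by
      rw [Ne, hT.connected.dist_eq_zero_iff]; exact hl.symm
    have h5 := hd2 l (by omega)
    obtain ⟨a, -, hu⟩ := degree_eq_one_iff_existsUnique_adj.1 h5
    exact ⟨⟨l, h5⟩, (hu v hvl.symm).trans (hu _ (hm1 ⟨l, h5⟩)).symm⟩
  refine ⟨m, ?_, ?_, hir, fun i => (hm2 i).ne', ?_, hm1, hm2, ?_, hrm, ?_⟩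
  · intro i j hij
    obtain ⟨l, hl, hN⟩ := hd1 (m i) (hm2 i)
    have h1 : i.1 ∈ G.neighborFinset (m i) := by simpa using (hm1 i).symm
    have h2 : j.1 ∈ G.neighborFinset (m i) := by rw [hij]; simpa using (hm1 j).symm
    rw [hN] at h1 h2
    have := hir i
    have := hir j
    apply Subtype.ext
    grind
  · intro i j h
    have h1 := hleaf i.1 i.2
    have h2 := dist_eq_one_iff_adj.2 (hm2 j)
    rw [h] at h1
    omega
  · intro v
    have h := hle2 v
    by_cases h0 : G.dist root v = 0
    · left; exact (hT.connected.dist_eq_zero_iff.1 h0).symm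
    by_cases h1 : G.dist root v = 1
    · right; right; exact hrm v (dist_eq_one_iff_adj.1 h1)
    · right; left; exact ⟨⟨v, hd2 v (by omega)⟩, rfl⟩
  · intro i v hv
    obtain ⟨a, -, hu⟩ := degree_eq_one_iff_existsUnique_adj.1 i.2
    exact (hu v hv).trans (hu _ (hm1 i)).symm
  · intro i j h
    have := hT.dist_eq_dist_add_one_of_adj root h
    rw [dist_eq_one_iff_adj.2 (hm2 i), dist_eq_one_iff_adj.2 (hm2 j)] at this
    omega

/-- Independence in terms of the legs. -/
lemma indep_iff {V ι : Type*} (G : SimpleGraph V) (root : V) (l m : ι → V)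
    (hcov : ∀ v, v = root ∨ (∃ i, v = l i) ∨ ∃ i, v = m i)
    (h1 : ∀ i, G.Adj (l i) (m i)) (h2 : ∀ i, G.Adj root (m i))
    (h3 : ∀ i v, G.Adj (l i) v → v = m i) (h4 : ∀ v, G.Adj root v → ∃ i, v = m i)
    (hmm : ∀ i j, ¬ G.Adj (m i) (m j)) (A : Finset V) :
    (∀ x ∈ A, ∀ y ∈ A, ¬ G.Adj x y) ↔
      (∀ i, ¬ (l i ∈ A ∧ m i ∈ A)) ∧ (root ∈ A → ∀ i, m i ∉ A) := by
  constructor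
  · intro h
    exact ⟨fun i hi => h _ hi.1 _ hi.2 (h1 i), fun hr i hi => h _ hr _ hi (h2 i)⟩
  · rintro ⟨ha, hb⟩ x hx y hy hxy
    rcases hcov x with rfl | ⟨i, rfl⟩ | ⟨i, rfl⟩
    · obtain ⟨i, rfl⟩ := h4 _ hxy
      exact hb hx i hy
    · obtain rfl := h3 _ _ hxy
      exact ha i ⟨hx, hy⟩
    · rcases hcov y with rfl | ⟨j, rfl⟩ | ⟨j, rfl⟩
      · exact hb hy i hx
      · have := h3 _ _ hxy.symm
        rw [this] at hx
        exact ha j ⟨hy, hx⟩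
      · exact hmm i j hxy

lemma count_noroot {V ι : Type*} [Fintype V] [Fintype ι] (root : V) (l m : ι → V)
    (hl : Function.Injective l) (hm : Function.Injective m) (hlm : ∀ i j, l i ≠ m j)
    (hlr : ∀ i, l i ≠ root) (hmr : ∀ i, m i ≠ root)
    (hcov : ∀ v, v = root ∨ (∃ i, v = l i) ∨ ∃ i, v = m i)
    (x : ι) (c : V) (hc : c = l x ∨ c = m x) (r : ℕ) :
    (univ.filter fun A : Finset V => A.card = r + 1 ∧ c ∈ A ∧ root ∉ A ∧
      ∀ i, ¬ (l i ∈ A ∧ m i ∈ A)).card = (Fintype.card ι - 1).choose r * 2 ^ r := by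
  have hcard : ((powersetCard r ((univ : Finset ι).erase x)).sigma
      (fun S => S.powerset)).card = (Fintype.card ι - 1).choose r * 2 ^ r := by
    rw [Finset.card_sigma, Finset.sum_congr rfl (g := fun _ => 2 ^ r)]
    · simp [Finset.card_erase_of_mem]
    · intro S hS
      rw [card_powerset, (mem_powersetCard.1 hS).2]
  rw [← hcard]
  symm
  have hcl : ∀ i, i ≠ x → c ≠ l i := by
    intro i hi h; rcases hc with rfl | rfl
    · exact hi (hl h).symm
    · exact hlm _ _ h.symm
  have hcm : ∀ i, i ≠ x → c ≠ m i := by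
    intro i hi h; rcases hc with rfl | rfl
    · exact hlm _ _ h
    · exact hi (hm h).symm
  have hcr : c ≠ root := by rcases hc with rfl | rfl; exacts [hlr _, hmr _]
  have hF : ∀ S T : Finset ι, T ⊆ S → x ∉ S →
      (insert c ((S \ T).image l ∪ T.image m)).card = S.card + 1 := by
    intro S T hTS hx
    rw [card_insert_of_notMem, card_union_of_disjoint, card_image_of_injective _ hl,
      card_image_of_injective _ hm, card_sdiff_add_card_eq_card hTS]
    · rw [Finset.disjoint_left]; intro a ha hb
      obtain ⟨i, -, rfl⟩ := mem_image.1 ha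
      obtain ⟨j, -, h⟩ := mem_image.1 hb
      exact hlm _ _ h.symm
    · intro h
      rcases mem_union.1 h with h | h
      · obtain ⟨i, hi, h⟩ := mem_image.1 h
        exact hcl i (by rintro rfl; exact hx (mem_sdiff.1 hi).1) h.symm
      · obtain ⟨i, hi, h⟩ := mem_image.1 h
        exact hcm i (by rintro rfl; exact hx (hTS hi)) h.symm
  have hml : ∀ (S T : Finset ι) i, i ≠ x →
      (l i ∈ insert c ((S \ T).image l ∪ T.image m) ↔ i ∈ S ∧ i ∉ T) := by
    intro S T i hi
    have h1 := hcl i hi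
    simp only [mem_insert, mem_union, mem_image, mem_sdiff]
    constructor
    · rintro (h | ⟨j, hj, h⟩ | ⟨j, hj, h⟩)
      · exact absurd h.symm h1
      · exact hl h ▸ hj
      · exact absurd h.symm (hlm _ _)
    · intro h; exact Or.inr (Or.inl ⟨i, h, rfl⟩)
  have hmm : ∀ (S T : Finset ι) i, i ≠ x →
      (m i ∈ insert c ((S \ T).image l ∪ T.image m) ↔ i ∈ T) := by
    intro S T i hi
    have h1 := hcm i hi
    simp only [mem_insert, mem_union, mem_image, mem_sdiff]
    constructor
    · rintro (h | ⟨j, hj, h⟩ | ⟨j, hj, h⟩)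
      · exact absurd h.symm h1
      · exact absurd h (hlm _ _)
      · exact hm h ▸ hj
    · intro h; exact Or.inr (Or.inr ⟨i, h, rfl⟩)
  have hroot : ∀ S T : Finset ι, root ∉ insert c ((S \ T).image l ∪ T.image m) := by
    intro S T
    simp only [mem_insert, mem_union, mem_image, mem_sdiff]
    rintro (h | ⟨j, hj, h⟩ | ⟨j, hj, h⟩)
    · exact hcr h.symm
    · exact hlr _ h
    · exact hmr _ h
  have hx2 : ∀ S T : Finset ι, T ⊆ S → x ∉ S →
      ¬ (l x ∈ insert c ((S \ T).image l ∪ T.image m) ∧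
        m x ∈ insert c ((S \ T).image l ∪ T.image m)) := by
    intro S T hTS hx
    simp only [mem_insert, mem_union, mem_image, mem_sdiff]
    have e1 : ¬ ∃ a, (a ∈ S ∧ a ∉ T) ∧ l a = l x := by
      rintro ⟨a, ha, h⟩; exact hx (hl h ▸ ha.1)
    have e2 : ¬ ∃ a, a ∈ T ∧ m a = m x := by
      rintro ⟨a, ha, h⟩; exact hx (hm h ▸ hTS ha)
    have e3 : ¬ ∃ a, a ∈ T ∧ m a = l x := by
      rintro ⟨a, ha, h⟩; exact hlm _ _ h.symm
    have e4 : ¬ ∃ a, (a ∈ S ∧ a ∉ T) ∧ l a = m x := by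
      rintro ⟨a, ha, h⟩; exact hlm _ _ h
    have e5 := hlm x x
    simp only [e1, e2, e3, e4, or_false]
    rintro ⟨rfl, h⟩
    exact e5 h.symm
  refine Finset.card_bij (fun p _ => insert c ((p.1 \ p.2).image l ∪ p.2.image m)) ?_ ?_ ?_
  · rintro ⟨S, T⟩ h
    simp only [mem_sigma, mem_powersetCard, mem_powerset] at h
    obtain ⟨⟨hS, hSc⟩, hT⟩ := h
    have hx : x ∉ S := fun hx => by simpa using hS hx
    simp only [mem_filter, mem_univ, true_and]
    refine ⟨by rw [hF S T hT hx, hSc], mem_insert_self _ _, hroot S T, fun i => ?_⟩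
    by_cases hi : i = x
    · subst hi; exact hx2 S T hT hx
    · rw [hml S T i hi, hmm S T i hi]; tauto
  · rintro ⟨S, T⟩ h ⟨S', T'⟩ h' heq
    simp only [mem_sigma, mem_powersetCard, mem_powerset] at h h'
    obtain ⟨⟨hS, hSc⟩, hT⟩ := h
    obtain ⟨⟨hS', hSc'⟩, hT'⟩ := h'
    have hx : x ∉ S := fun hx => by simpa using hS hx
    have hx' : x ∉ S' := fun hx => by simpa using hS' hx
    simp only at heq
    have hTT : ∀ i, i ∈ T ↔ i ∈ T' := by
      intro i
      by_cases hi : i = x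
      · subst hi; exact ⟨fun h => absurd (hT h) hx, fun h => absurd (hT' h) hx'⟩
      · rw [← hmm S T i hi, ← hmm S' T' i hi, heq]
    have hSS : ∀ i, i ∈ S ↔ i ∈ S' := by
      intro i
      by_cases hi : i = x
      · subst hi; exact ⟨fun h => absurd h hx, fun h => absurd h hx'⟩
      · have e1 := hml S T i hi
        rw [heq, hml S' T' i hi] at e1
        have := hTT i
        have := @hT i
        have := @hT' i
        tauto
    obtain rfl := Finset.ext hSS
    obtain rfl := Finset.ext hTT
    rfl
  · intro A hA
    simp only [mem_filter, mem_univ, true_and] at hA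
    obtain ⟨hA, hcA, hrA, hI⟩ := hA
    have key : ∀ S T : Finset ι, S = univ.filter (fun i => i ≠ x ∧ (l i ∈ A ∨ m i ∈ A)) →
        T = univ.filter (fun i => i ≠ x ∧ m i ∈ A) →
        insert c ((S \ T).image l ∪ T.image m) = A := by
      intro S T hS hT
      have hTS : T ⊆ S := by
        rw [hS, hT]; intro i; simp only [mem_filter, mem_univ, true_and]; tauto
      have hx : x ∉ S := by rw [hS]; simp
      ext v
      rcases hcov v with rfl | ⟨i, rfl⟩ | ⟨i, rfl⟩
      · exact ⟨fun h => absurd h (hroot S T), fun h => absurd h hrA⟩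
      · by_cases hi : i = x
        · subst hi
          rcases hc with rfl | rfl
          · exact ⟨fun _ => hcA, fun _ => mem_insert_self _ _⟩
          · exact ⟨fun h => absurd ⟨h, mem_insert_self _ _⟩ (hx2 S T hTS hx),
              fun h => absurd ⟨h, hcA⟩ (hI i)⟩
        · rw [hml S T i hi, hS, hT]
          have := hI i
          simp only [mem_filter, mem_univ, true_and]; tauto
      · by_cases hi : i = x
        · subst hi
          rcases hc with rfl | rfl
          · exact ⟨fun h => absurd ⟨mem_insert_self _ _, h⟩ (hx2 S T hTS hx),
              fun h => absurd ⟨hcA, h⟩ (hI i)⟩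
          · exact ⟨fun _ => hcA, fun _ => mem_insert_self _ _⟩
        · rw [hmm S T i hi, hT]
          simp only [mem_filter, mem_univ, true_and]; tauto
    refine ⟨⟨univ.filter (fun i => i ≠ x ∧ (l i ∈ A ∨ m i ∈ A)),
      univ.filter (fun i => i ≠ x ∧ m i ∈ A)⟩, ?_, key _ _ rfl rfl⟩
    have hTS : univ.filter (fun i => i ≠ x ∧ m i ∈ A) ⊆
        univ.filter (fun i => i ≠ x ∧ (l i ∈ A ∨ m i ∈ A)) := by
      intro i; simp only [mem_filter, mem_univ, true_and]; tauto
    have hc1 := hF _ _ hTS (by simp)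
    rw [key _ _ rfl rfl, hA] at hc1
    simp only [mem_sigma, mem_powersetCard, mem_powerset]
    refine ⟨⟨?_, by omega⟩, hTS⟩
    intro i; simp only [mem_filter, mem_erase, mem_univ, true_and]; tauto

lemma count_root {V ι : Type*} [Fintype V] [Fintype ι] (root : V) (l m : ι → V)
    (hl : Function.Injective l) (hlm : ∀ i j, l i ≠ m j)
    (hlr : ∀ i, l i ≠ root) (hmr : ∀ i, m i ≠ root)
    (hcov : ∀ v, v = root ∨ (∃ i, v = l i) ∨ ∃ i, v = m i) (P : Finset ι → Prop) (r : ℕ) :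
    (univ.filter fun A : Finset V => A.card = r + 1 ∧ P (univ.filter fun i => l i ∈ A) ∧ root ∈ A ∧
      ∀ i, m i ∉ A).card = ((powersetCard r (univ : Finset ι)).filter P).card := by
  have hml : ∀ (S : Finset ι), (univ.filter fun i => l i ∈ insert root (S.image l)) = S := by
    intro S
    ext i
    simp [hlr, hl.eq_iff]
  have hF : ∀ S : Finset ι, (insert root (S.image l)).card = S.card + 1 := by
    intro S
    rw [card_insert_of_notMem, card_image_of_injective _ hl]
    simp [hlr]
  symm
  refine Finset.card_bij (fun S _ => insert root (S.image l)) ?_ ?_ ?_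
  · intro S hS
    simp only [mem_filter, mem_powersetCard] at hS
    simp only [mem_filter, mem_univ, true_and]
    rw [hF, hml]
    refine ⟨by rw [hS.1.2], hS.2, mem_insert_self _ _, ?_⟩
    intro i
    simp [hmr, hlm]
  · intro S _ S' _ h
    rw [← hml S, ← hml S', h]
  · intro A hA
    simp only [mem_filter, mem_univ, true_and] at hA
    obtain ⟨hA, hP, hr, hm⟩ := hA
    have key : insert root ((univ.filter fun i => l i ∈ A).image l) = A := by
      ext v
      rcases hcov v with rfl | ⟨i, rfl⟩ | ⟨i, rfl⟩
      · simp [hr]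
      · simp [hlr, hl.eq_iff]
      · simp [hmr, hlm, hm]
    refine ⟨_, ?_, key⟩
    have h := hF (univ.filter fun i => l i ∈ A)
    rw [key, hA] at h
    simp only [mem_filter, mem_powersetCard]
    exact ⟨⟨subset_univ _, by omega⟩, hP⟩

lemma count_pc {ι : Type*} [Fintype ι] (x : ι) (r : ℕ) :
    ((powersetCard (r + 1) (univ : Finset ι)).filter fun S => x ∈ S).card =
      (Fintype.card ι - 1).choose r := by
  rw [← Finset.card_univ, ← Finset.card_erase_of_mem (mem_univ x), ← Finset.card_powersetCard]
  refine Finset.card_bij' (fun S _ => S.erase x) (fun S _ => insert x S) ?_ ?_ ?_ ?_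
  · intro S hS
    simp only [mem_filter, mem_powersetCard] at hS ⊢
    refine ⟨erase_subset_erase _ hS.1.1, ?_⟩
    rw [card_erase_of_mem hS.2, hS.1.2]; rfl
  · intro S hS
    simp only [mem_filter, mem_powersetCard] at hS ⊢
    have hx : x ∉ S := fun hx => by simpa using hS.1 hx
    refine ⟨⟨subset_univ _, ?_⟩, mem_insert_self _ _⟩
    rw [card_insert_of_notMem hx, hS.2]
  · intro S hS
    simp only [mem_filter] at hS
    exact insert_erase hS.2
  · intro S hS
    simp only [mem_powersetCard] at hS
    have hx : x ∉ S := fun hx => by simpa using hS.1 hx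
    exact erase_insert hx

/-- Let `G` be a depth-two claw with `n` leaves, `n ≥ r ≥ 1`.  Every
`r`-star centred at a leaf has size `C(n−1, r−1)·2^(r−1) + C(n−1, r−2)` (where the second
binomial coefficient is `0` when `r − 2 < 0`), and this is the maximum size of an `r`-star. -/
theorem depthTwoClaw_largest_star {V : Type*} [Fintype V] (n r : ℕ)
    (hn : 0 < n) (hr : 0 < r) (hrn : r ≤ n)
    (G : SimpleGraph V) (root : V) (hG : IsDepthTwoClaw G root)
    (hleaves : (univ.filter fun v => G.degree v = 1).card = n) :
    (∀ x, G.degree x = 1 →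
      (ekrStar G r x).card =
        (n - 1).choose (r - 1) * 2 ^ (r - 1) + (if 2 ≤ r then (n - 1).choose (r - 2) else 0)) ∧
    (∀ v, (ekrStar G r v).card ≤
        (n - 1).choose (r - 1) * 2 ^ (r - 1) + (if 2 ≤ r then (n - 1).choose (r - 2) else 0)) := by

  obtain ⟨m, hm, hlm, hlr, hmr, hcov, h1, h2, h3, h4, hmm⟩ := claw_structure G root hG
  have hind := indep_iff G root (fun i : {v // G.degree v = 1} => i.1) m hcov h1 h2 h3 h4 hmm
  have hι : Fintype.card {v // G.degree v = 1} = n := by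
    rw [Fintype.card_subtype]; exact hleaves
  obtain ⟨s, rfl⟩ : ∃ s, r = s + 1 := ⟨r - 1, by omega⟩
  have hl : Function.Injective (fun i : {v // G.degree v = 1} => i.1) := Subtype.val_injective
  have hno := count_noroot root (fun i : {v // G.degree v = 1} => i.1) m hl hm hlm hlr hmr hcov
  have hro := count_root root (fun i : {v // G.degree v = 1} => i.1) m hl hlm hlr hmr hcov
  rw [hι] at hno
  have hmem : ∀ v A, A ∈ ekrStar G (s + 1) v ↔
      ((∀ i : {v // G.degree v = 1}, ¬ (i.1 ∈ A ∧ m i ∈ A)) ∧ (root ∈ A → ∀ i, m i ∉ A)) ∧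
        A.card = s + 1 ∧ v ∈ A := by
    intro v A
    simp only [ekrStar, indepSetsSize, indepSets, mem_filter, mem_univ, true_and, and_assoc]
    rw [hind A]
    simp only [and_assoc]
  have hleaf : ∀ x, G.degree x = 1 → (ekrStar G (s + 1) x).card =
      (n - 1).choose (s + 1 - 1) * 2 ^ (s + 1 - 1) +
        (if 2 ≤ s + 1 then (n - 1).choose (s + 1 - 2) else 0) := by
    intro x hx
    rw [← Finset.card_filter_add_card_filter_not (fun A => root ∉ A)]
    congr 1
    · rw [Nat.add_sub_cancel, ← hno ⟨x, hx⟩ x (Or.inl rfl) s]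
      congr 1
      ext A
      simp only [mem_filter, hmem, mem_univ, true_and]
      tauto
    · have e : ((ekrStar G (s + 1) x).filter (fun A => ¬ root ∉ A)).card =
          ((powersetCard s (univ : Finset {v // G.degree v = 1})).filter
            (fun S => (⟨x, hx⟩ : {v // G.degree v = 1}) ∈ S)).card := by
        have e0 := hro (fun S => (⟨x, hx⟩ : {v // G.degree v = 1}) ∈ S) s
        refine Eq.trans ?_ (e0.trans (by congr!))
        congr 1
        ext A
        simp only [mem_filter, hmem, mem_univ, true_and, not_not]
        constructor
        · tauto
        · rintro ⟨ha, hb, hc, hd⟩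
          exact ⟨⟨⟨fun i hi => hd i hi.2, fun _ => hd⟩, ha, hb⟩, hc⟩
      rw [e]
      cases s with
      | zero => simp
      | succ t =>
        have e1 := count_pc (⟨x, hx⟩ : {v // G.degree v = 1}) t
        rw [hι] at e1
        rw [if_pos (by omega)]
        exact Eq.trans (by congr!) e1
  refine ⟨hleaf, fun v => ?_⟩
  rcases hcov v with rfl | ⟨i, rfl⟩ | ⟨i, rfl⟩
  · have e : (ekrStar G (s + 1) v).card =
        (powersetCard s (univ : Finset {v // G.degree v = 1})).card := by
      have e0 := hro (fun _ => True) s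
      refine Eq.trans ?_ (e0.trans (by congr 1; ext A; simp))
      congr 1
      ext A
      simp only [mem_filter, hmem, mem_univ, true_and]
      constructor
      · tauto
      · rintro ⟨ha, hb, hc⟩
        exact ⟨⟨fun i hi => hc i hi.2, fun _ => hc⟩, ha, hb⟩
    rw [e, card_powersetCard, card_univ, hι]
    cases s with
    | zero => simp
    | succ t =>
      obtain ⟨k, rfl⟩ : ∃ k, n = k + 1 := ⟨n - 1, by omega⟩
      rw [if_pos (by omega), Nat.choose_succ_succ]
      have : 1 ≤ 2 ^ (t + 1) := Nat.one_le_two_pow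
      have := Nat.mul_le_mul_left (k.choose (t + 1)) this
      have e2 : t + 1 + 1 - 2 = t := by omega
      simp only [Nat.add_sub_cancel, e2]
      have e3 : t.succ = t + 1 := rfl
      simp only [e3]
      omega
  · exact (hleaf i.1 i.2).le
  · refine le_trans (le_of_eq ?_) (Nat.le_add_right _ _)
    rw [Nat.add_sub_cancel, ← hno i (m i) (Or.inr rfl) s]
    congr 1
    ext A
    simp only [mem_filter, hmem, mem_univ, true_and]
    constructor
    · rintro ⟨⟨ha, hb⟩, hc, hd⟩
      exact ⟨hc, hd, fun h => hb h i hd, ha⟩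
    · tauto
end

section
/- Let r be a positive integer, let G be an elongated claw with root c that has at least one short limb, and let x be a leaf of G adjacent to c. Then |I^(r)_x(G)| ≥ |I^(r)_v(G)| for every vertex v of G; that is, x is the centre of a largest r-star of G. -/
open Finset SimpleGraph
open scoped Classical

variable {V : Type*}

/-- In an elongated claw with a short limb, any leaf `x` adjacent to the
root is the centre of a largest `r`-star. -/
theorem elongatedClaw_shortLimb_star {V : Type*} [Fintype V] (r : ℕ) (hr : 0 < r)
    (G : SimpleGraph V) (c : V) (hG : IsElongatedClaw G c)
    (x : V) (hx : G.degree x = 1) (hxc : G.Adj c x) :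
    ∀ v, (ekrStar G r v).card ≤ (ekrStar G r x).card := by
  intro v
  obtain ⟨hT, hdeg⟩ := hG
  obtain ⟨p, hp⟩ := hT.connected.exists_isPath x v
  obtain ⟨n, hn⟩ : ∃ n, p.length = n := ⟨_, rfl⟩
  obtain ⟨f, hf⟩ : ∃ f : ℕ → V, f = p.getVert := ⟨_, rfl⟩
  have f0 : f 0 = x := by simp [hf]
  have fn : f n = v := by rw [hf, ← hn]; simp
  have fadj : ∀ i, i < n → G.Adj (f i) (f (i+1)) := by
    intro i hi; rw [hf]; exact p.adj_getVert_succ (by omega)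
  have finj : ∀ i j, i ≤ n → j ≤ n → f i = f j → i = j := by
    intro i j hi hj h
    exact hp.getVert_injOn (by simp; omega) (by simp; omega) (by rw [← hf]; exact h)
  have xn : ∀ w u, G.Adj x w → G.Adj x u → w = u := by
    intro w u hw hu
    rw [← card_neighborFinset_eq_degree] at hx
    exact Finset.card_le_one.1 hx.le w (by simpa using hw) u (by simpa using hu)
  have f1 : 1 ≤ n → f 1 = c := by
    intro h
    exact xn _ _ (by have := fadj 0 (by omega); rwa [f0] at this) hxc.symm
  have K : ∀ k w, k < n → k ≠ 1 → G.Adj (f k) w → ∃ j, j ≤ n ∧ f j = w ∧ (j = k+1 ∨ j+1=k) := by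
    intro k w hk h1 hw
    rcases Nat.eq_zero_or_pos k with rfl | h0
    · refine ⟨1, by omega, ?_, by simp⟩
      have := fadj 0 hk
      rw [f0] at this hw
      exact xn _ _ this hw
    · have hc : f k ≠ c := by
        intro h
        rw [← f1 (by omega)] at h
        exact h1 (finj _ _ hk.le (by omega) h)
      have hd := hdeg _ hc
      rw [← card_neighborFinset_eq_degree] at hd
      have a1 := fadj k hk
      have a2 := fadj (k-1) (by omega)
      rw [Nat.sub_add_cancel h0] at a2
      have hne : f (k-1) ≠ f (k+1) := fun h => by
        have := finj _ _ (by omega) (by omega) h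
        omega
      have hs : ({f (k-1), f (k+1)} : Finset V) ⊆ G.neighborFinset (f k) := by
        intro y hy
        simp only [Finset.mem_insert, Finset.mem_singleton] at hy
        rcases hy with rfl | rfl
        · simpa using a2.symm
        · simpa using a1
      have he := Finset.eq_of_subset_of_card_le hs (by rw [Finset.card_pair hne]; exact hd)
      have hm : w ∈ G.neighborFinset (f k) := by simpa using hw
      rw [← he] at hm
      simp only [Finset.mem_insert, Finset.mem_singleton] at hm
      rcases hm with rfl | rfl
      · exact ⟨k-1, by omega, rfl, by omega⟩
      · exact ⟨k+1, by omega, rfl, by omega⟩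
  obtain ⟨σ, s1, s2⟩ : ∃ σ : V → V, (∀ i ≤ n, σ (f i) = f (n - i)) ∧
      ∀ u, (¬ ∃ i ≤ n, f i = u) → σ u = u := by
    refine ⟨fun u => if h : ∃ i ≤ n, f i = u then f (n - h.choose) else u, ?_, ?_⟩
    · intro i hi
      have h : ∃ j ≤ n, f j = f i := ⟨i, hi, rfl⟩
      have := finj _ _ h.choose_spec.1 hi h.choose_spec.2
      simp only [dif_pos h, this]
    · intro u hu
      simp only [dif_neg hu]
  have sinv : Function.Involutive σ := by
    intro u
    by_cases h : ∃ i ≤ n, f i = u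
    · obtain ⟨i, hi, rfl⟩ := h
      rw [s1 i hi, s1 _ (by omega)]
      congr 1; omega
    · rw [s2 u h, s2 u h]
  have key : ∀ A : Finset V, (∀ a ∈ A, ∀ b ∈ A, ¬ G.Adj a b) → v ∈ A → 
      ∀ a ∈ A, ∀ b ∈ A, ¬ G.Adj (σ a) (σ b) := by
    intro A hA hv
    have N1 : ∀ i ≤ n, f i ∈ A → n - i ≠ 1 := by
      intro i hi hia h
      have := fadj i (by omega)
      rw [show i + 1 = n by omega, fn] at this
      exact hA _ hia _ hv this
    have main : ∀ i ≤ n, f i ∈ A → n - i < n → ∀ b ∈ A, ¬ G.Adj (σ (f i)) (σ b) := by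
      intro i hi ha hlt b hb hadj
      rw [s1 i hi] at hadj
      obtain ⟨j, hj, hjb, hd⟩ := K _ _ hlt (N1 i hi ha) hadj
      have hb' : b = f (n - j) := by rw [← sinv b, ← hjb, s1 j hj]
      subst hb'
      rcases hd with hd | hd
      · have := fadj (n - j) (by omega)
        rw [show n - j + 1 = i by omega] at this
        exact hA _ hb _ ha this
      · have := fadj i (by omega)
        rw [show i + 1 = n - j by omega] at this
        exact hA _ ha _ hb this
    intro a ha b hb hadj
    by_cases h : ∃ i ≤ n, f i = a ∧ n - i < n
    · obtain ⟨i, hi, rfl, hlt⟩ := h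
      exact main i hi ha hlt b hb hadj
    by_cases h' : ∃ i ≤ n, f i = b ∧ n - i < n
    · obtain ⟨i, hi, rfl, hlt⟩ := h'
      exact main i hi hb hlt a ha hadj.symm
    have Q : ∀ a ∈ A, (¬ ∃ i ≤ n, f i = a ∧ n - i < n) → σ a ∈ A := by
      intro a ha h
      by_cases g : ∃ i ≤ n, f i = a
      · obtain ⟨i, hi, rfl⟩ := g
        have : ¬ n - i < n := fun hl => h ⟨i, hi, rfl, hl⟩
        rw [s1 i hi, show n - i = n by omega, fn]
        exact hv
      · rwa [s2 a g]
    exact hA _ (Q a ha h) _ (Q b hb h') hadj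
  refine Finset.card_le_card_of_injOn (fun A => A.image σ) ?_ ?_
  · intro A hA
    simp only [ekrStar, indepSetsSize, indepSets, Finset.coe_filter, Finset.mem_filter,
      Finset.mem_univ, true_and, Set.mem_ofPred_eq] at hA ⊢
    obtain ⟨⟨hI, hc⟩, hv⟩ := hA
    refine ⟨⟨?_, ?_⟩, ?_⟩
    · intro a ha b hb
      obtain ⟨a, ha2, rfl⟩ := Finset.mem_image.1 ha
      obtain ⟨b, hb2, rfl⟩ := Finset.mem_image.1 hb
      exact key A hI hv a ha2 b hb2
    · rw [Finset.card_image_of_injective _ sinv.injective, hc]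
    · refine Finset.mem_image.2 ⟨v, hv, ?_⟩
      rw [← fn, s1 n le_rfl, Nat.sub_self, f0]
  · exact (Finset.image_injective sinv.injective).injOn
end

section
/- Let m, k and a be positive integers, let b be a nonnegative integer, and let G be the disjoint union of m copies of the (k,a)-claw. Then the number of independent sets of G that contain the roots of at least b of the m (k,a)-claws equals the sum over i from b to m of C(m, i)·F(a−1)^(i·k)·F(a)^((m−i)·k). -/
open Finset SimpleGraph
open scoped Classical

variable {V : Type*}

/-- The number of independent sets (of any size) of `G` containing the vertex `v`. -/
noncomputable def countContaining [Fintype V] (G : SimpleGraph V) (v : V) : ℕ :=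
  ((indepSets G).filter fun A => v ∈ A).card

/-- `F a` is the number of independent sets (including `∅`) of the path on `a` vertices. -/
noncomputable def F (a : ℕ) : ℕ := (indepSets (pathGraph a)).card

/-- The `(k,a)`-claw: an elongated claw with `k` limbs each of length `a`.  The vertex
`none` is the root and `some (i, j)` is the vertex of limb `i` at distance `j + 1` from
the root (so `some (i, a − 1)` is the leaf of limb `i`). -/
def kaClaw (k a : ℕ) : SimpleGraph (Option (Fin k × Fin a)) :=
  SimpleGraph.fromRel (fun x y =>
    (∃ i : Fin k, ∃ j : Fin a, x = none ∧ y = some (i, j) ∧ (j : ℕ) = 0) ∨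
    (∃ (i : Fin k) (j j' : Fin a), x = some (i, j) ∧ y = some (i, j') ∧ (j' : ℕ) = (j : ℕ) + 1))

/-- The disjoint union of `m` copies of the graph `H`. -/
def copies (m : ℕ) {W : Type*} (H : SimpleGraph W) : SimpleGraph (Fin m × W) where
  Adj := fun x y => x.1 = y.1 ∧ H.Adj x.2 y.2
  symm := ⟨fun _ _ h => ⟨h.1.symm, h.2.symm⟩⟩
  loopless := ⟨fun x h => H.loopless.irrefl x.2 h.2⟩

theorem mem_indepSets_imp {W : Type*} [Fintype W] {G : SimpleGraph W} {A : Finset W}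
    (h : A ∈ indepSets G) : ∀ x ∈ A, ∀ y ∈ A, ¬ G.Adj x y := by
  unfold indepSets at h
  exact (Finset.mem_filter.1 h).2

theorem kaClaw_adj_some (k a : ℕ) (i i' : Fin k) (j j' : Fin a) :
    (kaClaw k a).Adj (some (i, j)) (some (i', j')) ↔ i = i' ∧ (pathGraph a).Adj j j' := by
  simp only [kaClaw, SimpleGraph.fromRel_adj, pathGraph_adj]
  constructor
  · rintro ⟨-, (⟨_, _, h, -⟩ | ⟨x, y, z, h1, h2, h3⟩) | (⟨_, _, h, -⟩ | ⟨x, y, z, h1, h2, h3⟩)⟩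
    · simp at h
    · simp only [Option.some.injEq, Prod.mk.injEq] at h1 h2
      obtain ⟨rfl, rfl⟩ := h1
      obtain ⟨rfl, rfl⟩ := h2
      exact ⟨rfl, Or.inl h3.symm⟩
    · simp at h
    · simp only [Option.some.injEq, Prod.mk.injEq] at h1 h2
      obtain ⟨rfl, rfl⟩ := h1
      obtain ⟨rfl, rfl⟩ := h2
      exact ⟨rfl, Or.inr h3.symm⟩
  · rintro ⟨rfl, h⟩
    refine ⟨?_, ?_⟩
    · intro h'
      simp only [Option.some.injEq, Prod.mk.injEq] at h'
      have := h'.2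
      subst this
      omega
    · rcases h with h | h
      · exact Or.inl (Or.inr ⟨i, j, j', rfl, rfl, h.symm⟩)
      · exact Or.inr (Or.inr ⟨i, j', j, rfl, rfl, h.symm⟩)

theorem kaClaw_adj_none (k a : ℕ) (i : Fin k) (j : Fin a) :
    (kaClaw k a).Adj none (some (i, j)) ↔ (j : ℕ) = 0 := by
  simp only [kaClaw, SimpleGraph.fromRel_adj]
  constructor
  · rintro ⟨-, (⟨_, _, -, h, h'⟩ | ⟨x, y, z, h1, h2, h3⟩) | (⟨_, _, h, h', -⟩ | ⟨x, y, z, h1, h2, h3⟩)⟩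
    · simp only [Option.some.injEq, Prod.mk.injEq] at h
      obtain ⟨rfl, rfl⟩ := h
      exact h'
    · simp at h1
    · simp at h
    · simp at h2
  · intro h
    refine ⟨by simp, Or.inl (Or.inl ⟨i, j, ?_, rfl, h⟩)⟩
    first | trivial | rfl

theorem card_path_avoid (n : ℕ) :
    ((indepSets (pathGraph (n + 1))).filter fun A => (0 : Fin (n + 1)) ∉ A).card = F n := by
  symm
  unfold F
  refine Finset.card_bij (fun A _ => A.map (Fin.succEmb n)) ?_ ?_ ?_
  · intro A hA
    simp only [indepSets, Finset.mem_filter, Finset.mem_univ, true_and, pathGraph_adj] at hA ⊢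
    refine ⟨?_, ?_⟩
    · intro x hx y hy
      obtain ⟨x, hx1, rfl⟩ := Finset.mem_map.1 hx
      obtain ⟨y, hy1, rfl⟩ := Finset.mem_map.1 hy
      have := hA x hx1 y hy1
      simp
      omega
    · simp [Fin.succ_ne_zero]
  · intro A _ B _ h
    exact Finset.map_injective _ h
  · intro B hB
    simp only [indepSets, Finset.mem_filter, Finset.mem_univ, true_and, pathGraph_adj] at hB
    refine ⟨univ.filter fun x => x.succ ∈ B, ?_, ?_⟩
    · simp only [indepSets, Finset.mem_filter, Finset.mem_univ, true_and, pathGraph_adj]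
      intro x hx y hy
      have := hB.1 _ hx _ hy
      simp at this
      omega
    · ext x
      simp only [Finset.mem_map, Finset.mem_filter, Finset.mem_univ, true_and]
      refine Fin.cases ?_ (fun y => ?_) x
      · simp [Fin.succ_ne_zero, hB.2]
      · simp

theorem card_fiber (m k n : ℕ) (S : Finset (Fin m)) :
    ((indepSets (copies m (kaClaw k (n + 1)))).filter fun A =>
        (univ.filter fun i : Fin m =>
          (i, (none : Option (Fin k × Fin (n + 1)))) ∈ A) = S).card =
      F n ^ (S.card * k) * F (n + 1) ^ ((m - S.card) * k) := by
  have h1 : (Fintype.piFinset fun p : Fin m × Fin k =>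
      if p.1 ∈ S then (indepSets (pathGraph (n + 1))).filter fun A => (0 : Fin (n + 1)) ∉ A
      else indepSets (pathGraph (n + 1))).card =
      F n ^ (S.card * k) * F (n + 1) ^ ((m - S.card) * k) := by
    rw [Fintype.card_piFinset, Fintype.prod_prod_type]
    have : ∀ x : Fin m, ∏ y : Fin k, (if x ∈ S then
        (indepSets (pathGraph (n + 1))).filter fun A => (0 : Fin (n + 1)) ∉ A
        else indepSets (pathGraph (n + 1))).card =
        if x ∈ S then F n ^ k else F (n + 1) ^ k := by
      intro x
      split_ifs
      · rw [card_path_avoid]; simp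
      · simp [F]
    rw [Finset.prod_congr rfl (fun x _ => this x), Finset.prod_ite]
    have e1 : (univ.filter fun x => x ∈ S) = S := by ext; simp
    have e2 : (univ.filter fun x => x ∉ S) = Sᶜ := by ext; simp
    rw [e1, e2, Finset.prod_const, Finset.prod_const, Finset.card_compl, Fintype.card_fin,
      ← pow_mul, ← pow_mul, mul_comm k, mul_comm k]
  rw [← h1]
  refine Finset.card_bij'
    (fun A _ => fun p => univ.filter fun j => (p.1, some (p.2, j)) ∈ A)
    (fun f _ => univ.filter fun v => match v with
      | (i, none) => i ∈ S
      | (i, some (l, j)) => j ∈ f (i, l)) ?_ ?_ ?_ ?_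
  · intro A hA
    simp only [indepSets, Finset.mem_filter, Finset.mem_univ, true_and] at hA
    obtain ⟨hA, rfl⟩ := hA
    rw [Fintype.mem_piFinset]
    rintro ⟨i, l⟩
    have key : (univ.filter fun j => (i, some (l, j)) ∈ A) ∈ indepSets (pathGraph (n + 1)) := by
      simp only [indepSets, Finset.mem_filter, Finset.mem_univ, true_and]
      intro x hx y hy hxy
      exact hA _ hx _ hy ⟨rfl, (kaClaw_adj_some _ _ _ _ _ _).2 ⟨rfl, hxy⟩⟩
    dsimp only
    split_ifs with h
    · rw [Finset.mem_filter]
      refine ⟨key, ?_⟩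
      simp only [Finset.mem_filter, Finset.mem_univ, true_and] at h ⊢
      intro h'
      exact hA _ h _ h' ⟨rfl, (kaClaw_adj_none _ _ _ _).2 rfl⟩
    · exact key
  · intro f hf
    rw [Fintype.mem_piFinset] at hf
    have hf1 : ∀ p, ∀ x ∈ f p, ∀ y ∈ f p, ¬ (pathGraph (n + 1)).Adj x y := by
      intro p
      have := hf p
      split_ifs at this
      · exact mem_indepSets_imp (Finset.mem_filter.1 this).1
      · exact mem_indepSets_imp this
    have hf2 : ∀ p : Fin m × Fin k, p.1 ∈ S → (0 : Fin (n + 1)) ∉ f p := by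
      intro p hp
      have := hf p
      rw [if_pos hp] at this
      exact (Finset.mem_filter.1 this).2
    simp only [indepSets, Finset.mem_filter, Finset.mem_univ, true_and]
    refine ⟨?_, by ext; simp⟩
    rintro ⟨i, _ | ⟨l, j⟩⟩ hx ⟨i', _ | ⟨l', j'⟩⟩ hy ⟨h, hadj⟩
    · exact (kaClaw k (n + 1)).loopless.irrefl _ hadj
    · dsimp only at h hx hy hadj
      subst h
      have := (kaClaw_adj_none _ _ _ _).1 hadj
      have h0 : j' = 0 := Fin.ext this
      subst h0
      exact hf2 (i, l') hx hy
    · dsimp only at h hx hy hadj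
      subst h
      have := (kaClaw_adj_none _ _ _ _).1 hadj.symm
      have h0 : j = 0 := Fin.ext this
      subst h0
      exact hf2 (i, l) hy hx
    · dsimp only at h hx hy hadj
      subst h
      obtain ⟨rfl, h⟩ := (kaClaw_adj_some _ _ _ _ _ _).1 hadj
      exact hf1 _ _ hx _ hy h
  · intro A hA
    obtain ⟨-, rfl⟩ := Finset.mem_filter.1 hA
    ext ⟨i, _ | ⟨l, j⟩⟩ <;> simp
  · intro f hf
    ext p j
    simp

/-- If `G` is the disjoint union of `m` copies of the `(k,a)`-claw, then
the number of independent sets of `G` containing the roots of at least `b` of the claws is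
`∑_{i=b}^{m} C(m,i)·F(a−1)^{ik}·F(a)^{(m−i)k}`. -/
theorem copies_kaClaw_indepSets_count (m k a : ℕ) (hm : 0 < m) (hk : 0 < k) (ha : 0 < a)
    (b : ℕ) :
    ((indepSets (copies m (kaClaw k a))).filter fun A =>
        b ≤ (univ.filter fun i : Fin m =>
          (i, (none : Option (Fin k × Fin a))) ∈ A).card).card =
      ∑ i ∈ Finset.Icc b m, m.choose i * F (a - 1) ^ (i * k) * F a ^ ((m - i) * k) := by
  obtain ⟨n, rfl⟩ : ∃ n, a = n + 1 := ⟨a - 1, by omega⟩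
  rw [Nat.add_sub_cancel]
  have h1 := Finset.card_eq_sum_card_fiberwise
    (f := fun A : Finset (Fin m × Option (Fin k × Fin (n + 1))) =>
      univ.filter fun i : Fin m => (i, (none : Option (Fin k × Fin (n + 1)))) ∈ A)
    (s := (indepSets (copies m (kaClaw k (n + 1)))).filter fun A =>
        b ≤ (univ.filter fun i : Fin m =>
          (i, (none : Option (Fin k × Fin (n + 1)))) ∈ A).card)
    (t := (univ : Finset (Fin m)).powerset) (fun _ _ => by simp)
  rw [h1]
  have h2 : ∀ S ∈ (univ : Finset (Fin m)).powerset,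
      (((indepSets (copies m (kaClaw k (n + 1)))).filter fun A =>
        b ≤ (univ.filter fun i : Fin m =>
          (i, (none : Option (Fin k × Fin (n + 1)))) ∈ A).card).filter fun A =>
        (univ.filter fun i : Fin m =>
          (i, (none : Option (Fin k × Fin (n + 1)))) ∈ A) = S).card =
      (fun j => if b ≤ j then F n ^ (j * k) * F (n + 1) ^ ((m - j) * k) else 0) S.card := by
    intro S _
    dsimp only
    split_ifs with hb
    · rw [← card_fiber, Finset.filter_filter]
      congr 1
      apply Finset.filter_congr
      intro A _
      constructor
      · exact fun h => h.2
      · exact fun h => ⟨by rw [h]; exact hb, h⟩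
    · rw [Finset.card_eq_zero, Finset.filter_filter, Finset.filter_eq_empty_iff]
      rintro A _ ⟨h, h'⟩
      rw [h'] at h
      exact hb h
  rw [Finset.sum_congr rfl h2, Finset.sum_powerset_apply_card
    (fun j => if b ≤ j then F n ^ (j * k) * F (n + 1) ^ ((m - j) * k) else 0), Finset.card_univ, Fintype.card_fin]
  have h3 : Finset.Icc b m = (Finset.range (m + 1)).filter fun j => b ≤ j := by
    ext x
    simp only [Finset.mem_Icc, Finset.mem_filter, Finset.mem_range]
    omega
  rw [h3, Finset.sum_filter]
  apply Finset.sum_congr rfl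
  intro j _
  split_ifs <;> simp [mul_assoc]
end

section
/- Let n and a be integers with n ≥ 2 and a ≥ 2. For each positive integer k, let I_root(T^{n,k,a}) denote the number of independent sets (of any size) of T^{n,k,a} that contain its root, and let I_leaf(T^{n,k,a}) denote the number of independent sets (of any size) of T^{n,k,a} that contain a fixed leaf. Then the ratio I_root(T^{n,k,a}) / I_leaf(T^{n,k,a}) tends to (F(a−1) + F(a−2)) / (2·F(a−2)) as k tends to infinity. -/
open Finset SimpleGraph
open scoped Classical

variable {V : Type*}

/-- The tree `T^{n,k,a}`: `n` disjoint `(k,a)`-claws together with one further vertex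
(`none`, the root of `T^{n,k,a}`) joined by an edge to the root of each `(k,a)`-claw. -/
def superClaw (n k a : ℕ) : SimpleGraph (Option (Fin n × Option (Fin k × Fin a))) :=
  SimpleGraph.fromRel (fun x y =>
    (∃ m : Fin n, x = none ∧ y = some (m, none)) ∨
    (∃ (m : Fin n) (u w : Option (Fin k × Fin a)),
      x = some (m, u) ∧ y = some (m, w) ∧ (kaClaw k a).Adj u w))

def IndG {V : Type*} (G : SimpleGraph V) (f : V → Prop) : Prop :=
  ∀ x y, f x → f y → ¬ G.Adj x y

def IndP {a : ℕ} (f : Fin a → Prop) : Prop :=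
  ∀ j j' : Fin a, (j' : ℕ) = (j : ℕ) + 1 → f j → ¬ f j'

lemma card_filter_eq {V : Type*} [Fintype V] (q : (V → Prop) → Prop) (p : Finset V → Prop)
    {_ : DecidablePred p} (hpq : ∀ A, p A ↔ q (fun x => x ∈ A)) :
    ((univ : Finset (Finset V)).filter p).card = Nat.card {f : V → Prop // q f} := by
  rw [← Fintype.card_subtype, ← Nat.card_eq_fintype_card]
  refine Nat.card_congr ((Fintype.finsetEquivSet (α := V)).subtypeEquiv
    (p := p) (q := fun f : Set V => q f) ?_)
  intro A
  have : (Fintype.finsetEquivSet A : V → Prop) = fun x => x ∈ A := by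
    funext x
    simp [Fintype.finsetEquivSet]
    rfl
  rw [this, hpq]

lemma count_eq {V : Type*} [Fintype V] (G : SimpleGraph V) (v : V) :
    countContaining G v = Nat.card {f : V → Prop // IndG G f ∧ f v} := by
  rw [countContaining, indepSets, Finset.filter_filter]
  apply card_filter_eq (fun f => IndG G f ∧ f v)
  intro A
  constructor
  · rintro ⟨h, h'⟩
    exact ⟨fun x y hx hy => h x hx y hy, h'⟩
  · rintro ⟨h, h'⟩
    exact ⟨fun x hx y hy => h x y hx hy, h'⟩

lemma F_eq (a : ℕ) : F a = Nat.card {f : Fin a → Prop // IndP f} := by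
  rw [F, indepSets]
  apply card_filter_eq (fun f => IndP f)
  intro A
  simp only [IndP, pathGraph_adj]
  constructor
  · intro h x y e hx hy
    exact h x hx y hy (Or.inl e.symm)
  · rintro h x hx y hy (e | e)
    · exact h x y e.symm hx hy
    · exact h y x e.symm hy hx

lemma card_split {X : Type*} [Finite X] (p q : X → Prop) :
    Nat.card {x // p x} = Nat.card {x // p x ∧ ¬ q x} + Nat.card {x // p x ∧ q x} := by
  have := Fintype.ofFinite X
  simp only [Nat.card_eq_fintype_card, Fintype.card_subtype]
  rw [add_comm, ← Finset.filter_filter, ← Finset.filter_filter,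
    Finset.card_filter_add_card_filter_not]

lemma card_first (b : ℕ) :
    Nat.card {f : Fin (b+1) → Prop // IndP f ∧ ¬ f 0} = F b := by
  rw [F_eq]
  refine Nat.card_congr ⟨fun f => ⟨fun j => f.1 j.succ, ?_⟩,
    fun g => ⟨Fin.cons False g.1, ?_, ?_⟩, ?_, ?_⟩
  · intro j j' h
    exact f.2.1 _ _ (by simp [h])
  · intro j j' h
    refine Fin.cases (by simp) (fun j => ?_) j h
    · clear h
      intro h
      revert h
      refine Fin.cases (by simp) (fun j' => ?_) j'
      intro h
      simpa using g.2 j j' (by simpa using h)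
  · simp
  · rintro ⟨f, hf, h0⟩
    ext j
    refine Fin.cases (by simpa using h0) (fun j => by simp) j
  · rintro ⟨g, hg⟩
    ext j
    simp

lemma card_last (b : ℕ) :
    Nat.card {f : Fin (b+1) → Prop // IndP f ∧ ¬ f (Fin.last b)} = F b := by
  rw [F_eq]
  refine Nat.card_congr ⟨fun f => ⟨fun j => f.1 j.castSucc, ?_⟩,
    fun g => ⟨Fin.snoc (α := fun _ => Prop) g.1 False, ?_, ?_⟩, ?_, ?_⟩
  · intro j j' h
    exact f.2.1 _ _ (by simp [h])
  · intro j j' h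
    induction j' using Fin.lastCases with
    | last => simp
    | cast j' =>
      induction j using Fin.lastCases with
      | last => simp
      | cast j => simpa using g.2 j j' (by simpa using h)
  · simp
  · rintro ⟨f, hf, h0⟩
    ext j
    induction j using Fin.lastCases with
    | last => simpa using h0
    | cast j => simp
  · rintro ⟨g, hg⟩
    ext j
    simp

lemma card_last' (b : ℕ) :
    Nat.card {f : Fin (b+2) → Prop // IndP f ∧ f (Fin.last (b+1))} = F b := by
  rw [← card_last]
  refine Nat.card_congr ⟨fun f => ⟨fun j => f.1 j.castSucc, ?_, ?_⟩,
    fun g => ⟨Fin.snoc (α := fun _ => Prop) g.1 True, ?_, ?_⟩, ?_, ?_⟩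
  · intro j j' h
    exact f.2.1 _ _ (by simp [h])
  · intro h
    exact f.2.1 _ (Fin.last _) (by simp) h f.2.2
  · intro j j' h
    induction j' using Fin.lastCases with
    | last =>
      induction j using Fin.lastCases with
      | last => simp at h
      | cast j =>
        have : j = Fin.last b := by ext; simpa using h.symm
        subst this
        intro h1
        exact absurd (by simpa only [Fin.snoc_castSucc] using h1) g.2.2
    | cast j' =>
      induction j using Fin.lastCases with
      | last => exfalso; have := j'.2; simp at h; omega
      | cast j => simpa only [Fin.snoc_castSucc] using g.2.1 j j' (by simpa using h)
  · simp
  · rintro ⟨f, hf, h0⟩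
    ext j
    induction j using Fin.lastCases with
    | last => simpa using h0
    | cast j => simp
  · rintro ⟨g, hg⟩
    ext j
    simp

lemma F_rec (b : ℕ) : F (b+2) = F (b+1) + F b := by
  rw [F_eq (b+2), card_split _ (fun f => f (Fin.last (b+1))), card_last, card_last']

lemma F_pos (b : ℕ) : 0 < F b := by
  rw [F_eq]
  have : Nonempty {f : Fin b → Prop // IndP f} := ⟨⟨fun _ => False, fun _ _ _ h => h.elim⟩⟩
  exact Nat.card_pos

lemma card_pi_sub {ι X : Type*} [Fintype ι] (p : ι → X → Prop) :
    Nat.card {f : ι → X // ∀ i, p i (f i)} = ∏ i, Nat.card {x // p i x} := by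
  rw [← Nat.card_pi]
  exact Nat.card_congr Equiv.subtypePiEquivPi

/-- Functions on an optional product, curried, with prescribed root value. -/
lemma card_opt {A B : Type*} (c : Prop) (p : (Option (A × B) → Prop) → Prop)
    (q : (A → B → Prop) → Prop)
    (h : ∀ f : Option (A × B) → Prop, (f none ↔ c) →
      (p f ↔ q (fun i j => f (some (i, j))))) :
    Nat.card {f // p f ∧ (f none ↔ c)} = Nat.card {g // q g} := by
  refine Nat.card_congr ⟨fun f => ⟨fun i j => f.1 (some (i, j)), (h _ f.2.2).1 f.2.1⟩,
    fun g => ⟨fun o => o.elim c (fun x => g.1 x.1 x.2), ?_, Iff.rfl⟩, ?_, ?_⟩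
  · rw [h _ Iff.rfl]
    exact g.2
  · rintro ⟨f, hf, h0⟩
    ext o
    cases o with
    | none => exact h0.symm
    | some x => rfl
  · rintro ⟨g, hg⟩
    rfl

lemma ind_claw {k b : ℕ} (g : Option (Fin k × Fin (b+1)) → Prop) :
    IndG (kaClaw k (b+1)) g ↔
      ∀ i, IndP (fun j => g (some (i, j))) ∧ (g none → ¬ g (some (i, 0))) := by
  constructor
  · intro h i
    refine ⟨fun j j' e h1 h2 => h _ _ h1 h2 ?_, fun h1 h2 => h _ _ h1 h2 ?_⟩
    · rw [kaClaw, SimpleGraph.fromRel_adj]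
      refine ⟨?_, Or.inl (Or.inr ⟨i, j, j', rfl, rfl, e⟩)⟩
      intro h
      have : j = j' := by simpa using h
      subst this
      omega
    · rw [kaClaw, SimpleGraph.fromRel_adj]
      exact ⟨by simp, Or.inl (Or.inl ⟨i, 0, rfl, rfl, rfl⟩)⟩
  · intro h
    have key : ∀ x y, g x → g y →
        ¬ ((∃ i : Fin k, ∃ j : Fin (b+1), x = none ∧ y = some (i, j) ∧ (j : ℕ) = 0) ∨
        (∃ (i : Fin k) (j j' : Fin (b+1)),
          x = some (i, j) ∧ y = some (i, j') ∧ (j' : ℕ) = (j : ℕ) + 1)) := by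
      rintro x y hx hy (⟨i, j, rfl, rfl, e⟩ | ⟨i, j, j', rfl, rfl, e⟩)
      · have : j = 0 := by ext; simpa using e
        subst this
        exact (h i).2 hx hy
      · exact (h i).1 j j' e hx hy
    intro x y hx hy hadj
    rw [kaClaw, SimpleGraph.fromRel_adj] at hadj
    rcases hadj.2 with h1 | h1
    · exact key x y hx hy h1
    · exact key y x hy hx h1

lemma ind_super {n k a : ℕ} (f : Option (Fin n × Option (Fin k × Fin a)) → Prop) :
    IndG (superClaw n k a) f ↔
      ∀ m, IndG (kaClaw k a) (fun u => f (some (m, u))) ∧ (f none → ¬ f (some (m, none))) := by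
  constructor
  · intro h m
    refine ⟨fun u w h1 h2 e => h _ _ h1 h2 ?_, fun h1 h2 => h _ _ h1 h2 ?_⟩
    · rw [superClaw, SimpleGraph.fromRel_adj]
      refine ⟨?_, Or.inl (Or.inr ⟨m, u, w, rfl, rfl, e⟩)⟩
      intro h
      have : u = w := by simpa using h
      exact e.ne this
    · rw [superClaw, SimpleGraph.fromRel_adj]
      exact ⟨by simp, Or.inl (Or.inl ⟨m, rfl, rfl⟩)⟩
  · intro h
    have key : ∀ x y, f x → f y →
        ¬ ((∃ m : Fin n, x = none ∧ y = some (m, none)) ∨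
    (∃ (m : Fin n) (u w : Option (Fin k × Fin a)),
      x = some (m, u) ∧ y = some (m, w) ∧ (kaClaw k a).Adj u w)) := by
      rintro x y hx hy (⟨m, rfl, rfl⟩ | ⟨m, u, w, rfl, rfl, e⟩)
      · exact (h m).2 hx hy
      · exact (h m).1 u w hx hy e
    intro x y hx hy hadj
    rw [superClaw, SimpleGraph.fromRel_adj] at hadj
    rcases hadj.2 with h1 | h1
    · exact key x y hx hy h1
    · exact key y x hy hx h1

/-- A claw, root out. -/
lemma claw_out (k b : ℕ) :
    Nat.card {g // IndG (kaClaw k (b+1)) g ∧ (g none ↔ False)} = F (b+1) ^ k := by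
  rw [card_opt False _ (fun g => ∀ i, IndP (g i)), card_pi_sub (fun _ f => IndP f)]
  · simp [F_eq]
  · intro f h0
    rw [ind_claw]
    simp [h0]

lemma claw_in (k b : ℕ) :
    Nat.card {g // IndG (kaClaw k (b+1)) g ∧ (g none ↔ True)} = F b ^ k := by
  rw [card_opt True _ (fun g => ∀ i, IndP (g i) ∧ ¬ g i 0),
    card_pi_sub (fun _ f => IndP f ∧ ¬ f 0)]
  · simp [-Nat.card_eq_fintype_card, card_first]
  · intro f h0
    rw [ind_claw]
    simp [h0]

lemma claw_out_leaf (k b : ℕ) :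
    Nat.card {g // (IndG (kaClaw (k+1) (b+2)) g ∧ g (some (0, Fin.last (b+1)))) ∧
      (g none ↔ False)} = F b * F (b+2) ^ k := by
  rw [card_opt False _ (fun g => ∀ i, IndP (g i) ∧ (i = 0 → g i (Fin.last (b+1)))),
    card_pi_sub (fun i f => IndP f ∧ (i = 0 → f (Fin.last (b+1)))), Fin.prod_univ_succ]
  · simp [-Nat.card_eq_fintype_card, card_last', F_eq (b+2)]
  · intro f h0
    rw [ind_claw]
    simp [h0, forall_and]

lemma claw_in_leaf (b : ℕ) : ∃ C : ℕ, ∀ k : ℕ,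
    Nat.card {g // (IndG (kaClaw (k+1) (b+2)) g ∧ g (some (0, Fin.last (b+1)))) ∧
      (g none ↔ True)} = C * F (b+1) ^ k := by
  refine ⟨Nat.card {f : Fin (b+2) → Prop // (IndP f ∧ ¬ f 0) ∧ f (Fin.last (b+1))}, fun k => ?_⟩
  rw [card_opt True _ (fun g => ∀ i, (IndP (g i) ∧ ¬ g i 0) ∧ (i = 0 → g i (Fin.last (b+1)))),
    card_pi_sub (fun i f => (IndP f ∧ ¬ f 0) ∧ (i = 0 → f (Fin.last (b+1)))),
    Fin.prod_univ_succ]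
  · simp [-Nat.card_eq_fintype_card, card_first]
  · intro f h0
    rw [ind_claw]
    simp [h0, forall_and]

lemma root_count (n k b : ℕ) :
    countContaining (superClaw n k (b+1)) none = (F (b+1) ^ k) ^ n := by
  rw [count_eq]
  have : ∀ f : Option (Fin n × Option (Fin k × Fin (b+1))) → Prop, f none ↔ (f none ↔ True) := by
    simp
  rw [Nat.card_congr (Equiv.subtypeEquivRight fun f => and_congr_right' (this f)),
    card_opt True _ (fun g => ∀ m, IndG (kaClaw k (b+1)) (g m) ∧ (g m none ↔ False)),
    card_pi_sub (fun _ g => IndG (kaClaw k (b+1)) g ∧ (g none ↔ False))]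
  · simp only [claw_out]
    simp
  · intro f h0
    rw [ind_super]
    simp [h0]

lemma iff_split {X : Type*} [Finite X] (p q : X → Prop) :
    Nat.card {x // p x} =
      Nat.card {x // p x ∧ (q x ↔ False)} + Nat.card {x // p x ∧ (q x ↔ True)} := by
  rw [card_split p q]
  simp

lemma leaf_count (b : ℕ) : ∃ C : ℕ, ∀ n k : ℕ,
    countContaining (superClaw (n+1) (k+1) (b+2)) (some (0, some (0, Fin.last (b+1)))) =
      (F b * F (b+2) ^ k + C * F (b+1) ^ k) * (F (b+2) ^ (k+1) + F (b+1) ^ (k+1)) ^ n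
      + (F b * F (b+2) ^ k) * (F (b+2) ^ (k+1)) ^ n := by
  obtain ⟨C, hC⟩ := claw_in_leaf b
  refine ⟨C, fun n k => ?_⟩
  rw [count_eq, iff_split _ (fun f => f none)]
  congr 1
  · rw [card_opt False _ (fun g => ∀ m, IndG (kaClaw (k+1) (b+2)) (g m) ∧
        (m = 0 → g m (some (0, Fin.last (b+1))))),
      card_pi_sub (fun m g => IndG (kaClaw (k+1) (b+2)) g ∧
        (m = 0 → g (some (0, Fin.last (b+1))))), Fin.prod_univ_succ]
    · congr 1
      · rw [← hC, ← claw_out_leaf, ← iff_split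
          (fun g => IndG (kaClaw (k+1) (b+2)) g ∧ g (some (0, Fin.last (b+1))))
          (fun g => g none)]
        simp
      · rw [← claw_in (k+1) (b+1), ← claw_out (k+1) (b+1), ← iff_split
          (fun g => IndG (kaClaw (k+1) (b+2)) g) (fun g => g none)]
        simp
    · intro f h0
      rw [ind_super]
      simp [h0, forall_and]
  · rw [card_opt True _ (fun g => ∀ m, (IndG (kaClaw (k+1) (b+2)) (g m) ∧
        (m = 0 → g m (some (0, Fin.last (b+1))))) ∧ (g m none ↔ False)),
      card_pi_sub (fun m g => (IndG (kaClaw (k+1) (b+2)) g ∧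
        (m = 0 → g (some (0, Fin.last (b+1))))) ∧ (g none ↔ False)), Fin.prod_univ_succ]
    · congr 1
      · rw [← claw_out_leaf]
        simp
      · rw [← claw_out]
        simp
    · intro f h0
      rw [ind_super]
      simp only [h0, forall_and]
      simp
      tauto

lemma limit_aux (n : ℕ) (P Q L C : ℝ) (hP : 0 < P) (hQ : 0 < Q) (hL : 0 < L) (hC : 0 ≤ C)
    (h : Q < P) :
    Filter.Tendsto (fun k : ℕ => (P ^ (k+1)) ^ (n+1) /
      ((L * P ^ k + C * Q ^ k) * (P ^ (k+1) + Q ^ (k+1)) ^ n + (L * P ^ k) * (P ^ (k+1)) ^ n))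
      Filter.atTop (nhds (P / (2 * L))) := by
  have hr : Filter.Tendsto (fun k : ℕ => (Q / P) ^ k) Filter.atTop (nhds 0) :=
    tendsto_pow_atTop_nhds_zero_of_lt_one (by positivity) ((div_lt_one hP).2 h)
  have hd : Filter.Tendsto (fun k : ℕ => P / ((L + C * (Q / P) ^ k) *
      (1 + (Q / P) ^ k * (Q / P)) ^ n + L)) Filter.atTop
      (nhds (P / ((L + C * 0) * (1 + 0 * (Q / P)) ^ n + L))) := by
    refine Filter.Tendsto.div tendsto_const_nhds ?_ ?_
    · exact (((hr.const_mul C).const_add L).mul (((hr.mul_const _).const_add 1).pow n)).add_const L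
    · simp; positivity
  have e : P / ((L + C * 0) * (1 + 0 * (Q / P)) ^ n + L) = P / (2 * L) := by
    simp; ring
  rw [e] at hd
  refine hd.congr fun k => ?_
  have e1 : P ^ (k+1) + Q ^ (k+1) = P ^ (k+1) * (1 + (Q / P) ^ k * (Q / P)) := by
    rw [← pow_succ, div_pow]; field_simp
  have e2 : L * P ^ k + C * Q ^ k = P ^ k * (L + C * (Q / P) ^ k) := by
    rw [div_pow]; field_simp
  rw [e1, e2, mul_pow]
  set r := (Q / P) ^ k
  have hr0 : 0 ≤ r := by positivity
  have hs : 0 ≤ Q / P := by positivity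
  set s := Q / P
  have hD : 0 < (L + C * r) * (1 + r * s) ^ n + L := by positivity
  rw [show P ^ k * (L + C * r) * ((P ^ (k+1)) ^ n * (1 + r * s) ^ n) + L * P ^ k * (P ^ (k+1)) ^ n
    = (P ^ k * (P ^ (k+1)) ^ n) * ((L + C * r) * (1 + r * s) ^ n + L) by ring,
    show (P ^ (k+1)) ^ (n+1) = (P ^ k * (P ^ (k+1)) ^ n) * P by ring,
    mul_div_mul_left _ _ (by positivity)]

/-- For fixed `n ≥ 2` and `a ≥ 2`, the ratio of the number of
independent sets of `T^{n,k,a}` containing the root to the number containing a fixed leaf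
tends to `(F(a−1) + F(a−2)) / (2·F(a−2))` as `k → ∞`. -/
theorem superClaw_root_leaf_ratio (n a : ℕ) (hn : 2 ≤ n) (ha : 2 ≤ a) :
    Filter.Tendsto
      (fun k : ℕ =>
        (countContaining (superClaw n (k + 1) a)
            (none : Option (Fin n × Option (Fin (k + 1) × Fin a))) : ℝ) /
          (countContaining (superClaw n (k + 1) a)
            (some (⟨0, by omega⟩, some (⟨0, by omega⟩, ⟨a - 1, by omega⟩))) : ℝ))
      Filter.atTop
      (nhds (((F (a - 1) : ℝ) + (F (a - 2) : ℝ)) / (2 * (F (a - 2) : ℝ)))) := by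
  obtain ⟨n, rfl⟩ : ∃ n', n = n' + 1 := ⟨n - 1, by omega⟩
  obtain ⟨b, rfl⟩ : ∃ b, a = b + 2 := ⟨a - 2, by omega⟩
  obtain ⟨C, hC⟩ := leaf_count b
  have h1 : 0 < F (b+1) := F_pos _
  have h0 : 0 < F b := F_pos _
  have h2 := F_rec b
  have key := limit_aux n (F (b+2)) (F (b+1)) (F b) C (by exact_mod_cast F_pos _)
    (by exact_mod_cast h1) (by exact_mod_cast h0) (by positivity) (by exact_mod_cast (by omega))
  have e : ((F (b + 2 - 1) : ℝ) + (F (b + 2 - 2) : ℝ)) / (2 * (F (b + 2 - 2) : ℝ))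
      = (F (b+2) : ℝ) / (2 * (F b : ℝ)) := by
    rw [h2]; simp
  rw [e]
  refine key.congr fun k => ?_
  have hk := hC n k
  have hroot := root_count (n+1) (k+1) (b+1)
  have hk' : countContaining (superClaw (n+1) (k+1) (b+2))
      (some (⟨0, by omega⟩, some (⟨0, by omega⟩, ⟨b + 2 - 1, by omega⟩))) = _ := hk
  rw [hk', hroot]
  push_cast
  rfl
end
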